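/- Let q ≥ 3 be an integer and let β(n) = β_s(q) − ξ(n) where ξ(n) ≥ 0 satisfies 0 ≤ liminf_{n→∞} n^{2/3} ξ(n) ≤ limsup_{n→∞} n^{2/3} ξ(n) < ∞. Then for every ε ∈ (0,1) there exist constants c_ε, C_ε > 0 such that for all sufficiently large n, c_ε n^{4/3} ≤ t_mix(ε)(n) ≤ C_ε n^{4/3}; moreover the family of chains does not exhibit cutoff, i.e., there exist 0 < δ < ε < 1 such that limsup_{n→∞} t_mix(δ)(n)/t_mix(ε)(n) > 1. -/

import Mathlib

open Finset Filter

/-- The (unnormalized) Curie–Weiss Potts weight of a configuration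
`σ : Fin n → Fin q` at inverse temperature `β`:
`exp((β/n) * Σ_{u,v} 1[σ u = σ v])`. -/
noncomputable def pottsWeight (q n : ℕ) (β : ℝ) (σ : Fin n → Fin q) : ℝ :=
  Real.exp ((β / (n : ℝ)) * ∑ u : Fin n, ∑ v : Fin n, if σ u = σ v then (1 : ℝ) else 0)

/-- The Curie–Weiss Potts probability measure `μ_n` on configurations. -/
noncomputable def pottsMeasure (q n : ℕ) (β : ℝ) (σ : Fin n → Fin q) : ℝ :=
  pottsWeight q n β σ / ∑ τ : Fin n → Fin q, pottsWeight q n β τ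

/-- The transition matrix `P_n` of the Glauber dynamics: pick a uniform vertex `u`
and resample its color according to the conditional Potts distribution given the
colors of all other vertices. -/
noncomputable def glauberKernel (q n : ℕ) (β : ℝ) :
    Matrix (Fin n → Fin q) (Fin n → Fin q) ℝ :=
  fun σ τ =>
    (1 / (n : ℝ)) * ∑ u : Fin n,
      if ∀ v : Fin n, v ≠ u → τ v = σ v then
        pottsMeasure q n β τ / ∑ k : Fin q, pottsMeasure q n β (Function.update σ u k)
      else 0

/-- Total-variation distance between two (probability) functions on a finite set:
`max_{A ⊆ S} |ν(A) − ν'(A)|`. -/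
noncomputable def tvDist {S : Type*} [Fintype S] (ν ν' : S → ℝ) : ℝ :=
  ⨆ A : Finset S, |∑ x ∈ A, ν x - ∑ x ∈ A, ν' x|

/-- Worst-case total-variation distance to stationarity after `t` steps:
`d_t(n) = max_{σ₀} ‖P_n^t(σ₀,·) − μ_n‖_TV`. -/
noncomputable def glauberDist (q n : ℕ) (β : ℝ) (t : ℕ) : ℝ :=
  ⨆ σ₀ : Fin n → Fin q,
    tvDist (fun τ => (glauberKernel q n β ^ t) σ₀ τ) (pottsMeasure q n β)

/-- The `ε`-mixing time `t_mix(ε)(n) = inf {t : d_t(n) ≤ ε}`. -/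
noncomputable def mixingTime (q n : ℕ) (β : ℝ) (ε : ℝ) : ℕ :=
  sInf {t : ℕ | glauberDist q n β t ≤ ε}

/-- The drift function `D_β(x) = −x + (1 + (q−1) e^{2β(1−qx)/(q−1)})⁻¹`. -/
noncomputable def Dfun (q : ℕ) (β x : ℝ) : ℝ :=
  -x + (1 + ((q : ℝ) - 1) * Real.exp (2 * β * (1 - (q : ℝ) * x) / ((q : ℝ) - 1)))⁻¹

/-- The dynamical (spinodal) critical inverse temperature
`β_s(q) = sup {β ≥ 0 : D_β(x) ≠ 0 for all x ∈ (1/q,1)}`. -/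
noncomputable def betaS (q : ℕ) : ℝ :=
  sSup {β : ℝ | 0 ≤ β ∧ ∀ x ∈ Set.Ioo (1 / (q : ℝ)) 1, Dfun q β x ≠ 0}

/-- The constant `α₁(β,q) = 1/(2(1 − 2β/q))`. -/
noncomputable def alpha1 (β : ℝ) (q : ℕ) : ℝ := 1 / (2 * (1 - 2 * β / (q : ℝ)))

/-- The static critical inverse temperature `β_c(q) = (q−1)log(q−1)/(q−2)`
for `q ≥ 3`, with `β_c(2) = 1`. -/
noncomputable def betaC (q : ℕ) : ℝ :=
  if q = 2 then 1 else ((q : ℝ) - 1) * Real.log ((q : ℝ) - 1) / ((q : ℝ) - 2)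



/-- number of vertices of color `k` -/
noncomputable def cnt {q n : ℕ} (σ : Fin n → Fin q) (k : Fin q) : ℝ :=
  ∑ v, if σ v = k then (1 : ℝ) else 0

/-- fraction of vertices of color `k` -/
noncomputable def frac {q n : ℕ} (σ : Fin n → Fin q) (k : Fin q) : ℝ := cnt σ k / n

/-- indicator -/
noncomputable def ind {q : ℕ} (i j : Fin q) : ℝ := if i = j then 1 else 0

/-- softmax -/
noncomputable def smax {q : ℕ} (a : Fin q → ℝ) (k : Fin q) : ℝ :=
  Real.exp (a k) / ∑ j, Real.exp (a j)

/-- resampling probabilities at vertex `u` -/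
noncomputable def gp {q n : ℕ} (β : ℝ) (σ : Fin n → Fin q) (u : Fin n) (k : Fin q) : ℝ :=
  smax (fun j => 2 * β / n * (cnt σ j - ind (σ u) j)) k

/-- one-step expectation -/
noncomputable def EE {q n : ℕ} (β : ℝ) (σ : Fin n → Fin q) (G : Fin n → Fin q → ℝ) : ℝ :=
  (1 / (n : ℝ)) * ∑ u, ∑ k, gp β σ u k * G u k

/-- one-step Markov operator -/
noncomputable def TT {q n : ℕ} (β : ℝ) (f : (Fin n → Fin q) → ℝ) (σ : Fin n → Fin q) : ℝ :=
  EE β σ (fun u k => f (Function.update σ u k))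

lemma ind_self {q : ℕ} (i : Fin q) : ind i i = 1 := by simp [ind]
lemma ind_nonneg {q : ℕ} (i j : Fin q) : 0 ≤ ind i j := by unfold ind; split_ifs <;> norm_num
lemma ind_le_one {q : ℕ} (i j : Fin q) : ind i j ≤ 1 := by unfold ind; split_ifs <;> norm_num
lemma ind_comm {q : ℕ} (i j : Fin q) : ind i j = ind j i := by simp [ind, eq_comm]
lemma sum_ind {q : ℕ} (i : Fin q) : ∑ j, ind i j = 1 := by simp [ind]
lemma sum_ind_mul {q : ℕ} (i : Fin q) (f : Fin q → ℝ) : ∑ j, ind i j * f j = f i := by simp [ind]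

lemma cnt_update {q n : ℕ} (σ : Fin n → Fin q) (u : Fin n) (k j : Fin q) :
    cnt (Function.update σ u k) j = cnt σ j - ind (σ u) j + ind k j := by
  unfold cnt ind
  rw [← Finset.add_sum_erase _ _ (Finset.mem_univ u), ← Finset.add_sum_erase (a := u) (s := Finset.univ) (fun v => if σ v = j then (1:ℝ) else 0) (Finset.mem_univ u)]
  have : ∑ x ∈ Finset.univ.erase u, (if Function.update σ u k x = j then (1:ℝ) else 0)
      = ∑ x ∈ Finset.univ.erase u, (if σ x = j then (1:ℝ) else 0) := by
    apply Finset.sum_congr rfl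
    intro x hx
    rw [Function.update_of_ne (Finset.ne_of_mem_erase hx)]
  rw [this]
  simp
  ring

lemma sum_pairs {q n : ℕ} (σ : Fin n → Fin q) :
    (∑ u : Fin n, ∑ v : Fin n, if σ u = σ v then (1 : ℝ) else 0) = ∑ k, cnt σ k ^ 2 := by
  have h1 : ∀ u : Fin n, (∑ v : Fin n, if σ u = σ v then (1 : ℝ) else 0) = ∑ k, (if σ u = k then (1:ℝ) else 0) * cnt σ k := by
    intro u
    simp [cnt, eq_comm]
  simp_rw [h1]
  rw [Finset.sum_comm]
  apply Finset.sum_congr rfl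
  intro k _
  rw [← Finset.sum_mul, sq]
  rfl

lemma cnt_nonneg {q n : ℕ} (σ : Fin n → Fin q) (k : Fin q) : 0 ≤ cnt σ k := by
  unfold cnt; apply Finset.sum_nonneg; intros; split_ifs <;> norm_num

lemma sum_cnt {q n : ℕ} (σ : Fin n → Fin q) : ∑ k, cnt σ k = n := by
  unfold cnt; rw [Finset.sum_comm]; simp

lemma cnt_le {q n : ℕ} (σ : Fin n → Fin q) (k : Fin q) : cnt σ k ≤ n := by
  rw [← sum_cnt σ]
  exact Finset.single_le_sum (f := cnt σ) (fun i _ => cnt_nonneg σ i) (Finset.mem_univ k)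

lemma weight_update {q n : ℕ} (β : ℝ) (σ : Fin n → Fin q) (u : Fin n) (k : Fin q) :
    pottsWeight q n β (Function.update σ u k) =
      Real.exp (β / n * (∑ j, (cnt σ j - ind (σ u) j) ^ 2 + 1)) *
        Real.exp (2 * β / n * (cnt σ k - ind (σ u) k)) := by
  unfold pottsWeight
  rw [sum_pairs, ← Real.exp_add]
  congr 1
  have : ∑ j, cnt (Function.update σ u k) j ^ 2 =
      ∑ j, (cnt σ j - ind (σ u) j) ^ 2 + ∑ j, ind k j * (2 * (cnt σ j - ind (σ u) j)) + ∑ j, ind k j := by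
    rw [← Finset.sum_add_distrib, ← Finset.sum_add_distrib]
    apply Finset.sum_congr rfl
    intro j _
    rw [cnt_update]
    have : ind k j ^ 2 = ind k j := by unfold ind; split_ifs <;> norm_num
    linear_combination this
  rw [this, sum_ind_mul, sum_ind]
  ring

lemma weight_pos {q n : ℕ} (β : ℝ) (σ : Fin n → Fin q) : 0 < pottsWeight q n β σ := Real.exp_pos _

lemma Z_pos {q n : ℕ} (β : ℝ) (σ : Fin n → Fin q) : 0 < ∑ τ : Fin n → Fin q, pottsWeight q n β τ :=
  Finset.sum_pos (fun τ _ => weight_pos β τ) ⟨σ, Finset.mem_univ _⟩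

lemma mu_pos {q n : ℕ} (β : ℝ) (σ : Fin n → Fin q) : 0 < pottsMeasure q n β σ :=
  div_pos (weight_pos β σ) (Z_pos β σ)

lemma mu_sum {q n : ℕ} (β : ℝ) (σ : Fin n → Fin q) : ∑ τ, pottsMeasure q n β τ = 1 := by
  unfold pottsMeasure
  rw [← Finset.sum_div, div_self (Z_pos β σ).ne']

lemma gp_eq {q n : ℕ} (β : ℝ) (σ : Fin n → Fin q) (u : Fin n) (k : Fin q) :
    pottsMeasure q n β (Function.update σ u k) / ∑ j : Fin q, pottsMeasure q n β (Function.update σ u j)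
      = gp β σ u k := by
  unfold pottsMeasure gp smax
  rw [← Finset.sum_div, div_div_div_cancel_right₀ (Z_pos β σ).ne']
  simp_rw [weight_update]
  rw [← Finset.mul_sum, mul_div_mul_left _ _ (Real.exp_pos _).ne']

lemma smax_sum {q : ℕ} (a : Fin q → ℝ) (k0 : Fin q) : ∑ k, smax a k = 1 := by
  unfold smax
  rw [← Finset.sum_div, div_self]
  exact (Finset.sum_pos (fun τ _ => Real.exp_pos _) ⟨k0, Finset.mem_univ _⟩).ne'

lemma smax_den_pos {q : ℕ} (a : Fin q → ℝ) (k0 : Fin q) : 0 < ∑ j, Real.exp (a j) :=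
  Finset.sum_pos (fun τ _ => Real.exp_pos _) ⟨k0, Finset.mem_univ _⟩

lemma smax_pos {q : ℕ} (a : Fin q → ℝ) (k : Fin q) : 0 < smax a k :=
  div_pos (Real.exp_pos _) (smax_den_pos a k)

lemma smax_le_one {q : ℕ} (a : Fin q → ℝ) (k : Fin q) : smax a k ≤ 1 := by
  rw [← smax_sum a k]
  exact Finset.single_le_sum (f := smax a) (fun i _ => (smax_pos a i).le) (Finset.mem_univ k)

lemma gp_pos {q n : ℕ} (β : ℝ) (σ : Fin n → Fin q) (u : Fin n) (k : Fin q) : 0 < gp β σ u k := smax_pos _ _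
lemma gp_le_one {q n : ℕ} (β : ℝ) (σ : Fin n → Fin q) (u : Fin n) (k : Fin q) : gp β σ u k ≤ 1 := smax_le_one _ _
lemma gp_sum {q n : ℕ} (β : ℝ) (σ : Fin n → Fin q) (u : Fin n) : ∑ k, gp β σ u k = 1 := smax_sum _ (σ u)

lemma kernel_apply {q n : ℕ} (β : ℝ) (f : (Fin n → Fin q) → ℝ) (σ : Fin n → Fin q) :
    ∑ τ, glauberKernel q n β σ τ * f τ = TT β f σ := by
  unfold glauberKernel TT EE
  simp_rw [mul_assoc, Finset.sum_mul]
  rw [← Finset.mul_sum, Finset.sum_comm]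
  congr 1
  apply Finset.sum_congr rfl
  intro u _
  simp_rw [← gp_eq, ite_mul, zero_mul]
  rw [← Finset.sum_filter]
  apply Finset.sum_nbij' (fun τ => τ u) (fun k => Function.update σ u k)
  · intros; simp
  · intro k _
    simp only [Finset.mem_filter, Finset.mem_univ, true_and]
    intro v hv
    rw [Function.update_of_ne hv]
  · intro τ hτ
    simp only [Finset.mem_filter, Finset.mem_univ, true_and] at hτ
    ext v
    by_cases h : v = u
    · subst h; simp
    · rw [Function.update_of_ne h, hτ v h]
  · intro k _; simp
  · intro τ hτ
    simp only [Finset.mem_filter, Finset.mem_univ, true_and] at hτ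
    have : Function.update σ u (τ u) = τ := by
      ext v
      by_cases h : v = u
      · subst h; simp
      · rw [Function.update_of_ne h, hτ v h]
    rw [this]

lemma kernel_pow_apply {q n : ℕ} (β : ℝ) (t : ℕ) : ∀ (f : (Fin n → Fin q) → ℝ) (σ : Fin n → Fin q),
    ∑ τ, (glauberKernel q n β ^ t) σ τ * f τ = ((TT β)^[t] f) σ := by
  induction t with
  | zero => intro f σ; simp [Matrix.one_apply]
  | succ t ih =>
    intro f σ
    rw [Function.iterate_succ_apply, ← ih]
    simp_rw [← kernel_apply]
    rw [pow_succ]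
    simp_rw [Matrix.mul_apply, Finset.sum_mul, Finset.mul_sum]
    rw [Finset.sum_comm]
    simp_rw [mul_assoc]

lemma EE_mono {q n : ℕ} (β : ℝ) (σ : Fin n → Fin q) {G H : Fin n → Fin q → ℝ}
    (h : ∀ u k, G u k ≤ H u k) : EE β σ G ≤ EE β σ H := by
  unfold EE
  apply mul_le_mul_of_nonneg_left _ (by positivity)
  apply Finset.sum_le_sum; intro u _
  apply Finset.sum_le_sum; intro k _
  exact mul_le_mul_of_nonneg_left (h u k) (gp_pos β σ u k).le

lemma EE_add {q n : ℕ} (β : ℝ) (σ : Fin n → Fin q) (G H : Fin n → Fin q → ℝ) :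
    EE β σ (fun u k => G u k + H u k) = EE β σ G + EE β σ H := by
  unfold EE
  simp_rw [mul_add, Finset.sum_add_distrib]
  ring

lemma EE_smul {q n : ℕ} (β : ℝ) (σ : Fin n → Fin q) (c : ℝ) (G : Fin n → Fin q → ℝ) :
    EE β σ (fun u k => c * G u k) = c * EE β σ G := by
  unfold EE
  have : ∀ u k, gp β σ u k * (c * G u k) = c * (gp β σ u k * G u k) := by intros; ring
  simp_rw [this, ← Finset.mul_sum]
  ring

lemma EE_const {q n : ℕ} (hn : 0 < n) (β : ℝ) (σ : Fin n → Fin q) (c : ℝ) :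
    EE β σ (fun _ _ => c) = c := by
  unfold EE
  simp_rw [← Finset.sum_mul, gp_sum]
  simp
  have : (n:ℝ) ≠ 0 := by positivity
  field_simp

lemma EE_sum {ι : Type*} {q n : ℕ} (β : ℝ) (σ : Fin n → Fin q) (s : Finset ι) (G : ι → Fin n → Fin q → ℝ) :
    EE β σ (fun u k => ∑ i ∈ s, G i u k) = ∑ i ∈ s, EE β σ (G i) := by
  classical
  induction s using Finset.induction_on with
  | empty => simp [EE]
  | insert a s ha ih => simp_rw [Finset.sum_insert ha]; rw [EE_add, ih]

lemma TT_mono {q n : ℕ} (β : ℝ) {f g : (Fin n → Fin q) → ℝ} (h : ∀ σ, f σ ≤ g σ) (σ : Fin n → Fin q) :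
    TT β f σ ≤ TT β g σ := EE_mono β σ (fun _ _ => h _)

lemma TT_add {q n : ℕ} (β : ℝ) (f g : (Fin n → Fin q) → ℝ) (σ : Fin n → Fin q) :
    TT β (fun σ => f σ + g σ) σ = TT β f σ + TT β g σ := EE_add β σ _ _

lemma TT_smul {q n : ℕ} (β : ℝ) (c : ℝ) (f : (Fin n → Fin q) → ℝ) (σ : Fin n → Fin q) :
    TT β (fun σ => c * f σ) σ = c * TT β f σ := EE_smul β σ _ _

lemma TT_const {q n : ℕ} (hn : 0 < n) (β : ℝ) (c : ℝ) (σ : Fin n → Fin q) :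
    TT β (fun _ => c) σ = c := EE_const hn β σ c

lemma TT_sum {ι : Type*} {q n : ℕ} (β : ℝ) (s : Finset ι) (f : ι → (Fin n → Fin q) → ℝ) (σ : Fin n → Fin q) :
    TT β (fun σ => ∑ i ∈ s, f i σ) σ = ∑ i ∈ s, TT β (f i) σ := EE_sum β σ s _

lemma TTi_mono {q n : ℕ} (β : ℝ) (t : ℕ) : ∀ {f g : (Fin n → Fin q) → ℝ}, (∀ σ, f σ ≤ g σ) →
    ∀ σ, (TT β)^[t] f σ ≤ (TT β)^[t] g σ := by
  induction t with
  | zero => intro f g h σ; exact h σ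
  | succ t ih => intro f g h σ; exact ih (fun σ => TT_mono β h σ) σ

lemma TTi_const {q n : ℕ} (hn : 0 < n) (β : ℝ) (c : ℝ) (t : ℕ) (σ : Fin n → Fin q) :
    (TT β)^[t] (fun _ => c) σ = c := by
  induction t with
  | zero => rfl
  | succ t ih =>
    rw [Function.iterate_succ_apply]
    have : TT β (fun _ : Fin n → Fin q => c) = fun _ => c := by funext σ; exact TT_const hn β c σ
    rw [this, ih]

lemma TTi_mem {q n : ℕ} (hn : 0 < n) (β : ℝ) (t : ℕ) {f : (Fin n → Fin q) → ℝ} (h : ∀ σ, 0 ≤ f σ ∧ f σ ≤ 1)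
    (σ : Fin n → Fin q) : 0 ≤ (TT β)^[t] f σ ∧ (TT β)^[t] f σ ≤ 1 := by
  constructor
  · rw [← TTi_const hn β 0 t σ]; exact TTi_mono β t (fun σ => (h σ).1) σ
  · conv_rhs => rw [← TTi_const hn β 1 t σ]
    exact TTi_mono β t (fun σ => (h σ).2) σ

lemma TTi_sum {ι : Type*} {q n : ℕ} (β : ℝ) (s : Finset ι) (t : ℕ) : ∀ (f : ι → (Fin n → Fin q) → ℝ) (σ : Fin n → Fin q),
    (TT β)^[t] (fun σ => ∑ i ∈ s, f i σ) σ = ∑ i ∈ s, (TT β)^[t] (f i) σ := by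
  induction t with
  | zero => intro f σ; rfl
  | succ t ih =>
    intro f σ
    simp_rw [Function.iterate_succ_apply]
    rw [← ih]
    have : TT β (fun σ => ∑ i ∈ s, f i σ) = fun σ => ∑ i ∈ s, TT β (f i) σ := by
      funext τ
      exact TT_sum β s f τ
    rw [this]

lemma detailed_balance {q n : ℕ} (β : ℝ) (σ τ : Fin n → Fin q) :
    pottsMeasure q n β σ * glauberKernel q n β σ τ = pottsMeasure q n β τ * glauberKernel q n β τ σ := by
  unfold glauberKernel
  rw [mul_left_comm, mul_left_comm (pottsMeasure q n β τ)]
  congr 1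
  rw [Finset.mul_sum, Finset.mul_sum]
  apply Finset.sum_congr rfl
  intro u _
  by_cases h : ∀ v : Fin n, v ≠ u → τ v = σ v
  · have h' : ∀ v : Fin n, v ≠ u → σ v = τ v := fun v hv => (h v hv).symm
    rw [if_pos h, if_pos h']
    have : ∀ k, Function.update σ u k = Function.update τ u k := by
      intro k; ext v
      by_cases hv : v = u
      · subst hv; simp
      · rw [Function.update_of_ne hv, Function.update_of_ne hv, h v hv]
    simp_rw [this]
    ring
  · have h' : ¬ ∀ v : Fin n, v ≠ u → σ v = τ v := fun h' => h (fun v hv => (h' v hv).symm)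
    rw [if_neg h, if_neg h']
    simp

lemma mu_TT {q n : ℕ} (hn : 0 < n) (β : ℝ) (f : (Fin n → Fin q) → ℝ) :
    ∑ σ, pottsMeasure q n β σ * TT β f σ = ∑ σ, pottsMeasure q n β σ * f σ := by
  have h0 : ∀ σ, pottsMeasure q n β σ * TT β f σ =
      ∑ τ, pottsMeasure q n β τ * glauberKernel q n β τ σ * f τ := by
    intro σ
    rw [← kernel_apply, Finset.mul_sum]
    apply Finset.sum_congr rfl
    intro τ _
    rw [← mul_assoc, detailed_balance]
  rw [Finset.sum_congr rfl (fun σ _ => h0 σ), Finset.sum_comm]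
  apply Finset.sum_congr rfl
  intro τ _
  have h := kernel_apply β (fun _ => (1:ℝ)) τ
  rw [TT_const hn] at h
  simp only [mul_one] at h
  rw [← Finset.sum_mul, ← Finset.mul_sum, h, mul_one]

lemma mu_TTi {q n : ℕ} (hn : 0 < n) (β : ℝ) (t : ℕ) : ∀ (f : (Fin n → Fin q) → ℝ),
    ∑ σ, pottsMeasure q n β σ * (TT β)^[t] f σ = ∑ σ, pottsMeasure q n β σ * f σ := by
  induction t with
  | zero => intro f; rfl
  | succ t ih =>
    intro f
    simp_rw [Function.iterate_succ_apply]
    rw [ih, mu_TT hn]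

/-- indicator function of a finset -/
noncomputable def chi {S : Type*} (A : Set S) (x : S) : ℝ := by
  classical exact if x ∈ A then 1 else 0

lemma chi_mem {S : Type*} (A : Set S) (x : S) : 0 ≤ chi A x ∧ chi A x ≤ 1 := by
  unfold chi; split_ifs <;> norm_num

lemma sum_mul_chi {S : Type*} [Fintype S] (A : Finset S) (f : S → ℝ) :
    ∑ x, f x * chi (A : Set S) x = ∑ x ∈ A, f x := by
  classical
  unfold chi
  simp [Finset.sum_ite_mem]

lemma tv_nonneg_bdd {S : Type*} [Fintype S] (ν ν' : S → ℝ) :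
    BddAbove (Set.range fun A : Finset S => |∑ x ∈ A, ν x - ∑ x ∈ A, ν' x|) :=
  Set.finite_range _ |>.bddAbove

lemma glauberDist_le {q n : ℕ} (hn : 0 < n) (hq : 0 < q) (β : ℝ) (t : ℕ) (ε : ℝ)
    (h : ∀ g : (Fin n → Fin q) → ℝ, (∀ σ, 0 ≤ g σ ∧ g σ ≤ 1) → ∀ σ τ,
      (TT β)^[t] g σ - (TT β)^[t] g τ ≤ ε) : glauberDist q n β t ≤ ε := by
  have : Nonempty (Fin q) := ⟨⟨0, hq⟩⟩
  unfold glauberDist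
  apply ciSup_le
  intro σ
  unfold tvDist
  apply ciSup_le
  intro A
  rw [← sum_mul_chi A, ← sum_mul_chi A, kernel_pow_apply, ← mu_TTi hn β t]
  set G := (TT β)^[t] (chi (A : Set (Fin n → Fin q))) with hG
  have hh := h (chi (A : Set (Fin n → Fin q))) (fun σ => chi_mem _ σ)
  have e : G σ - ∑ τ, pottsMeasure q n β τ * G τ = ∑ τ, pottsMeasure q n β τ * (G σ - G τ) := by
    simp_rw [mul_sub, Finset.sum_sub_distrib]
    rw [← Finset.sum_mul, mu_sum β σ, one_mul]
  have e2 : ε = ∑ τ, pottsMeasure q n β τ * ε := by rw [← Finset.sum_mul, mu_sum β σ, one_mul]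
  rw [e, abs_le]
  constructor
  · rw [e2, ← Finset.sum_neg_distrib]
    apply Finset.sum_le_sum
    intro τ _
    have := hh τ σ
    rw [← mul_neg]
    exact mul_le_mul_of_nonneg_left (by simp only [hG]; linarith) (mu_pos β τ).le
  · rw [e2]
    apply Finset.sum_le_sum
    intro τ _
    exact mul_le_mul_of_nonneg_left (hh σ τ) (mu_pos β τ).le

lemma le_glauberDist {q n : ℕ} (β : ℝ) (t : ℕ) (A : Set (Fin n → Fin q)) (σ : Fin n → Fin q) :
    (TT β)^[t] (chi A) σ - ∑ τ, pottsMeasure q n β τ * chi A τ ≤ glauberDist q n β t := by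
  classical
  have hA : A = ((A.toFinset : Finset (Fin n → Fin q)) : Set (Fin n → Fin q)) := by simp
  rw [hA, sum_mul_chi, ← kernel_pow_apply, sum_mul_chi]
  refine le_trans (le_abs_self _) ?_
  unfold glauberDist
  refine le_trans ?_ (le_ciSup (Set.finite_range _ |>.bddAbove) σ)
  exact le_ciSup (f := fun B : Finset (Fin n → Fin q) => |∑ x ∈ B, (glauberKernel q n β ^ t) σ x - ∑ x ∈ B, pottsMeasure q n β x|) (tv_nonneg_bdd _ _) A.toFinset


/-- the logistic part of `Dfun` -/
noncomputable def Lf (q : ℕ) (β x : ℝ) : ℝ :=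
  (1 + ((q : ℝ) - 1) * Real.exp (2 * β * (1 - (q : ℝ) * x) / ((q : ℝ) - 1)))⁻¹

lemma Dfun_eq (q : ℕ) (β x : ℝ) : Dfun q β x = -x + Lf q β x := rfl

lemma Lden_pos {q : ℕ} (hq : 3 ≤ q) (β x : ℝ) :
    1 < 1 + ((q : ℝ) - 1) * Real.exp (2 * β * (1 - (q : ℝ) * x) / ((q : ℝ) - 1)) := by
  have hQ : (3:ℝ) ≤ q := by exact_mod_cast hq
  have : 0 < ((q : ℝ) - 1) * Real.exp (2 * β * (1 - (q : ℝ) * x) / ((q : ℝ) - 1)) :=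
    mul_pos (by linarith) (Real.exp_pos _)
  linarith

lemma Lf_pos {q : ℕ} (hq : 3 ≤ q) (β x : ℝ) : 0 < Lf q β x :=
  inv_pos.mpr (by linarith [Lden_pos hq β x])

lemma Lf_lt_one {q : ℕ} (hq : 3 ≤ q) (β x : ℝ) : Lf q β x < 1 :=
  inv_lt_one_of_one_lt₀ (Lden_pos hq β x)

lemma Lf_mono_beta {q : ℕ} (hq : 3 ≤ q) {β β' x : ℝ} (h : β ≤ β') (hx : 1 / (q:ℝ) ≤ x) :
    Lf q β x ≤ Lf q β' x := by
  have hQ : (3:ℝ) ≤ q := by exact_mod_cast hq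
  have hx' : 1 - (q:ℝ) * x ≤ 0 := by
    rw [div_le_iff₀ (by linarith)] at hx; linarith
  unfold Lf
  apply inv_anti₀ (by linarith [Lden_pos hq β' x])
  have h1 : 2 * β' * (1 - (q:ℝ) * x) / ((q:ℝ) - 1) ≤ 2 * β * (1 - (q:ℝ) * x) / ((q:ℝ) - 1) := by
    apply div_le_div_of_nonneg_right _ (by linarith)
    nlinarith
  have h2 := mul_le_mul_of_nonneg_left (Real.exp_le_exp.mpr h1) (by linarith : 0 ≤ (q:ℝ) - 1)
  linarith

lemma Lf_lip_beta {q : ℕ} (hq : 3 ≤ q) {β β' x : ℝ} (h : β ≤ β') (hx : 1 / (q:ℝ) ≤ x) (hx1 : x ≤ 1) :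
    Lf q β' x - Lf q β x ≤ 2 * (β' - β) := by
  have hQ : (3:ℝ) ≤ q := by exact_mod_cast hq
  have hx' : 1 - (q:ℝ) * x ≤ 0 := by
    rw [div_le_iff₀ (by linarith)] at hx; linarith
  have h1 := Lden_pos hq β x
  have h2 := Lden_pos hq β' x
  set d := 2 * (β' - β) with hd
  have key : Lf q β' x * (1 - d) ≤ Lf q β x := by
    have e1 : (1 - d) ≤ Real.exp (-d) := by linarith [Real.add_one_le_exp (-d)]
    have e2 : Real.exp (-d) * Lf q β' x ≤ Lf q β x := by
      unfold Lf
      rw [← div_eq_mul_inv, div_le_iff₀ (by linarith), inv_mul_eq_div, le_div_iff₀ (by linarith)]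
      have e3 : Real.exp (-d) * Real.exp (2 * β * (1 - (q : ℝ) * x) / ((q : ℝ) - 1)) ≤ Real.exp (2 * β' * (1 - (q : ℝ) * x) / ((q : ℝ) - 1)) := by
        rw [← Real.exp_add]
        apply Real.exp_le_exp.mpr
        have e4 : -d + 2 * β * (1 - (q : ℝ) * x) / ((q : ℝ) - 1) = (-d * (q-1) + 2 * β * (1 - (q : ℝ) * x)) / ((q : ℝ) - 1) := by
          have : (q:ℝ) - 1 ≠ 0 := by linarith
          field_simp
        rw [e4]
        apply div_le_div_of_nonneg_right _ (by linarith)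
        rw [hd]
        nlinarith [mul_nonneg (sub_nonneg.mpr h) (by nlinarith : 0 ≤ (q:ℝ) - q * x)]
      have e5 : Real.exp (-d) ≤ 1 := Real.exp_le_one_iff.mpr (by simp [hd]; linarith)
      nlinarith
    have := Lf_pos hq β' x
    nlinarith
  have := Lf_lt_one hq β' x
  have : 0 ≤ d := by simp [hd]; linarith
  nlinarith

lemma D_near {q : ℕ} (hq : 3 ≤ q) {β θ z : ℝ} (hβ : 0 ≤ β) (hθ : 0 ≤ θ) (hθ1 : θ < 1) (h : 2 * β ≤ θ * q)
    (hz : 0 ≤ z) (hz' : z ≤ (1 - θ) / (2 * q)) : Dfun q β (1 / q + z) ≤ -((1 - θ) / 2) * z := by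
  have hQ : (3:ℝ) ≤ q := by exact_mod_cast hq
  rw [Dfun_eq]
  have hz2 : 2 * β * z ≤ θ * (1 - θ) / 2 := by
    rw [le_div_iff₀ (by linarith)] at hz'
    nlinarith
  have hb : Lf q β (1/q+z) ≤ 1 / (q * (1 - 2 * β * z)) := by
    unfold Lf
    rw [← one_div]
    have hpos : 0 < 1 - 2 * β * z := by nlinarith
    apply one_div_le_one_div_of_le (by positivity)
    have : 2 * β * (1 - (q:ℝ) * (1 / q + z)) / ((q:ℝ) - 1) = - (2 * β * q * z) / (q - 1) := by
      have : (q:ℝ) ≠ 0 := by linarith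
      field_simp
      ring
    rw [this]
    have h2 := Real.add_one_le_exp (- (2 * β * q * z) / ((q:ℝ) - 1))
    have h3 : ((q:ℝ) - 1) * (- (2 * β * q * z) / ((q:ℝ) - 1) + 1) = - (2 * β * q * z) + (q - 1) := by
      have : (q:ℝ) - 1 ≠ 0 := by linarith
      field_simp
    have h4 := mul_le_mul_of_nonneg_left h2 (by linarith : 0 ≤ (q:ℝ) - 1)
    rw [h3] at h4
    linarith
  have hpos : 0 < 1 - 2 * β * z := by nlinarith
  have h5 : 1 / (q * (1 - 2 * β * z)) ≤ 1 / q + ((1 + θ) / 2) * z := by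
    rw [div_le_iff₀ (by positivity)]
    have : (1 / (q:ℝ) + (1 + θ) / 2 * z) * (q * (1 - 2 * β * z)) = (1 + q * (1 + θ) / 2 * z) * (1 - 2 * β * z) := by
      have : (q:ℝ) ≠ 0 := by linarith
      field_simp
    rw [this]
    -- need 2βz ≤ q(1+θ)/2 z (1-2βz)
    have h6 : θ ≤ (1 + θ) / 2 * (1 - 2 * β * z) := by
      have hw0 : 0 ≤ 2 * β * z := by positivity
      have hw1 : 2 * β * z * (1 + θ) ≤ θ * (1 - θ) / 2 * 2 := by
        apply mul_le_mul hz2 (by linarith) (by linarith)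
        have : 0 ≤ θ * (1 - θ) := mul_nonneg hθ (by linarith)
        linarith
      nlinarith [sq_nonneg (1 - θ)]
    have h7 : 2 * β * z ≤ θ * q * z := mul_le_mul_of_nonneg_right h hz
    nlinarith [mul_le_mul_of_nonneg_right h6 (by positivity : 0 ≤ q * z)]
  linarith

lemma Lf_hasDeriv {q : ℕ} (hq : 3 ≤ q) (β x : ℝ) :
    HasDerivAt (Lf q β) (2 * β * q / (q - 1) * (Lf q β x * (1 - Lf q β x))) x := by
  have hQ : (3:ℝ) ≤ q := by exact_mod_cast hq
  have h1 : HasDerivAt (fun x => 2 * β * (1 - (q : ℝ) * x) / ((q : ℝ) - 1)) (2 * β * (-q) / (q - 1)) x := by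
    have h := (((hasDerivAt_id x).const_mul (q:ℝ)).const_sub 1).const_mul (2*β) |>.div_const ((q:ℝ)-1)
    exact h.congr_deriv (by ring)
  have h2 := ((h1.exp.const_mul ((q:ℝ)-1)).const_add 1).inv (by linarith [Lden_pos hq β x])
  refine h2.congr_deriv ?_
  unfold Lf
  have := Lden_pos hq β x
  set E := Real.exp (2 * β * (1 - (q : ℝ) * x) / ((q : ℝ) - 1)) with hE
  have h3 : 1 + ((q:ℝ) - 1) * E ≠ 0 := by linarith
  have h4 : (q:ℝ) - 1 ≠ 0 := by linarith
  field_simp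
  ring

lemma Dfun_hasDeriv {q : ℕ} (hq : 3 ≤ q) (β x : ℝ) :
    HasDerivAt (Dfun q β) (2 * β * q / (q - 1) * (Lf q β x * (1 - Lf q β x)) - 1) x := by
  have h := (hasDerivAt_id x).neg.add (Lf_hasDeriv hq β x)
  have e : Dfun q β = fun y => -y + Lf q β y := rfl
  rw [e]
  exact h.congr_deriv (by ring)

lemma Dfun_deriv {q : ℕ} (hq : 3 ≤ q) (β : ℝ) :
    deriv (Dfun q β) = fun x => (2 * β * q / (q - 1) * (Lf q β x * (1 - Lf q β x)) - 1) := by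
  funext x; exact (Dfun_hasDeriv hq β x).deriv

lemma Dfun_deriv2 {q : ℕ} (hq : 3 ≤ q) (β x : ℝ) :
    HasDerivAt (deriv (Dfun q β)) ((2 * β * q / (q - 1)) ^ 2 * (Lf q β x * (1 - Lf q β x)) * (1 - 2 * Lf q β x)) x := by
  rw [Dfun_deriv hq]
  have h := Lf_hasDeriv hq β x
  have h2 := ((h.mul (h.const_sub 1)).const_mul (2 * β * q / ((q:ℝ) - 1))).sub_const 1
  exact h2.congr_deriv (by ring)

lemma Dfun_cont {q : ℕ} (hq : 3 ≤ q) (β : ℝ) : Continuous (Dfun q β) :=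
  continuous_iff_continuousAt.mpr (fun x => (Dfun_hasDeriv hq β x).continuousAt)

lemma Dfun_one {q : ℕ} (hq : 3 ≤ q) (β : ℝ) : Dfun q β 1 < 0 := by
  rw [Dfun_eq]; linarith [Lf_lt_one hq β 1]

lemma betaC_lt {q : ℕ} (hq : 3 ≤ q) : 2 * betaC q < q := by
  have hQ : (3:ℝ) ≤ q := by exact_mod_cast hq
  unfold betaC
  rw [if_neg (by omega)]
  have hl : 0 < Real.log ((q:ℝ) - 1) := Real.log_pos (by linarith)
  have h := Real.self_lt_sinh_iff.mpr hl
  rw [Real.sinh_eq, Real.exp_neg, Real.exp_log (by linarith)] at h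
  rw [← mul_div_assoc, div_lt_iff₀ (by linarith)]
  have h2 : ((q:ℝ) - 1 - ((q:ℝ) - 1)⁻¹) / 2 * (2 * (q - 1)) = q * (q - 2) := by
    have : (q:ℝ) - 1 ≠ 0 := by linarith
    field_simp
    ring
  nlinarith

lemma betaC_nonneg {q : ℕ} (hq : 3 ≤ q) : 0 ≤ betaC q := by
  have hQ : (3:ℝ) ≤ q := by exact_mod_cast hq
  unfold betaC
  rw [if_neg (by omega)]
  have hl : 0 < Real.log ((q:ℝ) - 1) := Real.log_pos (by linarith)
  apply div_nonneg (mul_nonneg (by linarith) hl.le) (by linarith)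

lemma D_betaC {q : ℕ} (hq : 3 ≤ q) : Dfun q (betaC q) (((q:ℝ) - 1) / q) = 0 := by
  have hQ : (3:ℝ) ≤ q := by exact_mod_cast hq
  unfold Dfun betaC
  rw [if_neg (by omega)]
  have h1 : 2 * (((q : ℝ) - 1) * Real.log ((q : ℝ) - 1) / ((q : ℝ) - 2)) * (1 - (q : ℝ) * (((q:ℝ) - 1) / q)) / ((q : ℝ) - 1)
      = -(Real.log ((q : ℝ) - 1) + Real.log ((q : ℝ) - 1)) := by
    have h2 : (q:ℝ) ≠ 0 := by linarith
    have h3 : (q:ℝ) - 1 ≠ 0 := by linarith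
    have h4 : (q:ℝ) - 2 ≠ 0 := by linarith
    field_simp
    ring
  rw [h1, Real.exp_neg, Real.exp_add, Real.exp_log (by linarith)]
  have h2 : (q:ℝ) ≠ 0 := by linarith
  have h3 : (q:ℝ) - 1 ≠ 0 := by linarith
  have h4 : 1 + ((q:ℝ) - 1) * (((q:ℝ) - 1) * ((q:ℝ) - 1))⁻¹ = q / (q - 1) := by
    field_simp
    ring
  rw [h4, inv_div]
  ring

/-- the defining set of `betaS` -/
def SS (q : ℕ) : Set ℝ := {β : ℝ | 0 ≤ β ∧ ∀ x ∈ Set.Ioo (1 / (q : ℝ)) 1, Dfun q β x ≠ 0}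

lemma SS_zero {q : ℕ} (hq : 3 ≤ q) : (0:ℝ) ∈ SS q := by
  have hQ : (3:ℝ) ≤ q := by exact_mod_cast hq
  refine ⟨le_rfl, fun x hx => ?_⟩
  unfold Dfun
  simp
  have := hx.1
  rw [one_div] at this
  linarith

lemma SS_lt {q : ℕ} (hq : 3 ≤ q) {β : ℝ} (h : β ∈ SS q) : β < betaC q := by
  have hQ : (3:ℝ) ≤ q := by exact_mod_cast hq
  by_contra hc
  push Not at hc
  have hx1 : 1 / (q:ℝ) < ((q:ℝ) - 1) / q := by
    apply div_lt_div_of_pos_right _ (by linarith); linarith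
  have hx2 : ((q:ℝ) - 1) / q < 1 := by rw [div_lt_one (by linarith)]; linarith
  have h0 : 0 ≤ Dfun q β (((q:ℝ) - 1) / q) := by
    rw [← D_betaC hq, Dfun_eq, Dfun_eq]
    linarith [Lf_mono_beta hq hc hx1.le]
  obtain ⟨x, hx, hx0⟩ := intermediate_value_Icc' hx2.le (Dfun_cont hq β).continuousOn
    (show (0:ℝ) ∈ Set.Icc (Dfun q β 1) (Dfun q β (((q:ℝ) - 1) / q)) from ⟨(Dfun_one hq β).le, h0⟩)
  have hxne : x ≠ 1 := by rintro rfl; linarith [Dfun_one hq β]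
  exact h.2 x ⟨lt_of_lt_of_le hx1 hx.1, lt_of_le_of_ne hx.2 hxne⟩ hx0

lemma SS_neg {q : ℕ} (hq : 3 ≤ q) {β : ℝ} (h : β ∈ SS q) {x : ℝ} (hx : 1 / (q:ℝ) < x) (hx1 : x ≤ 1) :
    Dfun q β x < 0 := by
  by_contra hc
  push Not at hc
  obtain ⟨y, hy, hy0⟩ := intermediate_value_Icc' hx1 (Dfun_cont hq β).continuousOn
    (show (0:ℝ) ∈ Set.Icc (Dfun q β 1) (Dfun q β x) from ⟨(Dfun_one hq β).le, hc⟩)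
  have hyne : y ≠ 1 := by rintro rfl; linarith [Dfun_one hq β]
  exact h.2 y ⟨lt_of_lt_of_le hx hy.1, lt_of_le_of_ne hy.2 hyne⟩ hy0

lemma SS_bdd {q : ℕ} (hq : 3 ≤ q) : BddAbove (SS q) := ⟨betaC q, fun _ h => (SS_lt hq h).le⟩

lemma betaS_nonneg {q : ℕ} (hq : 3 ≤ q) : 0 ≤ betaS q := le_csSup (SS_bdd hq) (SS_zero hq)

lemma betaS_le {q : ℕ} (hq : 3 ≤ q) : betaS q ≤ betaC q := csSup_le ⟨0, SS_zero hq⟩ (fun _ h => (SS_lt hq h).le)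

lemma D_betaS_nonpos {q : ℕ} (hq : 3 ≤ q) {x : ℝ} (hx : 1 / (q:ℝ) < x) (hx1 : x ≤ 1) :
    Dfun q (betaS q) x ≤ 0 := by
  by_contra hc
  push Not at hc
  obtain ⟨β, hβ, hlt⟩ := exists_lt_of_lt_csSup (s := SS q) (b := betaS q - Dfun q (betaS q) x / 4) ⟨0, SS_zero hq⟩
    (by change _ < betaS q; linarith)
  have h1 := SS_neg hq hβ hx hx1
  have hle : β ≤ betaS q := le_csSup (SS_bdd hq) hβ
  have h2 := Lf_lip_beta hq hle hx.le hx1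
  rw [Dfun_eq] at h1 hc hlt
  linarith

lemma exists_zero {q : ℕ} (hq : 3 ≤ q) : ∃ a, 1 / (q:ℝ) < a ∧ a < 1 ∧ Dfun q (betaS q) a = 0 := by
  have hQ : (3:ℝ) ≤ q := by exact_mod_cast hq
  by_contra hcon
  push Not at hcon
  have hneg : ∀ x, 1 / (q:ℝ) < x → x ≤ 1 → Dfun q (betaS q) x < 0 := by
    intro x hx hx1
    exact SS_neg hq ⟨betaS_nonneg hq, fun y hy => hcon y hy.1 hy.2⟩ hx hx1
  -- θ
  have hbc := betaC_lt hq
  have hbs := betaS_le hq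
  have hb0 := betaS_nonneg hq
  set θ : ℝ := (2 * betaC q / q + 1) / 2 with hθ
  have hθ' : 2 * betaC q / q < 1 := by rw [div_lt_one (by linarith)]; exact hbc
  have hθ1 : θ < 1 := by rw [hθ]; linarith
  have hθ0 : 0 < θ := by
    have : 0 ≤ 2 * betaC q / q := div_nonneg (by linarith) (by linarith)
    rw [hθ]; linarith
  have hθ2 : 2 * betaC q / q < θ := by rw [hθ]; linarith
  have hθ3 : 2 * betaC q < θ * q := by rwa [div_lt_iff₀ (by linarith)] at hθ2
  set r : ℝ := (1 - θ) / (2 * q) with hr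
  have hr0 : 0 < r := div_pos (by linarith) (by linarith)
  have hrq : 1 / (q:ℝ) + r < 1 := by
    have h1 : 1 / (q:ℝ) ≤ 1 / 3 := one_div_le_one_div_of_le (by norm_num) hQ
    have h2 : r ≤ 1 / 6 := by
      rw [hr, div_le_iff₀ (by linarith)]; nlinarith
    linarith
  obtain ⟨x0, hx0, hmax⟩ := isCompact_Icc.exists_isMaxOn (Set.nonempty_Icc.mpr hrq.le) (Dfun_cont hq (betaS q)).continuousOn
  have hη : Dfun q (betaS q) x0 < 0 := hneg x0 (by linarith [hx0.1]) hx0.2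
  set η := -Dfun q (betaS q) x0 with hηd
  set β := min (betaS q + η / 4) (θ * q / 2) with hβ
  have hβgt : betaS q < β := lt_min (by linarith) (by linarith)
  have hβ1 : 2 * β ≤ θ * q := by have := min_le_right (betaS q + η / 4) (θ * q / 2); linarith
  have hβ2 : β ≤ betaS q + η / 4 := min_le_left _ _
  have hin : β ∈ SS q := by
    refine ⟨by linarith, fun x hx => ne_of_lt ?_⟩
    by_cases hxr : x ≤ 1 / q + r
    · have := D_near hq (β := β) (θ := θ) (z := x - 1 / q) (by linarith) hθ0.le hθ1 hβ1 (by linarith [hx.1]) (by linarith)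
      rw [show 1 / (q:ℝ) + (x - 1 / q) = x by ring] at this
      have h3 : 0 < (1 - θ) / 2 * (x - 1 / q) := mul_pos (by linarith) (by linarith [hx.1])
      linarith
    · push Not at hxr
      have h1 : Dfun q (betaS q) x ≤ Dfun q (betaS q) x0 := hmax ⟨hxr.le, hx.2.le⟩
      have h2 := Lf_lip_beta hq hβgt.le hx.1.le hx.2.le
      rw [Dfun_eq] at *
      linarith
  linarith [le_csSup (SS_bdd hq) hin, show sSup (SS q) = betaS q from rfl]

lemma betaS_pos {q : ℕ} (hq : 3 ≤ q) : 0 < betaS q := by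
  have hQ : (3:ℝ) ≤ q := by exact_mod_cast hq
  rcases (betaS_nonneg hq).lt_or_eq with h | h
  · exact h
  · obtain ⟨a, ha, ha1, h0⟩ := exists_zero hq
    rw [← h] at h0
    exact absurd h0 ((SS_zero hq).2 a ⟨ha, ha1⟩)

theorem spin {q : ℕ} (hq : 3 ≤ q) : ∃ a c C : ℝ, 1 / (q:ℝ) < a ∧ a < 1 ∧ 0 < c ∧ 0 < C ∧
    (∀ x ∈ Set.Icc (1 / (q:ℝ)) 1, Dfun q (betaS q) x ≤ -c * (x - a) ^ 2 * (x - 1 / q)) ∧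
    (∀ x ∈ Set.Icc (0:ℝ) 1, -C * (x - a) ^ 2 ≤ Dfun q (betaS q) x) := by
  have hQ : (3:ℝ) ≤ q := by exact_mod_cast hq
  set b := betaS q with hb
  have hbpos : 0 < b := betaS_pos hq
  have hb2 : 2 * b < q := by linarith [betaC_lt hq, betaS_le hq]
  set θ := 2 * b / q with hθ
  have hθ1 : θ < 1 := by rw [hθ, div_lt_one (by linarith)]; exact hb2
  have hθ0 : 0 < θ := by positivity
  have hθq : 2 * b ≤ θ * q := by rw [hθ, div_mul_cancel₀ _ (by linarith)]
  set r : ℝ := (1 - θ) / (2 * q) with hr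
  have hr0 : 0 < r := div_pos (by linarith) (by linarith)
  have hnear : ∀ z, 0 ≤ z → z ≤ r → Dfun q b (1 / q + z) ≤ -((1 - θ) / 2) * z :=
    fun z hz hz' => D_near hq hbpos.le hθ0.le hθ1 hθq hz hz'
  set κ := 2 * b * q / (q - 1) with hκ
  have hκ0 : 0 < κ := by apply div_pos <;> nlinarith
  -- facts about zeros
  have hzero : ∀ a, 1 / (q:ℝ) < a → a < 1 → Dfun q b a = 0 → κ * (a * (1 - a)) = 1 ∧ 1 / 2 < a := by
    intro a ha ha1 h0
    have hLa : Lf q b a = a := by rw [Dfun_eq] at h0; linarith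
    have hloc : IsLocalMax (Dfun q b) a := by
      filter_upwards [Ioo_mem_nhds ha ha1] with x hx
      rw [h0]; exact D_betaS_nonpos hq hx.1 hx.2.le
    have hd := hloc.hasDerivAt_eq_zero (Dfun_hasDeriv hq b a)
    rw [hLa] at hd
    refine ⟨by linarith, ?_⟩
    by_contra hc
    push Not at hc
    -- L monotone
    have hLmono : Monotone (Lf q b) := by
      apply monotone_of_deriv_nonneg (fun x => (Lf_hasDeriv hq b x).differentiableAt)
      intro x
      rw [(Lf_hasDeriv hq b x).deriv]
      have := Lf_pos hq b x
      have := Lf_lt_one hq b x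
      apply mul_nonneg hκ0.le (mul_nonneg (by linarith) (by linarith))
    have hanti : AntitoneOn (Dfun q b) (Set.Icc (1 / (q:ℝ)) a) := by
      apply antitoneOn_of_deriv_nonpos (convex_Icc _ _) (Dfun_cont hq b).continuousOn
        (fun x _ => (Dfun_hasDeriv hq b x).differentiableAt.differentiableWithinAt)
      intro x hx
      rw [interior_Icc] at hx
      rw [(Dfun_hasDeriv hq b x).deriv]
      have h1 : Lf q b x ≤ a := by rw [← hLa]; exact hLmono hx.2.le
      have h2 : Lf q b x * (1 - Lf q b x) ≤ a * (1 - a) := by nlinarith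
      have := mul_le_mul_of_nonneg_left h2 hκ0.le
      linarith
    set z := min r ((a - 1 / q) / 2) with hz
    have hz0 : 0 < z := lt_min hr0 (by linarith)
    have hz1 := hnear z hz0.le (min_le_left _ _)
    have hz2 : z ≤ (a - 1 / q) / 2 := min_le_right _ _
    have h3 := hanti (show 1 / (q:ℝ) + z ∈ Set.Icc (1 / (q:ℝ)) a from ⟨by linarith, by linarith⟩)
      (Set.right_mem_Icc.mpr ha.le) (by linarith)
    rw [h0] at h3
    have : 0 < (1 - θ) / 2 * z := mul_pos (by linarith) hz0
    linarith
  obtain ⟨a, ha, ha1, h0⟩ := exists_zero hq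
  rw [← hb] at h0
  obtain ⟨haκ, ha2⟩ := hzero a ha ha1 h0
  have hLa : Lf q b a = a := by rw [Dfun_eq] at h0; linarith
  have hneg : ∀ x, 1 / (q:ℝ) < x → x ≤ 1 → x ≠ a → Dfun q b x < 0 := by
    intro x hx hx1 hxa
    rcases (D_betaS_nonpos hq hx hx1).lt_or_eq with h | h
    · exact h
    · exfalso
      have hxlt : x < 1 := by
        rcases hx1.lt_or_eq with h' | h'
        · exact h'
        · rw [h'] at h; linarith [Dfun_one hq (betaS q)]
      obtain ⟨hxκ, hx2⟩ := hzero x hx hxlt h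
      have : κ * ((x - a) * (1 - x - a)) = 0 := by linear_combination hxκ - haκ
      rcases mul_eq_zero.mp this with h' | h'
      · linarith
      · rcases mul_eq_zero.mp h' with h'' | h''
        · exact hxa (by linarith)
        · linarith
  -- second order
  have hd1 : deriv (Dfun q b) a = 0 := by
    rw [Dfun_deriv hq]; simp only [hLa]; linarith
  have hd2 : deriv (deriv (Dfun q b)) a = κ * (1 - 2 * a) := by
    rw [(Dfun_deriv2 hq b a).deriv, hLa]
    linear_combination (κ * (1 - 2 * a)) * haκ
  have hderG : ∀ c : ℝ, deriv (fun x => Dfun q b x + c * (x - a) ^ 2) = fun x => deriv (Dfun q b) x + 2 * c * (x - a) := by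
    intro c
    funext x
    have h1 := (Dfun_hasDeriv hq b x)
    have h2 : HasDerivAt (fun x => c * (x - a) ^ 2) (2 * c * (x - a)) x := by
      have := ((((hasDerivAt_id x).sub_const a).pow 2).const_mul c)
      exact this.congr_deriv (by simp; ring)
    rw [h1.deriv]
    exact (h1.add h2).deriv
  have hder2G : ∀ c : ℝ, deriv (deriv (fun x => Dfun q b x + c * (x - a) ^ 2)) a = κ * (1 - 2 * a) + 2 * c := by
    intro c
    rw [hderG]
    have h1 := (Dfun_deriv2 hq b a)
    have h2 : HasDerivAt (fun x => 2 * c * (x - a)) (2 * c) a := by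
      have := (((hasDerivAt_id a).sub_const a).const_mul (2 * c))
      exact this.congr_deriv (by ring)
    rw [← hd2, h1.deriv]
    exact (h1.add h2).deriv
  have hcontG : ∀ c : ℝ, Continuous (fun x => Dfun q b x + c * (x - a) ^ 2) := by
    intro c
    have := Dfun_cont hq b
    fun_prop
  have hne1 : 0 < κ * (2 * a - 1) := mul_pos hκ0 (by linarith)
  set c1 := κ * (2 * a - 1) / 4 with hc1
  have hup : IsLocalMax (fun x => Dfun q b x + c1 * (x - a) ^ 2) a := by
    apply isLocalMax_of_deriv_deriv_neg
    · rw [hder2G]; rw [hc1]; linarith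
    · rw [hderG]; simp [hd1]
    · exact (hcontG _).continuousAt
  have hlo : IsLocalMin (fun x => Dfun q b x + (κ * (2 * a - 1)) * (x - a) ^ 2) a := by
    apply isLocalMin_of_deriv_deriv_pos
    · rw [hder2G]; linarith
    · rw [hderG]; simp [hd1]
    · exact (hcontG _).continuousAt
  obtain ⟨r1, hr1, hup'⟩ := Metric.eventually_nhds_iff.mp hup
  obtain ⟨r2, hr2, hlo'⟩ := Metric.eventually_nhds_iff.mp hlo
  simp only [h0, sub_self] at hup' hlo'
  have hc1pos : 0 < c1 := by rw [hc1]; linarith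
  have hq3 : 0 < 1 / (q:ℝ) := by positivity
  -- middle region
  have hmid : ∃ η, 0 < η ∧ ∀ x, 1 / (q:ℝ) + r ≤ x → x ≤ 1 → r1 ≤ |x - a| → Dfun q b x ≤ -η := by
    set K : Set ℝ := Set.Icc (1 / (q:ℝ) + r) 1 ∩ {x | r1 ≤ |x - a|} with hK
    have hKc : IsCompact K := isCompact_Icc.inter_right (isClosed_le continuous_const (by fun_prop))
    rcases K.eq_empty_or_nonempty with he | hne
    · refine ⟨1, one_pos, fun x h1 h2 h3 => ?_⟩
      have : x ∈ K := ⟨⟨h1, h2⟩, h3⟩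
      rw [he] at this; exact absurd this (Set.notMem_empty x)
    · obtain ⟨x0, hx0, hmax⟩ := hKc.exists_isMaxOn hne (Dfun_cont hq b).continuousOn
      refine ⟨-Dfun q b x0, ?_, fun x h1 h2 h3 => ?_⟩
      · have : x0 ≠ a := by
          rintro rfl
          have := hx0.2
          simp at this; linarith
        linarith [hneg x0 (by linarith [hx0.1.1]) hx0.1.2 this]
      · rw [neg_neg]; exact hmax ⟨⟨h1, h2⟩, h3⟩
  obtain ⟨η, hη, hmid⟩ := hmid
  set c := min (min c1 ((1 - θ) / 2)) η with hc
  have hc0 : 0 < c := lt_min (lt_min hc1pos (by linarith)) hη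
  have hcc1 : c ≤ c1 := (min_le_left _ _).trans (min_le_left _ _)
  have hcθ : c ≤ (1 - θ) / 2 := (min_le_left _ _).trans (min_le_right _ _)
  have hcη : c ≤ η := min_le_right _ _
  set C := max (κ * (2 * a - 1)) (1 / r2 ^ 2) with hC
  refine ⟨a, c, C, ha, ha1, hc0, lt_of_lt_of_le hne1 (le_max_left _ _), ?_, ?_⟩
  · intro x hx
    have hx1 := hx.1
    have hx2 := hx.2
    have hp1 : (x - a) ^ 2 ≤ 1 := by nlinarith
    have hp2 : x - 1 / q ≤ 1 := by linarith
    have hp3 : 0 ≤ x - 1 / q := by linarith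
    by_cases hxr : x ≤ 1 / q + r
    · have := hnear (x - 1 / q) (by linarith) (by linarith)
      rw [show 1 / (q:ℝ) + (x - 1 / q) = x by ring] at this
      have h1 : c * (x - a) ^ 2 ≤ (1 - θ) / 2 := by nlinarith [sq_nonneg (x - a)]
      have := mul_le_mul_of_nonneg_right h1 hp3
      linarith
    · push Not at hxr
      by_cases hxa : |x - a| < r1
      · have := hup' (y := x) (by rw [Real.dist_eq]; exact hxa)
        have h1 : c * (x - a) ^ 2 * (x - 1 / q) ≤ c1 * (x - a) ^ 2 * 1 := by gcongr
        norm_num at this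
        linarith
      · push Not at hxa
        have := hmid x hxr.le hx2 hxa
        have h1 : c * (x - a) ^ 2 * (x - 1 / q) ≤ η * 1 * 1 := by gcongr
        linarith
  · intro x hx
    have hCa : κ * (2 * a - 1) ≤ C := le_max_left _ _
    have hCb : 1 / r2 ^ 2 ≤ C := le_max_right _ _
    by_cases hxa : |x - a| < r2
    · have := hlo' (y := x) (by rw [Real.dist_eq]; exact hxa)
      norm_num at this
      have h1 := mul_le_mul_of_nonneg_right hCa (sq_nonneg (x - a))
      linarith
    · push Not at hxa
      have h1 : r2 ^ 2 ≤ (x - a) ^ 2 := by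
        rw [← sq_abs (x - a)]; gcongr
      have h2 : 1 ≤ C * (x - a) ^ 2 := by
        have e : 1 / r2 ^ 2 * r2 ^ 2 = 1 := by field_simp
        rw [← e]
        gcongr
      rw [Dfun_eq]
      linarith [Lf_pos hq b x, hx.2]


lemma arctan_taylor (u h : ℝ) :
    |Real.arctan (u + h) - Real.arctan u - h / (1 + u ^ 2) + u * h ^ 2 / (1 + u ^ 2) ^ 2| ≤ 7 * |h| ^ 3 := by
  set f : ℝ → ℝ := fun t => Real.arctan (u + t) - Real.arctan u - t / (1 + u ^ 2) + u * t ^ 2 / (1 + u ^ 2) ^ 2 with hf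
  set f' : ℝ → ℝ := fun t => 1 / (1 + (u + t) ^ 2) - 1 / (1 + u ^ 2) + 2 * u * t / (1 + u ^ 2) ^ 2 with hf'
  have hd : ∀ t, HasDerivAt f (f' t) t := by
    intro t
    have h1 : HasDerivAt (fun t => Real.arctan (u + t)) (1 / (1 + (u + t) ^ 2)) t := by
      have := (Real.hasDerivAt_arctan (u + t)).comp t ((hasDerivAt_id t).const_add u)
      exact this.congr_deriv (by simp)
    have h2 : HasDerivAt (fun t => t / (1 + u ^ 2)) (1 / (1 + u ^ 2)) t :=
      (hasDerivAt_id t).div_const _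
    have h3 : HasDerivAt (fun t => u * t ^ 2 / (1 + u ^ 2) ^ 2) (2 * u * t / (1 + u ^ 2) ^ 2) t := by
      have := (((hasDerivAt_id t).pow 2).const_mul u).div_const ((1 + u ^ 2) ^ 2)
      exact this.congr_deriv (by simp; ring)
    exact ((h1.sub_const _).sub h2).add h3
  have hb : ∀ t, |f' t| ≤ 7 * t ^ 2 := by
    intro t
    have hP : 0 < 1 + u ^ 2 := by positivity
    have hQ : 0 < 1 + (u + t) ^ 2 := by positivity
    have e : f' t = t ^ 2 * (-(1 + u ^ 2) + 4 * u ^ 2 + 2 * u * t) / ((1 + u ^ 2) ^ 2 * (1 + (u + t) ^ 2)) := by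
      rw [hf']; field_simp; ring
    have hden : 0 < (1 + u ^ 2) ^ 2 * (1 + (u + t) ^ 2) := by positivity
    rw [e, abs_div, abs_mul, abs_of_pos hden, abs_of_nonneg (sq_nonneg t), div_le_iff₀ hden]
    have h1 : |(-(1 + u ^ 2) + 4 * u ^ 2 + 2 * u * t)| ≤ 6 * (1 + u ^ 2) + (1 + (u + t) ^ 2) := by
      rw [abs_le]; constructor <;> nlinarith [sq_nonneg (2 * u + t), sq_nonneg t, sq_nonneg u]
    have h2 : 6 * (1 + u ^ 2) + (1 + (u + t) ^ 2) ≤ 7 * ((1 + u ^ 2) ^ 2 * (1 + (u + t) ^ 2)) := by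
      have a1 : 1 ≤ 1 + u ^ 2 := by nlinarith [sq_nonneg u]
      have a2 : 1 ≤ 1 + (u + t) ^ 2 := by nlinarith [sq_nonneg (u+t)]
      have a3 : 1 + u ^ 2 ≤ (1 + u ^ 2) ^ 2 * (1 + (u + t) ^ 2) := by
        calc 1 + u ^ 2 = (1 + u ^ 2) * 1 * 1 := by ring
          _ ≤ (1 + u ^ 2) * (1 + u ^ 2) * (1 + (u + t) ^ 2) := by gcongr
          _ = _ := by ring
      have a4 : 1 + (u + t) ^ 2 ≤ (1 + u ^ 2) ^ 2 * (1 + (u + t) ^ 2) := by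
        calc 1 + (u + t) ^ 2 = 1 * 1 * (1 + (u + t) ^ 2) := by ring
          _ ≤ (1 + u ^ 2) * (1 + u ^ 2) * (1 + (u + t) ^ 2) := by gcongr
          _ = _ := by ring
      linarith
    nlinarith [mul_le_mul_of_nonneg_left (h1.trans h2) (sq_nonneg t)]
  have := (convex_Icc (-|h|) |h|).norm_image_sub_le_of_norm_hasDerivWithin_le (f := f) (f' := f') (C := 7 * h ^ 2)
    (fun t _ => (hd t).hasDerivWithinAt) (fun t ht => by
      rw [Real.norm_eq_abs]
      refine (hb t).trans ?_
      have : |t| ≤ |h| := abs_le.mpr ht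
      have := sq_le_sq.mpr this
      linarith) (x := 0) (y := h) ⟨by simp, by simp⟩ ⟨neg_abs_le h, le_abs_self h⟩
  simp only [Real.norm_eq_abs, sub_zero] at this
  have h0 : f 0 = 0 := by simp [hf]
  rw [h0, sub_zero] at this
  calc _ = |f h| := rfl
    _ ≤ 7 * h ^ 2 * |h| := this
    _ = 7 * |h| ^ 3 := by rw [← sq_abs h]; ring

lemma smax_perturb {q : ℕ} (a b : Fin q → ℝ) (δ : ℝ) (h : ∀ j, |a j - b j| ≤ δ) (k : Fin q) :
    smax a k ≤ Real.exp (2 * δ) * smax b k := by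
  unfold smax
  have hA := smax_den_pos a k
  have hB := smax_den_pos b k
  rw [div_le_iff₀ hA, ← mul_div_assoc, div_mul_eq_mul_div, le_div_iff₀ hB]
  have h1 : Real.exp (a k) ≤ Real.exp δ * Real.exp (b k) := by
    rw [← Real.exp_add]; apply Real.exp_le_exp.mpr; linarith [(abs_le.mp (h k)).2]
  have h2 : ∑ j, Real.exp (b j) ≤ Real.exp δ * ∑ j, Real.exp (a j) := by
    rw [Finset.mul_sum]; apply Finset.sum_le_sum; intro j _
    rw [← Real.exp_add]; apply Real.exp_le_exp.mpr; linarith [(abs_le.mp (h j)).1]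
  calc _ ≤ (Real.exp δ * Real.exp (b k)) * (Real.exp δ * ∑ j, Real.exp (a j)) := by
        apply mul_le_mul h1 h2 hB.le (by positivity)
    _ = _ := by rw [two_mul, Real.exp_add]; ring

lemma exp_le_two {x : ℝ} (h0 : 0 ≤ x) (h1 : x ≤ 1) : Real.exp x ≤ 1 + 2 * x := by
  have := Real.abs_exp_sub_one_sub_id_le (x := x) (by rw [abs_of_nonneg h0]; exact h1)
  have := (abs_le.mp this).2
  nlinarith

lemma smax_perturb' {q : ℕ} (a b : Fin q → ℝ) (δ : ℝ) (hδ : 0 ≤ δ) (hδ1 : 2 * δ ≤ 1) (h : ∀ j, |a j - b j| ≤ δ) (k : Fin q) :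
    |smax a k - smax b k| ≤ 4 * δ := by
  have h1 := smax_perturb a b δ h k
  have h2 := smax_perturb b a δ (fun j => by rw [abs_sub_comm]; exact h j) k
  have h3 := exp_le_two (by linarith : 0 ≤ 2 * δ) hδ1
  have h4 := smax_pos a k
  have h5 := smax_pos b k
  have h6 := smax_le_one a k
  have h7 := smax_le_one b k
  rw [abs_le]
  constructor <;> nlinarith

/-- softmax of the color fractions -/
noncomputable def sg {q n : ℕ} (β : ℝ) (σ : Fin n → Fin q) (k : Fin q) : ℝ :=
  smax (fun j => 2 * β * frac σ j) k

/-- mean increment -/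
noncomputable def mm {q n : ℕ} (β : ℝ) (σ : Fin n → Fin q) (k : Fin q) : ℝ :=
  EE β σ (fun u j => ind j k - ind (σ u) k)

/-- second moment of the increment -/
noncomputable def vv {q n : ℕ} (β : ℝ) (σ : Fin n → Fin q) (k : Fin q) : ℝ :=
  EE β σ (fun u j => (ind j k - ind (σ u) k) ^ 2)

lemma frac_update {q n : ℕ} (σ : Fin n → Fin q) (u : Fin n) (j k : Fin q) :
    frac (Function.update σ u j) k = frac σ k + (ind j k - ind (σ u) k) / n := by
  unfold frac; rw [cnt_update]; ring

lemma frac_nonneg {q n : ℕ} (σ : Fin n → Fin q) (k : Fin q) : 0 ≤ frac σ k :=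
  div_nonneg (cnt_nonneg σ k) (by positivity)

lemma frac_le {q n : ℕ} (hn : 0 < n) (σ : Fin n → Fin q) (k : Fin q) : frac σ k ≤ 1 := by
  unfold frac
  rw [div_le_one (by exact_mod_cast hn)]
  exact cnt_le σ k

lemma sum_frac {q n : ℕ} (hn : 0 < n) (σ : Fin n → Fin q) : ∑ k, frac σ k = 1 := by
  unfold frac
  rw [← Finset.sum_div, sum_cnt, div_self]
  exact_mod_cast hn.ne'

lemma inc_abs {q : ℕ} (i j k : Fin q) : |ind i k - ind j k| ≤ 1 := by
  rw [abs_le]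
  constructor <;> linarith [ind_nonneg i k, ind_nonneg j k, ind_le_one i k, ind_le_one j k]

lemma gp_sg {q n : ℕ} {β : ℝ} (hβ : 0 ≤ β) (hβq : 2 * β ≤ q) (hn : 2 * q ≤ n) (hn0 : 0 < n) (σ : Fin n → Fin q)
    (u : Fin n) (k : Fin q) : |gp β σ u k - sg β σ k| ≤ 4 * q / n := by
  have hnR : (0:ℝ) < n := by exact_mod_cast hn0
  have hnq : 2 * (q:ℝ) ≤ n := by exact_mod_cast hn
  have := smax_perturb' (fun j => 2 * β / n * (cnt σ j - ind (σ u) j)) (fun j => 2 * β * frac σ j) (q / n)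
    (by positivity) (by rw [← mul_div_assoc, div_le_one hnR]; exact hnq) (fun j => by
      have : 2 * β / n * (cnt σ j - ind (σ u) j) - 2 * β * frac σ j = - (2 * β * ind (σ u) j) / n := by
        unfold frac; ring
      rw [this, abs_div, abs_neg, abs_of_pos hnR]
      gcongr
      have h1 := ind_nonneg (σ u) j
      have h2 := ind_le_one (σ u) j
      rw [abs_of_nonneg (by positivity)]
      nlinarith) k
  rw [mul_div_assoc]
  exact this

lemma mm_eq {q n : ℕ} (β : ℝ) (σ : Fin n → Fin q) (k : Fin q) :
    mm β σ k = (1 / (n:ℝ)) * ∑ u, (gp β σ u k) - frac σ k := by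
  unfold mm EE frac cnt
  have : ∀ u, ∑ j, gp β σ u j * (ind j k - ind (σ u) k) = gp β σ u k - ind (σ u) k := by
    intro u
    simp_rw [mul_sub, Finset.sum_sub_distrib, ← Finset.sum_mul, gp_sum, one_mul]
    congr 1
    rw [← sum_ind_mul k (gp β σ u)]
    apply Finset.sum_congr rfl
    intro j _
    rw [ind_comm, mul_comm]
  simp_rw [this, Finset.sum_sub_distrib]
  unfold ind
  ring

lemma mm_sg {q n : ℕ} {β : ℝ} (hβ : 0 ≤ β) (hβq : 2 * β ≤ q) (hn : 2 * q ≤ n) (hn0 : 0 < n) (σ : Fin n → Fin q)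
    (k : Fin q) : |mm β σ k - (sg β σ k - frac σ k)| ≤ 4 * q / n := by
  have hnR : (0:ℝ) < n := by exact_mod_cast hn0
  rw [mm_eq]
  have : 1 / (n:ℝ) * ∑ u, gp β σ u k - frac σ k - (sg β σ k - frac σ k) = 1 / (n:ℝ) * ∑ u : Fin n, (gp β σ u k - sg β σ k) := by
    rw [Finset.sum_sub_distrib]
    simp
    field_simp
  rw [this, abs_mul, abs_of_pos (by positivity)]
  have h2 : |∑ u : Fin n, (gp β σ u k - sg β σ k)| ≤ n * (4 * q / n) := by
    refine (Finset.abs_sum_le_sum_abs _ _).trans ?_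
    calc _ ≤ ∑ u : Fin n, (4 * (q:ℝ) / n) := Finset.sum_le_sum (fun u _ => gp_sg hβ hβq hn hn0 σ u k)
      _ = _ := by simp
  calc _ ≤ 1 / (n:ℝ) * (n * (4 * q / n)) := by gcongr
    _ = _ := by field_simp

lemma vv_le {q n : ℕ} (hn0 : 0 < n) (β : ℝ) (σ : Fin n → Fin q) (k : Fin q) : vv β σ k ≤ 1 := by
  rw [← EE_const hn0 β σ 1]
  apply EE_mono
  intro u j
  have := inc_abs j (σ u) k
  rw [← sq_abs]
  exact pow_le_one₀ (abs_nonneg _) this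

lemma gp_lower {q n : ℕ} {β : ℝ} (hβ : 0 ≤ β) (hβq : 2 * β ≤ q) (hn0 : 0 < n) (σ : Fin n → Fin q)
    (u : Fin n) (k : Fin q) : Real.exp (-(2 * q)) / q ≤ gp β σ u k := by
  have hnR : (0:ℝ) < n := by exact_mod_cast hn0
  have hn1 : (1:ℝ) ≤ n := by exact_mod_cast hn0
  have := smax_perturb (fun _ => 0) (fun j => 2 * β / n * (cnt σ j - ind (σ u) j)) q (fun j => by
    rw [zero_sub, abs_neg]
    have h1 : |cnt σ j - ind (σ u) j| ≤ n := by
      rw [abs_le]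
      constructor <;> linarith [cnt_nonneg σ j, cnt_le σ j, ind_nonneg (σ u) j, ind_le_one (σ u) j]
    rw [abs_mul, abs_of_nonneg (by positivity)]
    calc 2 * β / n * |cnt σ j - ind (σ u) j| ≤ 2 * β / n * n := by gcongr
      _ = 2 * β := by field_simp
      _ ≤ q := hβq) k
  have e : smax (fun _ : Fin q => (0:ℝ)) k = 1 / q := by simp [smax]
  rw [e] at this
  rw [Real.exp_neg, inv_eq_one_div, div_div, mul_comm, ← div_div, div_le_iff₀ (Real.exp_pos _)]
  unfold gp
  linarith

lemma vv_ge {q n : ℕ} (hq : 3 ≤ q) {β : ℝ} (hβ : 0 ≤ β) (hβq : 2 * β ≤ q) (hn0 : 0 < n) (σ : Fin n → Fin q)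
    (k : Fin q) : Real.exp (-(2 * q)) / q ≤ vv β σ k := by
  have hnR : (0:ℝ) < n := by exact_mod_cast hn0
  unfold vv EE
  have h : ∀ u, Real.exp (-(2 * q)) / q ≤ ∑ j, gp β σ u j * (ind j k - ind (σ u) k) ^ 2 := by
    intro u
    have hne : ∃ j : Fin q, (ind j k - ind (σ u) k) ^ 2 = 1 := by
      by_cases hu : σ u = k
      · have : Nontrivial (Fin q) := Fin.nontrivial_iff_two_le.mpr (by omega)
        obtain ⟨j, hj⟩ := exists_ne k
        exact ⟨j, by simp [ind, hu, hj]⟩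
      · exact ⟨k, by simp [ind, hu]⟩
    obtain ⟨j, hj⟩ := hne
    calc _ ≤ gp β σ u j := gp_lower hβ hβq hn0 σ u j
      _ = gp β σ u j * (ind j k - ind (σ u) k) ^ 2 := by rw [hj, mul_one]
      _ ≤ _ := Finset.single_le_sum (f := fun j => gp β σ u j * (ind j k - ind (σ u) k) ^ 2)
        (fun i _ => mul_nonneg (gp_pos β σ u i).le (sq_nonneg _)) (Finset.mem_univ j)
  calc Real.exp (-(2 * q)) / q = 1 / (n:ℝ) * ∑ u : Fin n, (Real.exp (-(2 * q)) / q) := by simp; field_simp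
    _ ≤ _ := by
      apply mul_le_mul_of_nonneg_left _ (by positivity)
      exact Finset.sum_le_sum (fun u _ => h u)

lemma step_le {q n : ℕ} (hn0 : 0 < n) (β : ℝ) (σ : Fin n → Fin q) (k : Fin q) (φ : ℝ → ℝ) (A B R : ℝ)
    (h : ∀ h : ℝ, |h| ≤ 1 / n → φ (frac σ k + h) ≤ φ (frac σ k) + A * h + B * h ^ 2 + R) :
    TT β (fun τ => φ (frac τ k)) σ ≤ φ (frac σ k) + A * mm β σ k / n + B * vv β σ k / n ^ 2 + R := by
  have hnR : (0:ℝ) < n := by exact_mod_cast hn0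
  unfold TT
  refine (EE_mono β σ (H := fun u j => (φ (frac σ k) + R) + ((A / n) * (ind j k - ind (σ u) k) + (B / n ^ 2) * (ind j k - ind (σ u) k) ^ 2)) ?_).trans ?_
  · intro u j
    show φ (frac (Function.update σ u j) k) ≤ _
    rw [frac_update]
    refine (h _ ?_).trans (le_of_eq ?_)
    · rw [abs_div, abs_of_pos hnR]
      gcongr
      exact inc_abs _ _ _
    · field_simp
      ring
  · rw [EE_add, EE_const hn0, EE_add, EE_smul, EE_smul]
    unfold mm vv
    apply le_of_eq
    ring

lemma TT_neg {q n : ℕ} (β : ℝ) (f : (Fin n → Fin q) → ℝ) (σ : Fin n → Fin q) :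
    TT β (fun σ => - f σ) σ = - TT β f σ := by
  have := TT_smul β (-1) f σ
  simpa using this

lemma step_ge {q n : ℕ} (hn0 : 0 < n) (β : ℝ) (σ : Fin n → Fin q) (k : Fin q) (φ : ℝ → ℝ) (A B R : ℝ)
    (h : ∀ h : ℝ, |h| ≤ 1 / n → φ (frac σ k) + A * h + B * h ^ 2 - R ≤ φ (frac σ k + h)) :
    φ (frac σ k) + A * mm β σ k / n + B * vv β σ k / n ^ 2 - R ≤ TT β (fun τ => φ (frac τ k)) σ := by
  have := step_le hn0 β σ k (fun x => - φ x) (-A) (-B) R (fun t ht => by have := h t ht; linarith)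
  rw [TT_neg β (fun τ => φ (frac τ k))] at this
  have e : -φ (frac σ k) + -A * mm β σ k / n + -B * vv β σ k / n ^ 2 + R = -(φ (frac σ k) + A * mm β σ k / n + B * vv β σ k / n ^ 2 - R) := by ring
  rw [e] at this
  linarith

/-- average of the other fractions -/
noncomputable def mo {q n : ℕ} (σ : Fin n → Fin q) (k : Fin q) : ℝ := (1 - frac σ k) / (q - 1)

lemma sum_dev {q n : ℕ} (hq : 3 ≤ q) (hn0 : 0 < n) (σ : Fin n → Fin q) (k : Fin q) :
    ∑ j ∈ Finset.univ.erase k, (frac σ j - mo σ k) = 0 := by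
  have hQ : (3:ℝ) ≤ q := by exact_mod_cast hq
  have h := sum_frac hn0 σ
  rw [← Finset.add_sum_erase _ _ (Finset.mem_univ k)] at h
  rw [Finset.sum_sub_distrib]
  simp only [Finset.sum_const, Finset.card_erase_of_mem (Finset.mem_univ k), Finset.card_univ, Fintype.card_fin, nsmul_eq_mul]
  rw [Nat.cast_sub (by omega)]
  unfold mo
  have : (q:ℝ) - 1 ≠ 0 := by linarith
  push_cast
  rw [mul_div_cancel₀ _ this]
  linarith

lemma sg_form {q n : ℕ} (β : ℝ) (σ : Fin n → Fin q) (k : Fin q) :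
    sg β σ k = (1 + ∑ j ∈ Finset.univ.erase k, Real.exp (2 * β * (frac σ j - frac σ k)))⁻¹ := by
  unfold sg smax
  rw [← Finset.add_sum_erase _ _ (Finset.mem_univ k)]
  have h : Real.exp (2 * β * frac σ k) ≠ 0 := (Real.exp_pos _).ne'
  have : ∑ j ∈ Finset.univ.erase k, Real.exp (2 * β * frac σ j) = Real.exp (2 * β * frac σ k) * ∑ j ∈ Finset.univ.erase k, Real.exp (2 * β * (frac σ j - frac σ k)) := by
    rw [Finset.mul_sum]
    apply Finset.sum_congr rfl
    intro j _
    rw [← Real.exp_add]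
    congr 1; ring
  rw [this, ← mul_one_add, div_mul_cancel_left₀ h]

lemma sum_dev_form {q n : ℕ} (β : ℝ) (σ : Fin n → Fin q) (k : Fin q) :
    ∑ j ∈ Finset.univ.erase k, Real.exp (2 * β * (frac σ j - frac σ k)) =
     Real.exp (2 * β * (mo σ k - frac σ k)) * ∑ j ∈ Finset.univ.erase k, Real.exp (2 * β * (frac σ j - mo σ k)) := by
  rw [Finset.mul_sum]
  apply Finset.sum_congr rfl
  intro j _
  rw [← Real.exp_add]
  congr 1; ring

lemma Lf_form {q n : ℕ} (hq : 3 ≤ q) (β : ℝ) (σ : Fin n → Fin q) (k : Fin q) :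
    Lf q β (frac σ k) = (1 + Real.exp (2 * β * (mo σ k - frac σ k)) * (q - 1))⁻¹ := by
  have hQ : (3:ℝ) ≤ q := by exact_mod_cast hq
  unfold Lf mo
  rw [mul_comm (Real.exp _)]
  congr 4
  have : (q:ℝ) - 1 ≠ 0 := by linarith
  field_simp
  ring

lemma sg_le {q n : ℕ} (hq : 3 ≤ q) (hn0 : 0 < n) (β : ℝ) (σ : Fin n → Fin q) (k : Fin q) :
    sg β σ k ≤ Lf q β (frac σ k) := by
  have hQ : (3:ℝ) ≤ q := by exact_mod_cast hq
  rw [sg_form, Lf_form hq, sum_dev_form]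
  have h1 : (q:ℝ) - 1 ≤ ∑ j ∈ Finset.univ.erase k, Real.exp (2 * β * (frac σ j - mo σ k)) := by
    calc (q:ℝ) - 1 = ∑ j ∈ Finset.univ.erase k, (2 * β * (frac σ j - mo σ k) + 1) := by
          rw [Finset.sum_add_distrib, ← Finset.mul_sum, sum_dev hq hn0]
          simp only [Finset.sum_const, Finset.card_erase_of_mem (Finset.mem_univ k), Finset.card_univ, Fintype.card_fin, nsmul_eq_mul]
          rw [Nat.cast_sub (by omega)]
          push_cast; ring
      _ ≤ _ := Finset.sum_le_sum (fun j _ => Real.add_one_le_exp _)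
  have hE := Real.exp_pos (2 * β * (mo σ k - frac σ k))
  apply inv_anti₀
  · have := mul_pos hE (by linarith : 0 < (q:ℝ) - 1); linarith
  · have := mul_le_mul_of_nonneg_left h1 hE.le
    linarith

/-- sum of squared deviations of the other colors -/
noncomputable def VV {q n : ℕ} (k : Fin q) (σ : Fin n → Fin q) : ℝ :=
  ∑ j ∈ Finset.univ.erase k, (frac σ j - mo σ k) ^ 2

lemma VV_nonneg {q n : ℕ} (k : Fin q) (σ : Fin n → Fin q) : 0 ≤ VV k σ :=
  Finset.sum_nonneg (fun _ _ => sq_nonneg _)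

lemma dev_le {q n : ℕ} (k : Fin q) (σ : Fin n → Fin q) {η : ℝ} (hη : 0 ≤ η) (h : VV k σ ≤ η ^ 2) {j : Fin q} (hj : j ≠ k) :
    |frac σ j - mo σ k| ≤ η := by
  apply abs_le_of_sq_le_sq _ hη
  refine le_trans ?_ h
  exact Finset.single_le_sum (f := fun j => (frac σ j - mo σ k) ^ 2) (fun _ _ => sq_nonneg _)
    (Finset.mem_erase.mpr ⟨hj, Finset.mem_univ j⟩)

lemma sg_ge {q n : ℕ} (hq : 3 ≤ q) (hn0 : 0 < n) {β : ℝ} (hβ : 0 ≤ β) (hβq : 2 * β ≤ q) (σ : Fin n → Fin q) (k : Fin q)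
    (hV : VV k σ ≤ (1 / q) ^ 2) :
    Lf q β (frac σ k) - q ^ 2 * VV k σ ≤ sg β σ k := by
  have hQ : (3:ℝ) ≤ q := by exact_mod_cast hq
  rw [sg_form, Lf_form hq, sum_dev_form]
  have h1 : ∑ j ∈ Finset.univ.erase k, Real.exp (2 * β * (frac σ j - mo σ k)) ≤ ((q:ℝ) - 1) * (1 + q ^ 2 * VV k σ) := by
    calc _ ≤ ∑ j ∈ Finset.univ.erase k, ((2 * β * (frac σ j - mo σ k) + 1) + q ^ 2 * (frac σ j - mo σ k) ^ 2) := by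
          apply Finset.sum_le_sum
          intro j hj
          have hd := dev_le k σ (by positivity) hV (Finset.ne_of_mem_erase hj)
          have h1 : |2 * β * (frac σ j - mo σ k)| ≤ 1 := by
            rw [abs_mul, abs_of_nonneg (by linarith)]
            calc 2 * β * |frac σ j - mo σ k| ≤ q * (1 / q) := by gcongr
              _ = 1 := by field_simp
          have h2 := (abs_le.mp (Real.abs_exp_sub_one_sub_id_le h1)).2
          have h3 : (2 * β * (frac σ j - mo σ k)) ^ 2 ≤ q ^ 2 * (frac σ j - mo σ k) ^ 2 := by
            rw [mul_pow]; gcongr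
          linarith
      _ = ((q:ℝ) - 1) + q ^ 2 * VV k σ := by
          rw [Finset.sum_add_distrib, Finset.sum_add_distrib, ← Finset.mul_sum, sum_dev hq hn0, ← Finset.mul_sum]
          simp only [Finset.sum_const, Finset.card_erase_of_mem (Finset.mem_univ k), Finset.card_univ, Fintype.card_fin, nsmul_eq_mul]
          rw [Nat.cast_sub (by omega)]
          unfold VV
          push_cast; ring
      _ ≤ _ := by
        have := VV_nonneg k σ
        have : 0 ≤ q ^ 2 * VV k σ := by positivity
        nlinarith
  set e := (q:ℝ) ^ 2 * VV k σ with he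
  have he0 : 0 ≤ e := by have := VV_nonneg k σ; positivity
  have hE := Real.exp_pos (2 * β * (mo σ k - frac σ k))
  set E := Real.exp (2 * β * (mo σ k - frac σ k))
  set X := ∑ j ∈ Finset.univ.erase k, Real.exp (2 * β * (frac σ j - mo σ k))
  have hX : 0 ≤ X := Finset.sum_nonneg (fun _ _ => (Real.exp_pos _).le)
  set R := E * ((q:ℝ) - 1) with hR
  have hR0 : 0 < R := mul_pos hE (by linarith)
  have h2 : E * X ≤ R * (1 + e) := by
    have := mul_le_mul_of_nonneg_left h1 hE.le
    rw [hR]; linarith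
  have h3 : (1 + R * (1 + e))⁻¹ ≤ (1 + E * X)⁻¹ := by
    apply inv_anti₀ (by positivity); linarith
  refine le_trans ?_ h3
  have h4 : (1 + R)⁻¹ - (1 + R * (1 + e))⁻¹ = e * (R / ((1 + R) * (1 + R * (1 + e)))) := by
    have : 1 + R ≠ 0 := by positivity
    have : 1 + R * (1 + e) ≠ 0 := by positivity
    field_simp
    ring
  have h5 : R / ((1 + R) * (1 + R * (1 + e))) ≤ 1 := by
    rw [div_le_one (by positivity)]
    nlinarith [mul_nonneg hR0.le he0, mul_nonneg hR0.le (mul_nonneg hR0.le he0)]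
  nlinarith

lemma VV_step {q n : ℕ} (hq : 3 ≤ q) (hn0 : 0 < n) (hn : 2 * q ≤ n) {β : ℝ} (hβ : 0 ≤ β) (hβq : 2 * β ≤ q)
    (σ : Fin n → Fin q) (k : Fin q) :
    TT β (VV k) σ ≤ VV k σ + 2 / n * ∑ j ∈ Finset.univ.erase k, (frac σ j - mo σ k) * (sg β σ j - frac σ j)
      + 12 * q ^ 2 / n ^ 2 := by
  have hQ : (3:ℝ) ≤ q := by exact_mod_cast hq
  have hnR : (0:ℝ) < n := by exact_mod_cast hn0
  have hpt : ∀ u i, VV k (Function.update σ u i) ≤ (VV k σ + 4 * q / n ^ 2) + ∑ j ∈ Finset.univ.erase k, (2 / n * (frac σ j - mo σ k)) * (ind i j - ind (σ u) j) := by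
    intro u i
    set c := (ind i k - ind (σ u) k) / ((q:ℝ) - 1) with hc
    have hc1 : |c| ≤ 1 := by
      rw [hc, abs_div, abs_of_pos (by linarith : 0 < (q:ℝ) - 1), div_le_one (by linarith)]
      linarith [inc_abs i (σ u) k]
    have e1 : VV k (Function.update σ u i) = VV k σ + ∑ j ∈ Finset.univ.erase k, ((2 / n * (frac σ j - mo σ k)) * (ind i j - ind (σ u) j) + 2 * c / n * (frac σ j - mo σ k) + (ind i j - ind (σ u) j + c) ^ 2 / n ^ 2) := by
      unfold VV
      rw [← Finset.sum_add_distrib]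
      apply Finset.sum_congr rfl
      intro j _
      have : mo (Function.update σ u i) k = mo σ k - c / n := by
        unfold mo; rw [frac_update, hc]
        have : (q:ℝ) - 1 ≠ 0 := by linarith
        field_simp
        ring
      rw [frac_update, this]
      field_simp
      ring
    rw [e1, Finset.sum_add_distrib, Finset.sum_add_distrib, ← Finset.mul_sum (a := 2 * c / n), sum_dev hq hn0]
    have h3 : ∑ j ∈ Finset.univ.erase k, (ind i j - ind (σ u) j + c) ^ 2 / (n:ℝ) ^ 2 ≤ 4 * q / n ^ 2 := by
      calc _ ≤ ∑ j ∈ Finset.univ.erase k, 4 / (n:ℝ) ^ 2 := by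
            apply Finset.sum_le_sum
            intro j _
            gcongr
            have h1 := abs_le.mp (inc_abs i (σ u) j)
            have h2 := abs_le.mp hc1
            nlinarith [h1.1, h1.2, h2.1, h2.2]
        _ ≤ ∑ j : Fin q, 4 / (n:ℝ) ^ 2 := Finset.sum_le_sum_of_subset_of_nonneg (Finset.subset_univ _) (fun _ _ _ => by positivity)
        _ = _ := by simp; ring
    linarith
  unfold TT
  refine (EE_mono β σ hpt).trans ?_
  rw [EE_add, EE_const hn0, EE_sum]
  have h4 : ∀ j, EE β σ (fun u i => (2 / n * (frac σ j - mo σ k)) * (ind i j - ind (σ u) j)) = (2 / n * (frac σ j - mo σ k)) * mm β σ j := fun j => EE_smul β σ _ _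
  simp_rw [h4]
  have hmo0 : 0 ≤ mo σ k := div_nonneg (by linarith [frac_le hn0 σ k]) (by linarith)
  have hmo1 : mo σ k ≤ 1 := by
    unfold mo; rw [div_le_one (by linarith)]; linarith [frac_nonneg σ k]
  have h5 : ∑ j ∈ Finset.univ.erase k, (2 / n * (frac σ j - mo σ k)) * mm β σ j ≤
      ∑ j ∈ Finset.univ.erase k, (2 / n * ((frac σ j - mo σ k) * (sg β σ j - frac σ j)) + 8 * q / n ^ 2) := by
    apply Finset.sum_le_sum
    intro j _
    have h6 := mm_sg hβ hβq hn hn0 σ j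
    have h7 : |frac σ j - mo σ k| ≤ 1 := by
      rw [abs_le]; constructor <;> linarith [frac_nonneg σ j, frac_le hn0 σ j]
    have h8 : (frac σ j - mo σ k) * (mm β σ j - (sg β σ j - frac σ j)) ≤ 4 * q / n := by
      refine (le_abs_self _).trans ?_
      rw [abs_mul]
      calc _ ≤ 1 * (4 * (q:ℝ) / n) := by gcongr
        _ = _ := one_mul _
    have h9 := mul_le_mul_of_nonneg_left h8 (by positivity : 0 ≤ 2 / (n:ℝ))
    have e : 2 / (n:ℝ) * (4 * q / n) = 8 * q / n ^ 2 := by field_simp; ring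
    rw [e] at h9
    nlinarith
  rw [Finset.sum_add_distrib, ← Finset.mul_sum] at h5
  have h6 : (∑ j ∈ Finset.univ.erase k, 8 * (q:ℝ) / (n:ℝ) ^ 2) ≤ 8 * (q:ℝ) ^ 2 / (n:ℝ) ^ 2 := by
    calc _ ≤ ∑ _j : Fin q, 8 * (q:ℝ) / (n:ℝ) ^ 2 := Finset.sum_le_sum_of_subset_of_nonneg (Finset.subset_univ _) (fun _ _ _ => by positivity)
      _ = _ := by simp; ring
  have h7 : 4 * (q:ℝ) / n ^ 2 ≤ 4 * q ^ 2 / n ^ 2 := by gcongr; nlinarith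
  have h8 : 12 * (q:ℝ) ^ 2 / n ^ 2 = 4 * q ^ 2 / n ^ 2 + 8 * q ^ 2 / n ^ 2 := by ring
  linarith


lemma bracket {c1 c0 : ℝ} (h1 : 0 < c1) (h0 : 0 < c0) : ∃ L c2 : ℝ, 0 < c2 ∧ ∀ u v : ℝ, c0 ≤ v → v ≤ 1 →
    c2 ≤ c1 * (u - L) ^ 2 / (1 + u ^ 2) + u * v / (1 + u ^ 2) ^ 2 := by
  set L : ℝ := 1 + 1 / c1 with hL
  have hL1 : 1 ≤ L := by rw [hL]; have : 0 < 1 / c1 := by positivity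
                         linarith
  have hcL : c1 + 1 ≤ c1 * L ^ 2 := by
    have : c1 * L = c1 + 1 := by rw [hL]; field_simp
    nlinarith
  refine ⟨L, min (c1 / 13) (c0 * (L / 2) / (1 + (3 * L / 2) ^ 2) ^ 2), by positivity, ?_⟩
  intro u v hv hv1
  have hP : 0 < 1 + u ^ 2 := by positivity
  rcases le_or_gt u 0 with hu | hu
  · refine (min_le_left _ _).trans ?_
    have e : c1 * (u - L) ^ 2 / (1 + u ^ 2) + u * v / (1 + u ^ 2) ^ 2 =
      (c1 * (u - L) ^ 2 * (1 + u ^ 2) + u * v) / (1 + u ^ 2) ^ 2 := by field_simp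
    rw [e, le_div_iff₀ (by positivity)]
    have a1 : c1 * (1 + u ^ 2) + 1 ≤ c1 * (u - L) ^ 2 := by nlinarith [mul_nonneg h1.le (mul_nonneg (neg_nonneg.mpr hu) (by linarith : 0 ≤ L))]
    have a2 : -(1 + u ^ 2) ≤ u * v := by nlinarith [sq_nonneg (u + 1)]
    have a3 : (c1 * (1 + u ^ 2) + 1) * (1 + u ^ 2) ≤ c1 * (u - L) ^ 2 * (1 + u ^ 2) :=
      mul_le_mul_of_nonneg_right a1 hP.le
    have a4 : 0 < c1 * (1 + u ^ 2) ^ 2 := by positivity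
    nlinarith
  · have hs : 0 ≤ u * v / (1 + u ^ 2) ^ 2 := by
      have : 0 < v := by linarith
      positivity
    have hf : 0 ≤ c1 * (u - L) ^ 2 / (1 + u ^ 2) := by positivity
    rcases le_or_gt u (L / 2) with h2 | h2
    · refine (min_le_left _ _).trans ?_
      have : c1 / 13 ≤ c1 * (u - L) ^ 2 / (1 + u ^ 2) := by
        rw [le_div_iff₀ hP]
        have : (1 + u ^ 2) ≤ 13 * (u - L) ^ 2 := by nlinarith
        nlinarith
      linarith
    · rcases le_or_gt (3 * L / 2) u with h3 | h3
      · refine (min_le_left _ _).trans ?_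
        have : c1 / 13 ≤ c1 * (u - L) ^ 2 / (1 + u ^ 2) := by
          rw [le_div_iff₀ hP]
          have : (1 + u ^ 2) ≤ 13 * (u - L) ^ 2 := by nlinarith
          nlinarith
        linarith
      · refine (min_le_right _ _).trans ?_
        have : c0 * (L / 2) / (1 + (3 * L / 2) ^ 2) ^ 2 ≤ u * v / (1 + u ^ 2) ^ 2 := by
          have hv0 : 0 < v := by linarith
          apply div_le_div₀ (by positivity)
          · nlinarith
          · positivity
          · have : u ^ 2 ≤ (3 * L / 2) ^ 2 := pow_le_pow_left₀ hu.le h3.le 2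
            exact pow_le_pow_left₀ hP.le (by linarith) 2
        linarith

lemma drift_up {q n : ℕ} (hq : 3 ≤ q) (hn0 : 0 < n) (hn : 2 * q ≤ n) {β : ℝ} (hβ : 0 ≤ β) (hβs : β ≤ betaS q)
    (σ : Fin n → Fin q) (k : Fin q) (hx : 1 / (q:ℝ) ≤ frac σ k) :
    mm β σ k ≤ Dfun q (betaS q) (frac σ k) + 4 * q / n := by
  have hb : 2 * β ≤ q := by linarith [betaC_lt hq, betaS_le hq]
  have h1 := (abs_le.mp (mm_sg hβ hb hn hn0 σ k)).2
  have h2 := sg_le hq hn0 β σ k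
  have h3 := Lf_mono_beta hq hβs hx
  rw [Dfun_eq]
  linarith

lemma TT_hh {q n : ℕ} (hq : 3 ≤ q) (hn0 : 0 < n) {β : ℝ}
    (σ : Fin n → Fin q) (k : Fin q) {ν a L : ℝ} (hν : 0 < ν) (hn : ν ^ 3 = n) :
    TT β (fun τ => 1 + Real.pi / 2 + Real.arctan (ν * (frac τ k - a) + L)) σ ≤
      1 + Real.pi / 2 + Real.arctan (ν * (frac σ k - a) + L) +
      (mm β σ k / (1 + (ν * (frac σ k - a) + L) ^ 2) / ν ^ 2 -
       (ν * (frac σ k - a) + L) * vv β σ k / (1 + (ν * (frac σ k - a) + L) ^ 2) ^ 2 / ν ^ 4) + 7 / ν ^ 6 := by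
  set u := ν * (frac σ k - a) + L with hu
  have := step_le hn0 β σ k (fun x => 1 + Real.pi / 2 + Real.arctan (ν * (x - a) + L)) (ν / (1 + u ^ 2))
    (- u * ν ^ 2 / (1 + u ^ 2) ^ 2) (7 / ν ^ 6) ?_
  · refine this.trans (le_of_eq ?_)
    rw [← hn, ← hu]
    field_simp
    ring
  · intro h hh
    have e : ν * (frac σ k + h - a) + L = u + ν * h := by rw [hu]; ring
    simp only [e, ← hu]
    have t := (abs_le.mp (arctan_taylor u (ν * h))).2
    have b : |ν * h| ≤ 1 / ν ^ 2 := by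
      rw [abs_mul, abs_of_pos hν]
      calc _ ≤ ν * (1 / n) := by gcongr
        _ = _ := by rw [← hn]; field_simp
    have b3 : 7 * |ν * h| ^ 3 ≤ 7 / ν ^ 6 := by
      calc _ ≤ 7 * (1 / ν ^ 2) ^ 3 := by gcongr
        _ = _ := by field_simp
    have e1 : ν * h / (1 + u ^ 2) = ν / (1 + u ^ 2) * h := by ring
    have e2 : - u * ν ^ 2 / (1 + u ^ 2) ^ 2 * h ^ 2 = - (u * (ν * h) ^ 2 / (1 + u ^ 2) ^ 2) := by ring
    rw [e2, ← e1]
    linarith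

lemma TT_ww {q n : ℕ} (hn0 : 0 < n) {β : ℝ}
    (σ : Fin n → Fin q) (k : Fin q) {K b : ℝ} (hK : 0 ≤ K) :
    TT β (fun τ => K * (max (frac τ k - b) 0) ^ 2) σ ≤
      K * (max (frac σ k - b) 0) ^ 2 + (2 * K * max (frac σ k - b) 0) * mm β σ k / n + K * vv β σ k / n ^ 2 := by
  have := step_le hn0 β σ k (fun x => K * (max (x - b) 0) ^ 2) (2 * K * max (frac σ k - b) 0) K 0 ?_
  · simpa using this
  · intro h hh
    have key : (max (frac σ k + h - b) 0) ^ 2 ≤ (max (frac σ k - b) 0) ^ 2 + 2 * max (frac σ k - b) 0 * h + h ^ 2 := by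
      set z := frac σ k - b with hz
      have e : frac σ k + h - b = z + h := by rw [hz]; ring
      rw [e]
      have : (max z 0) ^ 2 + 2 * max z 0 * h + h ^ 2 = (max z 0 + h) ^ 2 := by ring
      rw [this]
      rcases le_total (z + h) 0 with h1 | h1
      · rw [max_eq_right h1]; simp; positivity
      · rw [max_eq_left h1]
        apply pow_le_pow_left₀ h1
        linarith [le_max_left z 0]
    nlinarith [mul_le_mul_of_nonneg_left key hK]

set_option maxHeartbeats 1000000 in
theorem lyap {q : ℕ} (hq : 3 ≤ q) {ρ : ℝ} (hρ : 0 < ρ) : ∃ lam C ν0 : ℝ, 0 < lam ∧ 0 < C ∧ 1 ≤ ν0 ∧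
    ∀ (n : ℕ) (ν : ℝ), ν0 ≤ ν → ν ^ 3 = n → ∀ β : ℝ, 0 ≤ β → β ≤ betaS q → ∀ k : Fin q,
      lam / ν ^ 4 ≤ 1 ∧ 
      ∃ Ψ : (Fin n → Fin q) → ℝ, (∀ σ, 0 ≤ Ψ σ ∧ Ψ σ ≤ 5) ∧
        (∀ σ, TT β Ψ σ ≤ (1 - lam / ν ^ 4) * Ψ σ + C / ν ^ 6) ∧
        (∀ σ, 1 / (q:ℝ) + ρ ≤ frac σ k → 1 ≤ Ψ σ) := by
  have hQ : (3:ℝ) ≤ q := by exact_mod_cast hq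
  obtain ⟨a, c, C', ha, ha1, hc, hC', hD, -⟩ := spin hq
  set z1 := (a - 1 / (q:ℝ)) / 2 with hz1
  have hz1p : 0 < z1 := by rw [hz1]; linarith
  set r := min ρ (z1 / 3) with hr
  have hrp : 0 < r := by positivity
  obtain ⟨L, c2, hc2, hbr⟩ := bracket (c1 := c * r) (c0 := Real.exp (-(2 * q)) / q) (by positivity) (by positivity)
  set c3 := c * z1 ^ 2 with hc3
  have hc3p : 0 < c3 := by positivity
  set K := 1 / r ^ 2 with hK
  have hKp : 0 < K := by positivity
  set lam := min (c2 / 10) (2 * c3) with hlam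
  have hlamp : 0 < lam := by positivity
  refine ⟨lam, K * (8 * q + 1), max (2 * q + 1) (max ((8 * q + 14) / c2) lam), hlamp, by positivity, ?_, ?_⟩
  · exact le_max_of_le_left (by linarith)
  intro n ν hν0 hn β hβ hβs k
  have hν1 : 2 * (q:ℝ) + 1 ≤ ν := (le_max_left _ _).trans hν0
  have hν2 : (8 * q + 14) / c2 ≤ ν := (le_max_left _ _).trans ((le_max_right _ _).trans hν0)
  have hν3 : lam ≤ ν := (le_max_right _ _).trans ((le_max_right _ _).trans hν0)
  have hν : 0 < ν := by linarith
  have hνone : 1 ≤ ν := by linarith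
  have hνn : ν ≤ n := by rw [← hn]; exact le_self_pow₀ hνone (by norm_num)
  have hnR : 0 < (n:ℝ) := by linarith
  have hn0 : 0 < n := by exact_mod_cast hnR
  have hnq : 2 * q ≤ n := by
    have : 2 * (q:ℝ) ≤ n := by linarith
    exact_mod_cast this
  have hbq : 2 * β ≤ q := by linarith [betaC_lt hq, betaS_le hq]
  have hν4 : ν ≤ ν ^ 4 := le_self_pow₀ hνone (by norm_num)
  have hl1 : lam / ν ^ 4 ≤ 1 := by
    rw [div_le_one (by positivity)]; linarith
  refine ⟨hl1, ?_⟩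
  have hpi := Real.pi_le_four
  have hpi0 := Real.pi_pos
  set H : (Fin n → Fin q) → ℝ := fun τ => 1 + Real.pi / 2 + Real.arctan (ν * (frac τ k - a) + L) with hH
  set W : (Fin n → Fin q) → ℝ := fun τ => K * (max (frac τ k - 1 / q) 0) ^ 2 with hW
  have hHb : ∀ σ, 1 ≤ H σ ∧ H σ ≤ 5 := by
    intro σ
    have h1 := Real.neg_pi_div_two_lt_arctan (ν * (frac σ k - a) + L)
    have h2 := Real.arctan_lt_pi_div_two (ν * (frac σ k - a) + L)
    simp only [hH]
    constructor <;> linarith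
  have hW0 : ∀ σ, 0 ≤ W σ := fun σ => by simp only [hW]; positivity
  have hDx : ∀ σ : Fin n → Fin q, 1 / (q:ℝ) ≤ frac σ k → mm β σ k ≤ -c * (frac σ k - a) ^ 2 * (frac σ k - 1 / q) + 4 * q / n := by
    intro σ hx
    have := drift_up hq hn0 hnq hβ hβs σ k hx
    have := hD _ ⟨hx, frac_le hn0 σ k⟩
    linarith
  refine ⟨fun σ => min (H σ) (W σ), ?_, ?_, ?_⟩
  · intro σ
    exact ⟨le_min (by linarith [(hHb σ).1]) (hW0 σ), (min_le_left _ _).trans (hHb σ).2⟩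
  · intro σ
    simp only
    rcases le_or_gt (W σ) (H σ) with hWH | hWH
    · -- W active
      rw [min_eq_right hWH]
      refine (TT_mono β (g := W) (fun σ => min_le_right _ _) σ).trans ?_
      refine (TT_ww hn0 σ k hKp.le).trans ?_
      set z := max (frac σ k - 1 / q) 0 with hz
      have hz0 : 0 ≤ z := le_max_right _ _
      have hWz : W σ = K * z ^ 2 := rfl
      have hzz : z ≤ z1 := by
        have h5 : K * z ^ 2 ≤ 5 := by rw [← hWz]; exact hWH.trans (hHb σ).2
        rw [hK, one_div, inv_mul_le_iff₀ (by positivity)] at h5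
        have : r ≤ z1 / 3 := min_le_right _ _
        by_contra hc
        push Not at hc
        nlinarith
      have hmm : z * mm β σ k ≤ z * (-c3 * z + 4 * q / n) := by
        rcases hz0.eq_or_lt with h0 | h0
        · rw [← h0]; simp
        · have hx : z = frac σ k - 1 / q := by
            rcases max_choice (frac σ k - 1 / (q:ℝ)) 0 with h | h
            · exact h
            · rw [← hz] at h; linarith
          apply mul_le_mul_of_nonneg_left _ hz0
          have h1 := hDx σ (by linarith)
          rw [← hx] at h1
          have h2 : z1 ^ 2 ≤ (frac σ k - a) ^ 2 := by
            have : z1 ≤ a - frac σ k := by rw [hz1] at *; linarith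
            nlinarith
          have h3 : c3 * z ≤ c * (frac σ k - a) ^ 2 * z := by
            rw [hc3]; gcongr
          linarith
      have hz1' : z ≤ 1 := by
        apply max_le _ zero_le_one
        have : 0 < 1 / (q:ℝ) := by positivity
        linarith [frac_le hn0 σ k]
      have hv := vv_le hn0 β σ k
      have e0 : 1 / (n:ℝ) = 1 / ν ^ 3 := by rw [hn]
      have e1 : 1 / (n:ℝ) ^ 2 = 1 / ν ^ 6 := by rw [← hn]; ring
      have s1 : 2 * K * z * mm β σ k / n ≤ - (2 * c3 / n) * (K * z ^ 2) + K * (8 * q) * (1 / n ^ 2) := by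
        have : 2 * K / n * (z * mm β σ k) ≤ 2 * K / n * (z * (-c3 * z + 4 * q / n)) :=
          mul_le_mul_of_nonneg_left hmm (by positivity)
        have e2 : 2 * K / n * (z * (-c3 * z + 4 * q / n)) = - (2 * c3 / n) * (K * z ^ 2) + z * (K * (8 * q) * (1 / n ^ 2)) := by
          field_simp; ring
        rw [e2] at this
        have e3 : 2 * K * z * mm β σ k / n = 2 * K / n * (z * mm β σ k) := by ring
        rw [e3]
        have : z * (K * (8 * q) * (1 / (n:ℝ) ^ 2)) ≤ 1 * (K * (8 * q) * (1 / n ^ 2)) := by gcongr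
        linarith
      have s2 : K * vv β σ k / n ^ 2 ≤ K * (1 / n ^ 2) := by
        rw [mul_div_assoc]
        gcongr
      have s3 : lam / ν ^ 4 ≤ 2 * c3 / n := by
        rw [← hn]
        apply div_le_div₀ (by positivity) (min_le_right _ _) (by positivity)
        exact pow_le_pow_right₀ hνone (by norm_num)
      have s4 : lam / ν ^ 4 * (K * z ^ 2) ≤ 2 * c3 / n * (K * z ^ 2) := by gcongr
      rw [hWz]
      have e5 : K * (8 * q + 1) / ν ^ 6 = K * (8 * q) * (1 / n ^ 2) + K * (1 / n ^ 2) := by rw [e1]; ring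
      rw [e5]
      linarith
    · rw [min_eq_left hWH.le]
      refine (TT_mono β (g := H) (fun σ => min_le_left _ _) σ).trans ?_
      refine (TT_hh hq hn0 σ k hν hn).trans ?_
      set u := ν * (frac σ k - a) + L with hu
      have hHu : H σ = 1 + Real.pi / 2 + Real.arctan u := rfl
      rw [← hHu]
      have hx : r ≤ frac σ k - 1 / q := by
        have h1 : 1 < W σ := (hHb σ).1.trans_lt hWH
        simp only [hW] at h1
        rw [hK, one_div, ← div_eq_inv_mul, one_lt_div (by positivity)] at h1
        have h2 : r < max (frac σ k - 1 / q) 0 := lt_of_pow_lt_pow_left₀ 2 (le_max_right _ _) h1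
        rcases max_choice (frac σ k - 1 / (q:ℝ)) 0 with h | h
        · rw [h] at h2; exact h2.le
        · rw [h] at h2; linarith
      have hm : mm β σ k ≤ -(c * r) * (frac σ k - a) ^ 2 + 4 * q / n := by
        have h1 := hDx σ (by linarith)
        have : (c * (frac σ k - a) ^ 2) * r ≤ (c * (frac σ k - a) ^ 2) * (frac σ k - 1 / q) := by gcongr
        linarith
      have hb := hbr u (vv β σ k) (vv_ge hq hβ hbq hn0 σ k) (vv_le hn0 β σ k)
      have hy : frac σ k - a = (u - L) / ν := by rw [hu]; field_simp; ring
      have hP : 0 < 1 + u ^ 2 := by positivity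
      have hP1 : 1 ≤ 1 + u ^ 2 := by nlinarith [sq_nonneg u]
      have s1 : mm β σ k / (1 + u ^ 2) / ν ^ 2 ≤ - (c * r * (u - L) ^ 2 / (1 + u ^ 2)) / ν ^ 4 + 4 * q / ν ^ 5 := by
        have h1 : mm β σ k / (1 + u ^ 2) / ν ^ 2 ≤ (-(c * r) * (frac σ k - a) ^ 2 + 4 * q / n) / (1 + u ^ 2) / ν ^ 2 := by
          gcongr
        have h2 : (-(c * r) * (frac σ k - a) ^ 2 + 4 * q / n) / (1 + u ^ 2) / ν ^ 2 =
          - (c * r * (u - L) ^ 2 / (1 + u ^ 2)) / ν ^ 4 + (4 * q / ν ^ 5) / (1 + u ^ 2) := by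
          rw [hy, ← hn]; field_simp
        have h3 : (4 * q / ν ^ 5) / (1 + u ^ 2) ≤ 4 * q / ν ^ 5 := div_le_self (by positivity) hP1
        linarith
      have s2 : c2 / ν ^ 4 ≤ (c * r * (u - L) ^ 2 / (1 + u ^ 2) + u * vv β σ k / (1 + u ^ 2) ^ 2) / ν ^ 4 := by gcongr
      rw [add_div] at s2
      have s3 : 4 * q / ν ^ 5 + 7 / ν ^ 6 ≤ (c2 / 2) / ν ^ 4 := by
        have : 7 / ν ^ 6 ≤ 7 / ν ^ 5 := by
          gcongr
          norm_num
        have h1 : 4 * q / ν ^ 5 + 7 / ν ^ 5 = ((4 * q + 7) / ν) / ν ^ 4 := by field_simp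
        have h2 : (4 * q + 7) / ν ≤ c2 / 2 := by
          rw [div_le_iff₀ hc2] at hν2
          rw [div_le_iff₀ hν]
          linarith
        have h3 : ((4 * q + 7) / ν) / ν ^ 4 ≤ (c2 / 2) / ν ^ 4 := by gcongr
        linarith
      have s4 : lam / ν ^ 4 * H σ ≤ (c2 / 2) / ν ^ 4 := by
        have h1 : lam / ν ^ 4 * H σ ≤ (c2 / 10) / ν ^ 4 * 5 := by
          gcongr
          · linarith [(hHb σ).1]
          · exact min_le_left _ _
          · exact (hHb σ).2
        have : (c2 / 10) / ν ^ 4 * 5 = (c2 / 2) / ν ^ 4 := by ring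
        linarith
      have s5 : 0 ≤ K * (8 * q + 1) / ν ^ 6 := by positivity
      have e6 : -(c * r * (u - L) ^ 2 / (1 + u ^ 2)) / ν ^ 4 = - ((c * r * (u - L) ^ 2 / (1 + u ^ 2)) / ν ^ 4) := by ring
      have e7 : c2 / ν ^ 4 = (c2 / 2) / ν ^ 4 + (c2 / 2) / ν ^ 4 := by ring
      linarith
  · intro σ hx
    apply le_min (hHb σ).1
    simp only [hW]
    rw [max_eq_left (by linarith), hK, one_div, ← div_eq_inv_mul, one_le_div (by positivity)]
    have : r ≤ ρ := min_le_left _ _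
    apply pow_le_pow_left₀ hrp.le
    linarith

lemma TTi_lyap {q n : ℕ} (hn : 0 < n) (β : ℝ) {θ δ : ℝ} (hθ : 0 < θ) (hθ1 : θ ≤ 1) (hδ : 0 ≤ δ) {Ψ : (Fin n → Fin q) → ℝ}
    (h : ∀ σ, TT β Ψ σ ≤ (1 - θ) * Ψ σ + δ) (t : ℕ) (σ : Fin n → Fin q) :
    (TT β)^[t] Ψ σ ≤ (1 - θ) ^ t * Ψ σ + δ / θ := by
  have key : ∀ σ, (TT β)^[t] Ψ σ ≤ (1 - θ) ^ t * Ψ σ + δ / θ * (1 - (1 - θ) ^ t) := by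
    induction t with
    | zero => intro σ; simp
    | succ t ih =>
      intro σ
      rw [Function.iterate_succ_apply']
      have h1 := TT_mono β (f := (TT β)^[t] Ψ) (g := fun σ => (1 - θ) ^ t * Ψ σ + δ / θ * (1 - (1 - θ) ^ t)) ih σ
      refine h1.trans ?_
      rw [TT_add, TT_smul, TT_const hn]
      have h2 := mul_le_mul_of_nonneg_left (h σ) (pow_nonneg (by linarith : 0 ≤ 1 - θ) t)
      have e : δ / θ * θ = δ := by field_simp
      have e2 : (1 - θ) ^ t * δ = (1 - θ) ^ t * (δ / θ * θ) := by rw [e]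
      rw [pow_succ]
      nlinarith
  refine (key σ).trans ?_
  have : 0 ≤ δ / θ * (1 - θ) ^ t := mul_nonneg (by positivity) (pow_nonneg (by linarith) t)
  linarith

lemma mu_lyap {q n : ℕ} (hn : 0 < n) (hq : 0 < q) (β : ℝ) {θ δ : ℝ} (hθ : 0 < θ) {Ψ : (Fin n → Fin q) → ℝ}
    (h : ∀ σ, TT β Ψ σ ≤ (1 - θ) * Ψ σ + δ) :
    ∑ σ, pottsMeasure q n β σ * Ψ σ ≤ δ / θ := by
  have h1 : ∑ σ, pottsMeasure q n β σ * TT β Ψ σ ≤ ∑ σ, pottsMeasure q n β σ * ((1 - θ) * Ψ σ + δ) :=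
    Finset.sum_le_sum (fun σ _ => mul_le_mul_of_nonneg_left (h σ) (mu_pos β σ).le)
  rw [mu_TT hn] at h1
  have h2 : ∑ σ, pottsMeasure q n β σ * ((1 - θ) * Ψ σ + δ) = (1 - θ) * ∑ σ, pottsMeasure q n β σ * Ψ σ + δ := by
    simp_rw [mul_add, Finset.sum_add_distrib, ← Finset.sum_mul]
    rw [mu_sum β (fun _ => ⟨0, hq⟩), Finset.mul_sum, one_mul]
    congr 1
    apply Finset.sum_congr rfl
    intros; ring
  rw [h2] at h1
  rw [le_div_iff₀ hθ]
  linarith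


lemma couple {q : ℕ} (hq : 0 < q) (p p' X Y : Fin q → ℝ) (hp : ∀ k, 0 ≤ p k) (hp' : ∀ k, 0 ≤ p' k)
    (h1 : ∑ k, p k = 1) (h1' : ∑ k, p' k = 1) (D r : ℝ) 
    (hd : ∀ k, X k - Y k ≤ D) (ho : ∀ k l, X k - Y l ≤ D + r) :
    ∑ k, p k * X k - ∑ k, p' k * Y k ≤ D + r * ∑ k, max (p k - p' k) 0 := by
  obtain ⟨l0, -, hl0⟩ := Finset.exists_min_image (Finset.univ : Finset (Fin q)) Y ⟨⟨0, hq⟩, Finset.mem_univ _⟩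
  have key : ∀ k, p k * X k - p' k * Y k ≤ min (p k) (p' k) * D + max (p k - p' k) 0 * (D + r + Y l0) - (p' k - p k + max (p k - p' k) 0) * Y l0 := by
    intro k
    have hdk := hd k
    have hok := ho k l0
    have hY := hl0 k (Finset.mem_univ _)
    rcases le_total (p k) (p' k) with h | h
    · rw [min_eq_left h, max_eq_right (by linarith)]
      nlinarith [mul_le_mul_of_nonneg_left hdk (hp k), mul_le_mul_of_nonneg_left hY (by linarith : 0 ≤ p' k - p k)]
    · rw [min_eq_right h, max_eq_left (by linarith)]
      nlinarith [mul_le_mul_of_nonneg_left hdk (hp' k), mul_le_mul_of_nonneg_left hok (by linarith : 0 ≤ p k - p' k)]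
  have e : ∀ k, min (p k) (p' k) = p k - max (p k - p' k) 0 := by
    intro k
    rcases le_total (p k) (p' k) with h | h
    · rw [min_eq_left h, max_eq_right (by linarith)]; ring
    · rw [min_eq_right h, max_eq_left (by linarith)]; ring
  have := Finset.sum_le_sum (fun k (_ : k ∈ Finset.univ) => key k)
  simp only [e] at this
  rw [Finset.sum_sub_distrib] at this
  refine this.trans (le_of_eq ?_)
  have e2 : ∀ k, (p k - max (p k - p' k) 0) * D + max (p k - p' k) 0 * (D + r + Y l0) - (p' k - p k + max (p k - p' k) 0) * Y l0
    = p k * (D + Y l0) - p' k * Y l0 + max (p k - p' k) 0 * r := by intro k; ring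
  simp only [e2]
  rw [Finset.sum_add_distrib, Finset.sum_sub_distrib, ← Finset.sum_mul, ← Finset.sum_mul, ← Finset.sum_mul, h1, h1']
  ring

lemma smax_const {q : ℕ} (c : ℝ) (k : Fin q) : smax (fun _ : Fin q => c) k = 1 / q := by
  unfold smax
  simp
  field_simp

lemma softTV {q : ℕ} (hq : 0 < q) (a b : Fin q → ℝ) (c κ : ℝ) (hκ0 : 0 ≤ κ) (hκ : 2 * κ ≤ 1)
    (ha : ∀ j, |a j - c| ≤ κ) (hb : ∀ j, |b j - c| ≤ κ) (hs : ∑ j, (b j - a j) = 0) :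
    ∑ k, max (smax a k - smax b k) 0 ≤ (1 / (2 * q) + 8 * κ) * ∑ j, |b j - a j| := by
  have hqR : (0:ℝ) < q := by exact_mod_cast hq
  set v : Fin q → ℝ := fun j => b j - a j with hv
  have k0 : Fin q := ⟨0, hq⟩
  have hpb : ∀ j, |smax a j - 1 / q| ≤ 4 * κ := by
    intro j
    rw [← smax_const c j]
    exact smax_perturb' a _ κ hκ0 hκ ha j
  have hvb : ∀ j, |v j| ≤ 2 * κ := by
    intro j
    have h1 := abs_le.mp (ha j); have h2 := abs_le.mp (hb j)
    simp only [hv]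
    rw [abs_le]; constructor <;> linarith
  set M := ∑ j, smax a j * Real.exp (v j) with hM
  have hMpos : 0 < M := Finset.sum_pos (fun j _ => mul_pos (smax_pos a j) (Real.exp_pos _)) ⟨k0, Finset.mem_univ _⟩
  have hbM : ∀ k, smax b k = smax a k * Real.exp (v k - Real.log M) := by
    intro k
    rw [Real.exp_sub, Real.exp_log hMpos, hM]
    unfold smax
    have hA := smax_den_pos a k
    have hB := smax_den_pos b k
    have e1 : ∀ j, Real.exp (a j) / (∑ i, Real.exp (a i)) * Real.exp (v j) = Real.exp (b j) / (∑ i, Real.exp (a i)) := by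
      intro j
      have : b j = a j + v j := by simp [hv]
      rw [this, Real.exp_add]; ring
    simp_rw [e1]
    rw [← Finset.sum_div, div_mul_div_comm, ← Real.exp_add]
    have : a k + v k = b k := by simp [hv]
    rw [this]
    field_simp
  set m := ∑ j, smax a j * v j with hm
  set s := ∑ j, smax a j * v j ^ 2 with hsd
  have hs0 : 0 ≤ s := Finset.sum_nonneg (fun j _ => mul_nonneg (smax_pos a j).le (sq_nonneg _))
  have hlog : Real.log M ≤ m + s := by
    have h1 := Real.log_le_sub_one_of_pos hMpos
    have h2 : M - 1 ≤ m + s := by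
      rw [hM, hm, hsd, ← smax_sum a k0, ← Finset.sum_sub_distrib, ← Finset.sum_add_distrib]
      apply Finset.sum_le_sum
      intro j _
      have h3 := (abs_le.mp (Real.abs_exp_sub_one_sub_id_le (x := v j) ((hvb j).trans hκ))).2
      nlinarith [mul_le_mul_of_nonneg_left h3 (smax_pos a j).le]
    linarith
  set N := ∑ j, |v j| with hN
  have hN0 : 0 ≤ N := Finset.sum_nonneg (fun j _ => abs_nonneg _)
  have hmN : |m| ≤ 4 * κ * N := by
    have : m = ∑ j, (smax a j - 1 / q) * v j := by
      simp_rw [sub_mul, Finset.sum_sub_distrib, ← Finset.mul_sum]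
      rw [hs]; simp [hm]
    rw [this, hN, Finset.mul_sum]
    refine (Finset.abs_sum_le_sum_abs _ _).trans (Finset.sum_le_sum fun j _ => ?_)
    rw [abs_mul]
    exact mul_le_mul_of_nonneg_right (hpb j) (abs_nonneg _)
  have hsN : s ≤ 2 * κ * N := by
    rw [hsd, hN, Finset.mul_sum]
    refine Finset.sum_le_sum fun j _ => ?_
    rw [← sq_abs]
    nlinarith [hvb j, abs_nonneg (v j), smax_le_one a j, smax_pos a j, mul_nonneg (abs_nonneg (v j)) (sub_nonneg.mpr (hvb j)),
      mul_nonneg (sub_nonneg.mpr (smax_le_one a j)) (sq_nonneg |v j|)]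
  have hneg : ∀ k, max (smax a k - smax b k) 0 ≤ smax a k * (|m| + s) + (1 / q + 4 * κ) * ((|v k| - v k) / 2) := by
    intro k
    have hp := smax_pos a k
    have hq1 : smax a k ≤ 1 / q + 4 * κ := by linarith [(abs_le.mp (hpb k)).2]
    have hvk : 0 ≤ (|v k| - v k) / 2 := by linarith [le_abs_self (v k)]
    have hvk' : - v k ≤ (|v k| - v k) := by linarith [abs_nonneg (v k)]
    have hvk2 : - v k ≤ (|v k| - v k) / 2 := by linarith [neg_abs_le (v k)]
    have t0 : smax a k * ((|v k| - v k) / 2) ≤ (1 / q + 4 * κ) * ((|v k| - v k) / 2) := by gcongr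
    apply max_le
    · rw [hbM k]
      have h1 := Real.add_one_le_exp (v k - Real.log M)
      have h2 := mul_le_mul_of_nonneg_left h1 hp.le
      have h3 : Real.log M - v k ≤ (|m| + s) + (|v k| - v k) / 2 := by linarith [le_abs_self m]
      have h4 := mul_le_mul_of_nonneg_left h3 hp.le
      nlinarith
    · have : 0 ≤ smax a k * (|m| + s) := mul_nonneg hp.le (by positivity)
      have : 0 ≤ smax a k * ((|v k| - v k) / 2) := mul_nonneg hp.le hvk
      linarith
  have := Finset.sum_le_sum (fun k (_ : k ∈ Finset.univ) => hneg k)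
  refine this.trans ?_
  rw [Finset.sum_add_distrib, ← Finset.sum_mul, smax_sum a k0, ← Finset.mul_sum, ← Finset.sum_div, Finset.sum_sub_distrib, hs]
  have e : 1 / (2 * (q:ℝ)) = 1 / q / 2 := by field_simp
  rw [e]
  change 1 * (|m| + s) + (1 / q + 4 * κ) * ((N - 0) / 2) ≤ _
  nlinarith

/-- Hamming distance -/
noncomputable def dH {q n : ℕ} (σ τ : Fin n → Fin q) : ℝ := ∑ w, (1 - ind (σ w) (τ w))

lemma dH_nonneg {q n : ℕ} (σ τ : Fin n → Fin q) : 0 ≤ dH σ τ :=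
  Finset.sum_nonneg (fun w _ => by linarith [ind_le_one (σ w) (τ w)])

lemma dH_le {q n : ℕ} (σ τ : Fin n → Fin q) : dH σ τ ≤ n := by
  calc dH σ τ ≤ ∑ w : Fin n, (1:ℝ) := Finset.sum_le_sum (fun w _ => by linarith [ind_nonneg (σ w) (τ w)])
    _ = n := by simp

lemma dH_update {q n : ℕ} (σ τ : Fin n → Fin q) (u : Fin n) (k l : Fin q) :
    dH (Function.update σ u k) (Function.update τ u l) = dH σ τ - (1 - ind (σ u) (τ u)) + (1 - ind k l) := by
  unfold dH
  rw [← Finset.add_sum_erase _ _ (Finset.mem_univ u), ← Finset.add_sum_erase (a := u) (s := Finset.univ) (fun w => (1 - ind (σ w) (τ w))) (Finset.mem_univ u)]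
  have : ∑ x ∈ Finset.univ.erase u, (1 - ind (Function.update σ u k x) (Function.update τ u l x))
      = ∑ x ∈ Finset.univ.erase u, (1 - ind (σ x) (τ x)) := by
    apply Finset.sum_congr rfl
    intro x hx
    rw [Function.update_of_ne (Finset.ne_of_mem_erase hx), Function.update_of_ne (Finset.ne_of_mem_erase hx)]
  rw [this]
  simp
  ring

lemma cnt_erase {q n : ℕ} (σ : Fin n → Fin q) (u : Fin n) (j : Fin q) :
    cnt σ j - ind (σ u) j = ∑ w ∈ Finset.univ.erase u, ind (σ w) j := by
  unfold cnt
  rw [← Finset.add_sum_erase _ _ (Finset.mem_univ u)]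
  unfold ind
  ring

lemma cnt_diff {q n : ℕ} (σ τ : Fin n → Fin q) (u : Fin n) :
    ∑ j, |(cnt τ j - ind (τ u) j) - (cnt σ j - ind (σ u) j)| ≤ 2 * dH σ τ := by
  have h1 : ∀ j, |(cnt τ j - ind (τ u) j) - (cnt σ j - ind (σ u) j)| ≤ ∑ w, |ind (τ w) j - ind (σ w) j| := by
    intro j
    rw [cnt_erase, cnt_erase, ← Finset.sum_sub_distrib]
    refine (Finset.abs_sum_le_sum_abs _ _).trans ?_
    exact Finset.sum_le_sum_of_subset_of_nonneg (Finset.erase_subset _ _) (fun _ _ _ => abs_nonneg _)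
  refine (Finset.sum_le_sum (fun j _ => h1 j)).trans ?_
  rw [Finset.sum_comm]
  unfold dH
  rw [Finset.mul_sum]
  apply Finset.sum_le_sum
  intro w _
  by_cases h : σ w = τ w
  · simp [h, ind]
  · calc ∑ j, |ind (τ w) j - ind (σ w) j| ≤ ∑ j, (ind (τ w) j + ind (σ w) j) := by
          apply Finset.sum_le_sum
          intro j _
          rw [abs_le]; constructor <;> linarith [ind_nonneg (τ w) j, ind_nonneg (σ w) j]
      _ = 2 := by rw [Finset.sum_add_distrib, sum_ind, sum_ind]; norm_num
      _ ≤ _ := by simp [ind, h]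

/-- near the disordered state -/
def near {q n : ℕ} (ρ : ℝ) (σ : Fin n → Fin q) : Prop := ∀ k, frac σ k ≤ 1 / (q:ℝ) + ρ

lemma near_lower {q n : ℕ} (hn0 : 0 < n) {ρ : ℝ} (hρ : 0 < ρ) {σ : Fin n → Fin q} (h : near ρ σ) (k : Fin q) :
    1 / (q:ℝ) - q * ρ ≤ frac σ k := by
  have h1 := sum_frac hn0 σ
  rw [← Finset.add_sum_erase _ _ (Finset.mem_univ k)] at h1
  have h2 : ∑ j ∈ Finset.univ.erase k, frac σ j ≤ ∑ j ∈ Finset.univ.erase k, (1 / (q:ℝ) + ρ) := Finset.sum_le_sum (fun j _ => h j)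
  have hq : 0 < q := Nat.lt_of_le_of_lt (Nat.zero_le _) k.2
  have hqR : (0:ℝ) < q := by exact_mod_cast hq
  rw [Finset.sum_const, Finset.card_erase_of_mem (Finset.mem_univ _), Finset.card_univ, Fintype.card_fin, nsmul_eq_mul, Nat.cast_sub (by omega)] at h2
  have e : ((q:ℝ) - (1:ℕ)) * (1 / q + ρ) = 1 - 1 / q + (q - 1) * ρ := by push_cast; field_simp
  rw [e] at h2
  linarith

lemma near_a {q n : ℕ} (hq : 3 ≤ q) (hn0 : 0 < n) {ρ : ℝ} (hρ : 0 < ρ) (hnρ : 1 / (n:ℝ) ≤ ρ) {β : ℝ} (hβ : 0 ≤ β) (hβq : 2 * β ≤ q) {σ : Fin n → Fin q} (h : near ρ σ)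
    (u : Fin n) (j : Fin q) : |2 * β / n * (cnt σ j - ind (σ u) j) - 2 * β / q| ≤ 2 * q ^ 2 * ρ := by
  have hQ : (3:ℝ) ≤ q := by exact_mod_cast hq
  have hnR : (0:ℝ) < n := by exact_mod_cast hn0
  have h1 := near_lower hn0 hρ h j
  have h2 := h j
  have e : 2 * β / n * (cnt σ j - ind (σ u) j) - 2 * β / q = 2 * β * (frac σ j - 1 / q - ind (σ u) j * (1 / n)) := by
    unfold frac; field_simp; ring
  rw [e, abs_mul, abs_of_nonneg (by linarith)]
  have h3 : |frac σ j - 1 / q - ind (σ u) j * (1 / n)| ≤ 2 * q * ρ := by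
    have h4 := ind_nonneg (σ u) j
    have h5 := ind_le_one (σ u) j
    have h6 : 0 ≤ ind (σ u) j * (1 / n) := by positivity
    have h7 : ind (σ u) j * (1 / n) ≤ 1 * ρ := by gcongr
    rw [abs_le]; constructor <;> nlinarith
  calc 2 * β * |frac σ j - 1 / q - ind (σ u) j * (1 / n)| ≤ q * (2 * q * ρ) := by gcongr
    _ = _ := by ring

lemma tv_near {q n : ℕ} (hq : 3 ≤ q) (hn0 : 0 < n) {ρ : ℝ} (hρ : 0 < ρ) (hnρ : 1 / (n:ℝ) ≤ ρ) {β : ℝ} (hβ : 0 ≤ β) (hβq : 2 * β ≤ q)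
    (hρ1 : 4 * q ^ 2 * ρ ≤ 1)
    {σ τ : Fin n → Fin q} (h : near ρ σ) (h' : near ρ τ) (u : Fin n) :
    ∑ k, max (gp β σ u k - gp β τ u k) 0 ≤ (2 * β / q + 32 * q ^ 3 * ρ) * dH σ τ / n := by
  have hQ : (3:ℝ) ≤ q := by exact_mod_cast hq
  have hnR : (0:ℝ) < n := by exact_mod_cast hn0
  have key := softTV (q := q) (by omega) (fun j => 2 * β / n * (cnt σ j - ind (σ u) j)) (fun j => 2 * β / n * (cnt τ j - ind (τ u) j))
    (2 * β / q) (2 * q ^ 2 * ρ) (by positivity) (by linarith) (near_a hq hn0 hρ hnρ hβ hβq h u) (near_a hq hn0 hρ hnρ hβ hβq h' u)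
    (by simp_rw [← mul_sub, ← Finset.mul_sum, Finset.sum_sub_distrib, sum_cnt, sum_ind]; ring)
  refine key.trans ?_
  have e : ∀ j, |2 * β / n * (cnt τ j - ind (τ u) j) - 2 * β / n * (cnt σ j - ind (σ u) j)| =
      2 * β / n * |(cnt τ j - ind (τ u) j) - (cnt σ j - ind (σ u) j)| := by
    intro j; rw [← mul_sub, abs_mul, abs_of_nonneg (by positivity)]
  simp_rw [e]
  rw [← Finset.mul_sum]
  have hd := dH_nonneg σ τ
  calc _ ≤ (1 / (2 * (q:ℝ)) + 8 * (2 * q ^ 2 * ρ)) * (2 * β / n * (2 * dH σ τ)) := by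
        gcongr
        exact cnt_diff σ τ u
    _ = (2 * β / q + 32 * q ^ 2 * (2 * β) * ρ) * dH σ τ / n := by field_simp; ring
    _ ≤ (2 * β / q + 32 * q ^ 2 * q * ρ) * dH σ τ / n := by gcongr
    _ = _ := by ring

lemma coupling {q n : ℕ} (hq : 3 ≤ q) (hn0 : 0 < n) {ρ c : ℝ} (hρ : 0 < ρ) (hnρ : 1 / (n:ℝ) ≤ ρ) {β : ℝ} (hβ : 0 ≤ β) (hβq : 2 * β ≤ q)
    (hρ1 : 4 * q ^ 2 * ρ ≤ 1) (hc : 2 * β / q + 32 * q ^ 3 * ρ ≤ 1 - c) (hc0 : 0 ≤ c) (hc1 : c ≤ 1)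
    (B : (Fin n → Fin q) → ℝ) (δ : ℝ) (hB0 : ∀ σ, 0 ≤ B σ) (hB : ∀ σ, TT β B σ ≤ B σ + δ) (hδ : 0 ≤ δ)
    (hB1 : ∀ σ, ¬ near ρ σ → 1 ≤ B σ) (g : (Fin n → Fin q) → ℝ) (hg : ∀ σ, 0 ≤ g σ ∧ g σ ≤ 1) (j : ℕ) :
    ∀ σ τ, (TT β)^[j] g σ - (TT β)^[j] g τ ≤ (1 - c / n) ^ j * dH σ τ + B σ + B τ + 2 * j * δ := by
  have hQ : (3:ℝ) ≤ q := by exact_mod_cast hq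
  have hnR : (0:ℝ) < n := by exact_mod_cast hn0
  have hcn : 0 ≤ 1 - c / n := by
    rw [sub_nonneg, div_le_one hnR]
    have : (1:ℝ) ≤ n := by exact_mod_cast hn0
    linarith
  have triv : ∀ j : ℕ, ∀ σ τ, 1 ≤ B σ + B τ →  (TT β)^[j] g σ - (TT β)^[j] g τ ≤ (1 - c / n) ^ j * dH σ τ + B σ + B τ + 2 * j * δ := by
    intro j σ τ h
    have h1 := TTi_mem hn0 β j hg σ
    have h2 := TTi_mem hn0 β j hg τ
    have h3 : 0 ≤ (1 - c / n) ^ j * dH σ τ := mul_nonneg (pow_nonneg hcn j) (dH_nonneg σ τ)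
    have h4 : 0 ≤ 2 * j * δ := by positivity
    linarith
  induction j with
  | zero =>
    intro σ τ
    by_cases h : σ = τ
    · subst h
      have := dH_nonneg σ σ
      simp
      linarith [hB0 σ]
    · have : 1 ≤ dH σ τ := by
        obtain ⟨w, hw⟩ := Function.ne_iff.mp h
        calc (1:ℝ) = 1 - ind (σ w) (τ w) := by simp [ind, hw]
          _ ≤ _ := Finset.single_le_sum (f := fun w => 1 - ind (σ w) (τ w)) (fun w _ => by linarith [ind_le_one (σ w) (τ w)]) (Finset.mem_univ w)
      simp
      linarith [hB0 σ, hB0 τ, (hg σ).2, (hg τ).1]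
  | succ j ih =>
    intro σ τ
    by_cases hσ : near ρ σ
    swap
    · exact triv (j + 1) σ τ (by linarith [hB1 σ hσ, hB0 τ])
    by_cases hτ : near ρ τ
    swap
    · exact triv (j + 1) σ τ (by linarith [hB1 τ hτ, hB0 σ])
    rw [Function.iterate_succ_apply']
    set G := (TT β)^[j] g with hG
    set r := (1 - c / n) ^ j with hr
    have hr0 : 0 ≤ r := pow_nonneg hcn j
    have hd0 := dH_nonneg σ τ
    have key : ∀ u : Fin n, ∑ k, gp β σ u k * (G (Function.update σ u k) - B (Function.update σ u k))
        - ∑ k, gp β τ u k * (G (Function.update τ u k) + B (Function.update τ u k)) ≤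
        (r * (dH σ τ - (1 - ind (σ u) (τ u))) + 2 * j * δ) + r * ((1 - c) * dH σ τ / n) := by
      intro u
      have := couple (q := q) (by omega) (gp β σ u) (gp β τ u) (fun k => G (Function.update σ u k) - B (Function.update σ u k))
        (fun k => G (Function.update τ u k) + B (Function.update τ u k)) (fun k => (gp_pos β σ u k).le) (fun k => (gp_pos β τ u k).le)
        (gp_sum β σ u) (gp_sum β τ u) (r * (dH σ τ - (1 - ind (σ u) (τ u))) + 2 * j * δ) r ?_ ?_
      · refine this.trans ?_
        gcongr
        refine (tv_near hq hn0 hρ hnρ hβ hβq hρ1 hσ hτ u).trans ?_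
        gcongr
      · intro k
        have := ih (Function.update σ u k) (Function.update τ u k)
        rw [dH_update, ind_self] at this
        linarith
      · intro k l
        have := ih (Function.update σ u k) (Function.update τ u l)
        rw [dH_update] at this
        have h2 : r * (dH σ τ - (1 - ind (σ u) (τ u)) + (1 - ind k l)) ≤ r * (dH σ τ - (1 - ind (σ u) (τ u)) + 1) := by
          gcongr
          linarith [ind_nonneg k l]
        linarith
    have hsum := mul_le_mul_of_nonneg_left (Finset.sum_le_sum (fun u (_ : u ∈ Finset.univ) => key u)) (by positivity : 0 ≤ 1 / (n:ℝ))
    rw [Finset.sum_sub_distrib, mul_sub] at hsum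
    have e1 : 1 / (n:ℝ) * ∑ u, ∑ k, gp β σ u k * (G (Function.update σ u k) - B (Function.update σ u k)) = TT β G σ - TT β B σ := by
      unfold TT EE
      rw [← mul_sub, ← Finset.sum_sub_distrib]
      simp_rw [← Finset.sum_sub_distrib, mul_sub]
    have e2 : 1 / (n:ℝ) * ∑ u, ∑ k, gp β τ u k * (G (Function.update τ u k) + B (Function.update τ u k)) = TT β G τ + TT β B τ := by
      unfold TT EE
      rw [← mul_add, ← Finset.sum_add_distrib]
      simp_rw [← Finset.sum_add_distrib, mul_add]
    have e3 : 1 / (n:ℝ) * ∑ u, ((r * (dH σ τ - (1 - ind (σ u) (τ u))) + 2 * j * δ) + r * ((1 - c) * dH σ τ / n))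
        = r * (1 - c / n) * dH σ τ + 2 * j * δ := by
      have : ∀ u : Fin n, ((r * (dH σ τ - (1 - ind (σ u) (τ u))) + 2 * j * δ) + r * ((1 - c) * dH σ τ / n)) =
        (r * dH σ τ + 2 * j * δ + r * ((1 - c) * dH σ τ / n)) - r * (1 - ind (σ u) (τ u)) := by intro u; ring
      simp_rw [this]
      rw [Finset.sum_sub_distrib, ← Finset.mul_sum]
      change 1 / (n:ℝ) * (_ - r * dH σ τ) = _
      simp
      field_simp
      ring
    rw [e1, e2, e3] at hsum
    rw [pow_succ, ← hr]
    push_cast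
    linarith [hB σ, hB τ]

lemma two_phase {q n : ℕ} (hn0 : 0 < n) (hq0 : 0 < q) {β : ℝ} (G B : (Fin n → Fin q) → ℝ) (K : ℝ)
    (h : ∀ σ τ, G σ - G τ ≤ K + B σ + B τ) (t : ℕ) (σ τ : Fin n → Fin q) :
    (TT β)^[t] G σ - (TT β)^[t] G τ ≤ K + (TT β)^[t] B σ + (TT β)^[t] B τ := by
  have h1 : ∀ (f : (Fin n → Fin q) → ℝ) (c : ℝ) σ, (TT β)^[t] (fun σ => f σ + c) σ = (TT β)^[t] f σ + c := by
    intro f c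
    induction t with
    | zero => intro σ; rfl
    | succ t ih =>
      intro σ
      rw [Function.iterate_succ_apply', Function.iterate_succ_apply']
      have : (TT β)^[t] (fun σ => f σ + c) = fun σ => (TT β)^[t] f σ + c := funext ih
      rw [this, TT_add, TT_const hn0]
  have h2 : ∀ (f g : (Fin n → Fin q) → ℝ) σ, (TT β)^[t] (fun σ => f σ + g σ) σ = (TT β)^[t] f σ + (TT β)^[t] g σ := by
    intro f g
    have := TTi_sum β (Finset.univ : Finset (Fin 2)) t (fun i => if i = 0 then f else g)
    intro σ
    have := this σ
    simpa [Fin.sum_univ_two] using this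
  have : Nonempty (Fin q) := ⟨⟨0, hq0⟩⟩
  obtain ⟨τ0, -, hτ0⟩ := Finset.exists_min_image (Finset.univ : Finset (Fin n → Fin q)) (fun τ => G τ + B τ) ⟨σ, Finset.mem_univ _⟩
  have a1 := TTi_mono β t (f := G) (g := fun σ => B σ + (K + (G τ0 + B τ0))) (fun σ => by linarith [h σ τ0]) σ
  have a2 := TTi_mono β t (f := fun _ => G τ0 + B τ0) (g := fun σ => G σ + B σ) (fun σ => hτ0 σ (Finset.mem_univ _)) τ
  rw [h1] at a1
  rw [TTi_const hn0, h2] at a2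
  linarith


lemma one_sub_pow_le {x : ℝ} (hx : x ≤ 1) (t : ℕ) : (1 - x) ^ t ≤ Real.exp (-(x * t)) := by
  have h : 1 - x ≤ Real.exp (-x) := by linarith [Real.add_one_le_exp (-x)]
  calc (1 - x) ^ t ≤ Real.exp (-x) ^ t := pow_le_pow_left₀ (by linarith) h t
    _ = _ := by rw [← Real.exp_nat_mul]; ring_nf

lemma exp_neg_le {x : ℝ} (hx : 0 < x) : Real.exp (-x) ≤ 1 / x := by
  rw [Real.exp_neg, ← one_div]
  apply one_div_le_one_div_of_le hx
  linarith [Real.add_one_le_exp x]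

lemma exp_neg_le4 {x : ℝ} (hx : 0 < x) : Real.exp (-x) ≤ 24 / x ^ 4 := by
  have := Real.pow_div_factorial_le_exp x hx.le 4
  rw [Real.exp_neg, inv_le_comm₀ (Real.exp_pos _) (by positivity)]
  refine le_trans (le_of_eq ?_) this
  simp [Nat.factorial]

set_option maxHeartbeats 1600000 in
theorem upper {q : ℕ} (hq : 3 ≤ q) {ε : ℝ} (hε : 0 < ε) : ∃ C ν0 : ℝ, 0 < C ∧ 1 ≤ ν0 ∧
    ∀ (n : ℕ) (ν : ℝ), ν0 ≤ ν → ν ^ 3 = n → ∀ β : ℝ, 0 ≤ β → β ≤ betaS q →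
      ∃ t : ℕ, (t:ℝ) ≤ C * ν ^ 4 ∧ glauberDist q n β t ≤ ε := by
  have hQ : (3:ℝ) ≤ q := by exact_mod_cast hq
  have hbs : 2 * betaS q < q := by linarith [betaC_lt hq, betaS_le hq]
  have hbs0 := betaS_nonneg hq
  set γ := 2 * betaS q / q with hγ
  have hγ1 : γ < 1 := by rw [hγ, div_lt_one (by linarith)]; exact hbs
  have hγ0 : 0 ≤ γ := by positivity
  set ρ := (1 - γ) / (64 * q ^ 3) with hρd
  have hρ : 0 < ρ := div_pos (by linarith) (by positivity)
  set c := (1 - γ) / 2 with hcd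
  have hc : 0 < c := by rw [hcd]; linarith
  obtain ⟨lam, C0, ν1, hlam, hC0, hν1, hly⟩ := lyap hq hρ
  set A := 20 * q / (ε * lam) with hA
  have hAp : 0 < A := by positivity
  set E0 := 24 / c ^ 4 + 4 * q * C0 + 2 * q * C0 / lam with hE0
  have hE0p : 0 < E0 := by positivity
  refine ⟨A + 4, max ν1 (max (1 / ρ) (2 * E0 / ε)), by positivity, le_max_of_le_left hν1, ?_⟩
  intro n ν hν0 hn β hβ hβs
  have hνa : ν1 ≤ ν := (le_max_left _ _).trans hν0
  have hνb : 1 / ρ ≤ ν := (le_max_left _ _).trans ((le_max_right _ _).trans hν0)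
  have hνc : 2 * E0 / ε ≤ ν := (le_max_right _ _).trans ((le_max_right _ _).trans hν0)
  have hνone : 1 ≤ ν := hν1.trans hνa
  have hν : 0 < ν := by linarith
  have hνn : ν ≤ n := by rw [← hn]; exact le_self_pow₀ hνone (by norm_num)
  have hnR : 0 < (n:ℝ) := by linarith
  have hn0 : 0 < n := by exact_mod_cast hnR
  have hν4 : 1 ≤ ν ^ 4 := one_le_pow₀ hνone
  have hnρ : 1 / (n:ℝ) ≤ ρ := by
    rw [div_le_iff₀ hρ] at hνb
    rw [div_le_iff₀ hnR]
    nlinarith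
  have hβq : 2 * β ≤ q := by linarith
  have hρ64 : 64 * q ^ 3 * ρ = 1 - γ := by rw [hρd]; field_simp
  have hρ1 : 4 * q ^ 2 * ρ ≤ 1 := by
    have : 4 * (q:ℝ) ^ 2 * ρ ≤ 64 * q ^ 3 * ρ := by
      have : (0:ℝ) ≤ q ^ 2 * ρ := by positivity
      nlinarith
    linarith
  have hcc : 2 * β / q + 32 * q ^ 3 * ρ ≤ 1 - c := by
    have : 2 * β / q ≤ γ := by rw [hγ]; gcongr
    rw [hcd]; linarith
  have hth : lam / ν ^ 4 ≤ 1 := (hly n ν hνa hn β hβ hβs ⟨0, by omega⟩).1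
  choose Ψ hΨ using fun k => (hly n ν hνa hn β hβ hβs k).2
  set B : (Fin n → Fin q) → ℝ := fun σ => ∑ k, Ψ k σ with hBd
  set δ := q * (C0 / ν ^ 6) with hδ
  have hB0 : ∀ σ, 0 ≤ B σ := fun σ => Finset.sum_nonneg (fun k _ => ((hΨ k).1 σ).1)
  have hBT : ∀ σ, TT β B σ ≤ B σ + δ := by
    intro σ
    rw [hBd, TT_sum]
    calc _ ≤ ∑ k, (Ψ k σ + C0 / ν ^ 6) := by
          apply Finset.sum_le_sum
          intro k _
          have := (hΨ k).2.1 σ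
          have h0 : 0 ≤ lam / ν ^ 4 * Ψ k σ := mul_nonneg (by positivity) ((hΨ k).1 σ).1
          linarith
      _ = _ := by rw [Finset.sum_add_distrib, hδ]; simp
  have hB1 : ∀ σ, ¬ near ρ σ → 1 ≤ B σ := by
    intro σ h
    unfold near at h
    push Not at h
    obtain ⟨k, hk⟩ := h
    exact ((hΨ k).2.2 σ hk.le).trans (Finset.single_le_sum (f := fun k => Ψ k σ) (fun k _ => ((hΨ k).1 σ).1) (Finset.mem_univ k))
  set T1 := ⌈ν ^ 4⌉₊ with hT1
  set T0 := ⌈A * ν ^ 4⌉₊ with hT0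
  have hT1a : ν ^ 4 ≤ T1 := Nat.le_ceil _
  have hT1b : (T1:ℝ) ≤ 2 * ν ^ 4 := by linarith [Nat.ceil_lt_add_one (by positivity : 0 ≤ ν ^ 4)]
  have hT0a : A * ν ^ 4 ≤ T0 := Nat.le_ceil _
  have hT0b : (T0:ℝ) ≤ A * ν ^ 4 + 1 := (Nat.ceil_lt_add_one (by positivity : 0 ≤ A * ν ^ 4)).le
  refine ⟨T0 + T1, ?_, ?_⟩
  · push_cast; nlinarith
  apply glauberDist_le hn0 (by omega)
  intro g hg σ τ
  rw [Function.iterate_add_apply]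
  have hcoup : ∀ σ τ, (TT β)^[T1] g σ - (TT β)^[T1] g τ ≤ (n * (1 - c / n) ^ T1 + 2 * T1 * δ) + B σ + B τ := by
    intro σ τ
    have h1 := coupling hq hn0 hρ hnρ hβ hβq hρ1 hcc hc.le (by rw [hcd]; linarith) B δ hB0 hBT (by positivity) hB1 g hg T1 σ τ
    have hcn : 0 ≤ 1 - c / n := by
      rw [sub_nonneg, div_le_one hnR]
      have : (1:ℝ) ≤ n := by exact_mod_cast hn0
      rw [hcd]; linarith
    have h2 : (1 - c / n) ^ T1 * dH σ τ ≤ (1 - c / n) ^ T1 * n := mul_le_mul_of_nonneg_left (dH_le σ τ) (pow_nonneg hcn _)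
    linarith
  refine (two_phase hn0 (by omega) _ B _ hcoup T0 σ τ).trans ?_
  have hBt : ∀ σ, (TT β)^[T0] B σ ≤ q * (ε / (4 * q) + C0 / lam / ν ^ 2) := by
    intro σ
    rw [hBd, TTi_sum]
    calc _ ≤ ∑ k : Fin q, (ε / (4 * q) + C0 / lam / ν ^ 2) := by
          apply Finset.sum_le_sum
          intro k _
          refine (TTi_lyap hn0 β (by positivity) hth (by positivity) (hΨ k).2.1 T0 σ).trans ?_
          apply add_le_add
          · have h1 := one_sub_pow_le hth T0
            have h2 : lam * A ≤ lam / ν ^ 4 * T0 := by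
              rw [div_mul_eq_mul_div, le_div_iff₀ (by positivity)]
              linarith [mul_le_mul_of_nonneg_left hT0a hlam.le]
            have h3 : Real.exp (-(lam / ν ^ 4 * T0)) ≤ 1 / (lam * A) := 
              (Real.exp_le_exp.mpr (by linarith)).trans (exp_neg_le (by positivity))
            have h4 : 1 / (lam * A) = ε / (20 * q) := by rw [hA]; field_simp
            calc (1 - lam / ν ^ 4) ^ T0 * Ψ k σ ≤ (ε / (20 * q)) * 5 := by
                  apply mul_le_mul _ ((hΨ k).1 σ).2 ((hΨ k).1 σ).1 (by positivity)
                  linarith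
              _ = _ := by field_simp; norm_num
          · apply le_of_eq; field_simp
      _ = _ := by simp; ring
  have h1 : n * (1 - c / n) ^ T1 ≤ 24 / c ^ 4 / ν := by
    have hcn : c / n ≤ 1 := by
      rw [div_le_one hnR]
      have : (1:ℝ) ≤ n := by exact_mod_cast hn0
      rw [hcd]; linarith
    have a1 := one_sub_pow_le hcn T1
    have a2 : c * ν ≤ c / n * T1 := by
      rw [← hn]
      calc c * ν = c / ν ^ 3 * ν ^ 4 := by field_simp
        _ ≤ _ := by gcongr
    have a3 : Real.exp (-(c / n * T1)) ≤ 24 / (c * ν) ^ 4 :=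
      (Real.exp_le_exp.mpr (by linarith)).trans (exp_neg_le4 (by positivity))
    calc n * (1 - c / n) ^ T1 ≤ n * (24 / (c * ν) ^ 4) := by gcongr; linarith
      _ = _ := by rw [← hn]; field_simp
  have hν2 : ν ≤ ν ^ 2 := le_self_pow₀ hνone (by norm_num)
  have h2 : 2 * T1 * δ ≤ 4 * q * C0 / ν := by
    calc 2 * T1 * δ ≤ 2 * (2 * ν ^ 4) * δ := by gcongr
      _ = 4 * q * C0 / ν ^ 2 := by rw [hδ]; field_simp; norm_num
      _ ≤ _ := by gcongr
  have h3 : q * (ε / (4 * q) + C0 / lam / ν ^ 2) ≤ ε / 4 + q * C0 / lam / ν := by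
    have : q * (ε / (4 * q) + C0 / lam / ν ^ 2) = ε / 4 + q * C0 / lam / ν ^ 2 := by field_simp
    rw [this]
    gcongr
  have h4 : E0 / ν ≤ ε / 2 := by
    rw [div_le_iff₀ hε] at hνc
    rw [div_le_iff₀ hν]
    linarith
  have h5 : E0 / ν = 24 / c ^ 4 / ν + 4 * q * C0 / ν + 2 * (q * C0 / lam / ν) := by rw [hE0]; field_simp
  linarith [hBt σ, hBt τ]


lemma mul_exp_sub_one_le (y : ℝ) : y * (Real.exp y - 1) ≤ y ^ 2 * Real.exp |y| := by
  rcases le_total 0 y with h | h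
  · rw [abs_of_nonneg h]
    have h1 : Real.exp y - 1 ≤ y * Real.exp y := by
      have h2 : 1 - y ≤ Real.exp (-y) := by linarith [Real.add_one_le_exp (-y)]
      have h3 := mul_le_mul_of_nonneg_left h2 (Real.exp_pos y).le
      rw [← Real.exp_add] at h3
      simp at h3
      linarith
    nlinarith
  · have h1 := Real.add_one_le_exp y
    have h2 : 1 ≤ Real.exp |y| := Real.one_le_exp (abs_nonneg y)
    have h3 : y * (Real.exp y - 1) ≤ y * y := mul_le_mul_of_nonpos_left (by linarith) h
    nlinarith [sq_nonneg y]

set_option maxHeartbeats 1000000 in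
lemma VV_contract {q n : ℕ} (hq : 3 ≤ q) (hn0 : 0 < n) {β γ : ℝ} (hβ : 0 ≤ β) (hγ : 2 * β / q ≤ γ) (hγ1 : γ < 1)
    (σ : Fin n → Fin q) (k : Fin q) (hV : VV k σ ≤ ((1 - γ) / (4 * q)) ^ 2) (hx : 1 / (q:ℝ) ≤ frac σ k) :
    ∑ j ∈ Finset.univ.erase k, (frac σ j - mo σ k) * (sg β σ j - frac σ j) ≤ - ((1 - γ) / 2) * VV k σ := by
  have hQ : (3:ℝ) ≤ q := by exact_mod_cast hq
  have hq0 : (0:ℝ) < q := by linarith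
  have hγ0 : 0 ≤ γ := le_trans (by positivity) hγ
  set m := mo σ k with hm
  set Z := ∑ j, Real.exp (2 * β * frac σ j) with hZ
  have hZp : 0 < Z := smax_den_pos _ k
  set g := Real.exp (2 * β * m) / Z with hg
  have hmx : m ≤ frac σ k := by
    rw [hm]; unfold mo
    rw [div_le_iff₀ (by linarith)]
    have : 1 ≤ frac σ k * q := by rwa [div_le_iff₀ hq0] at hx
    linarith
  have hsum := sum_dev hq hn0 σ k
  rw [← hm] at hsum
  have hcard : ((Finset.univ.erase k).card : ℝ) = q - 1 := by
    rw [Finset.card_erase_of_mem (Finset.mem_univ _), Finset.card_univ, Fintype.card_fin, Nat.cast_sub (by omega)]; simp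
  have hgq : g ≤ 1 / q := by
    rw [hg, div_le_div_iff₀ hZp hq0, one_mul, hZ, ← Finset.add_sum_erase _ _ (Finset.mem_univ k)]
    have h1 : Real.exp (2 * β * m) ≤ Real.exp (2 * β * frac σ k) := Real.exp_le_exp.mpr (by gcongr)
    have h2 : ∑ j ∈ Finset.univ.erase k, Real.exp (2 * β * m) * (1 + 2 * β * (frac σ j - m)) ≤ ∑ j ∈ Finset.univ.erase k, Real.exp (2 * β * frac σ j) := by
      apply Finset.sum_le_sum
      intro j _
      have e : Real.exp (2 * β * frac σ j) = Real.exp (2 * β * m) * Real.exp (2 * β * (frac σ j - m)) := by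
        rw [← Real.exp_add]; ring_nf
      rw [e]
      apply mul_le_mul_of_nonneg_left _ (Real.exp_pos _).le
      linarith [Real.add_one_le_exp (2 * β * (frac σ j - m))]
    rw [← Finset.mul_sum, Finset.sum_add_distrib, ← Finset.mul_sum, hsum, Finset.sum_const, nsmul_eq_mul, hcard] at h2
    linarith
  have hg0 : 0 < g := by positivity
  set η := (1 - γ) / (4 * q) with hη
  have hη0 : 0 ≤ η := div_nonneg (by linarith) (by positivity)
  have hqη : q * η = (1 - γ) / 4 := by rw [hη]; field_simp
  have hbq : 2 * β ≤ q * γ := by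
    have h := hγ
    rw [div_le_iff₀ hq0] at h
    linarith
  have key : ∀ j ∈ Finset.univ.erase k, (frac σ j - m) * (sg β σ j - frac σ j) ≤
      - ((1 - γ) / 2) * (frac σ j - m) ^ 2 + (frac σ j - m) * (g - m) := by
    intro j hj
    have hd := dev_le k σ hη0 hV (Finset.ne_of_mem_erase hj)
    rw [← hm] at hd
    set d := frac σ j - m with hdd
    have e1 : sg β σ j = g * Real.exp (2 * β * d) := by
      have e0 : Real.exp (2 * β * frac σ j) = Real.exp (2 * β * m) * Real.exp (2 * β * d) := by
        rw [← Real.exp_add]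
        congr 1
        rw [hdd]; ring
      show Real.exp (2 * β * frac σ j) / Z = g * _
      rw [e0, hg]
      ring
    have h1 := mul_exp_sub_one_le (2 * β * d)
    have h2 : |2 * β * d| ≤ q * η := by
      rw [abs_mul, abs_of_nonneg (by positivity)]
      have : 2 * β ≤ q := by nlinarith
      gcongr
    have h3 : Real.exp |2 * β * d| ≤ 1 + 2 * (q * η) :=
      (Real.exp_le_exp.mpr h2).trans (exp_le_two (by positivity) (by rw [hqη]; linarith))
    have h4 : d * (Real.exp (2 * β * d) - 1) ≤ 2 * β * d ^ 2 * (1 + 2 * (q * η)) := by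
      rcases hβ.eq_or_lt with h0 | h0
      · rw [← h0]; simp
      · have : (2 * β) * (d * (Real.exp (2 * β * d) - 1)) ≤ (2 * β) * (2 * β * d ^ 2 * (1 + 2 * (q * η))) := by
          calc _ = 2 * β * d * (Real.exp (2 * β * d) - 1) := by ring
            _ ≤ (2 * β * d) ^ 2 * Real.exp |2 * β * d| := h1
            _ ≤ (2 * β * d) ^ 2 * (1 + 2 * (q * η)) := by gcongr
            _ = _ := by ring
        exact le_of_mul_le_mul_left this (by positivity)
    have h5 : g * (d * (Real.exp (2 * β * d) - 1)) ≤ (1 / q) * (q * γ * d ^ 2 * (1 + 2 * (q * η))) := by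
      calc _ ≤ g * (2 * β * d ^ 2 * (1 + 2 * (q * η))) := by gcongr
        _ ≤ _ := by gcongr
    have e2 : (1 / q) * (q * γ * d ^ 2 * (1 + 2 * (q * η))) = γ * (1 + (1 - γ) / 2) * d ^ 2 := by
      rw [hqη]; field_simp; ring
    rw [e2] at h5
    have e3 : frac σ j = d + m := by rw [hdd]; ring
    have h6 : γ * (1 + (1 - γ) / 2) ≤ 1 - (1 - γ) / 2 := by nlinarith
    have h7 := mul_le_mul_of_nonneg_right h6 (sq_nonneg d)
    rw [e1, e3]
    have e4 : d * (g * Real.exp (2 * β * d) - (d + m)) = g * (d * (Real.exp (2 * β * d) - 1)) + d * (g - m) - d ^ 2 := by ring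
    rw [e4]
    linarith
  refine (Finset.sum_le_sum key).trans (le_of_eq ?_)
  rw [Finset.sum_add_distrib, ← Finset.mul_sum, ← Finset.sum_mul, hsum]
  unfold VV
  rw [← hm]; ring

lemma VV_step' {q n : ℕ} (hq : 3 ≤ q) (hn0 : 0 < n) (hn : 2 * q ≤ n) {β γ : ℝ} (hβ : 0 ≤ β) (hγ : 2 * β / q ≤ γ) (hγ1 : γ < 1)
    (σ : Fin n → Fin q) (k : Fin q) (hV : VV k σ ≤ ((1 - γ) / (4 * q)) ^ 2) (hx : 1 / (q:ℝ) ≤ frac σ k) :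
    TT β (VV k) σ ≤ VV k σ - (1 - γ) / n * VV k σ + 12 * q ^ 2 / n ^ 2 := by
  have hQ : (3:ℝ) ≤ q := by exact_mod_cast hq
  have hnR : (0:ℝ) < n := by exact_mod_cast hn0
  have hbq : 2 * β ≤ q := by
    rw [div_le_iff₀ (by linarith)] at hγ; nlinarith
  have h1 := VV_step hq hn0 hn hβ hbq σ k
  have h2 := mul_le_mul_of_nonneg_left (VV_contract hq hn0 hβ hγ hγ1 σ k hV hx) (by positivity : 0 ≤ 2 / (n:ℝ))
  have e : 2 / (n:ℝ) * (-((1 - γ) / 2) * VV k σ) = - ((1 - γ) / n * VV k σ) := by field_simp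
  linarith

lemma drift_low {q n : ℕ} (hq : 3 ≤ q) (hn0 : 0 < n) (hn : 2 * q ≤ n) {β : ℝ} (hβ : 0 ≤ β) (hβs : β ≤ betaS q)
    (σ : Fin n → Fin q) (k : Fin q) (hx : 1 / (q:ℝ) ≤ frac σ k) (hV : VV k σ ≤ (1 / q) ^ 2) :
    Dfun q (betaS q) (frac σ k) - 2 * (betaS q - β) - q ^ 2 * VV k σ - 4 * q / n ≤ mm β σ k := by
  have hb : 2 * β ≤ q := by linarith [betaC_lt hq, betaS_le hq]
  have h1 := (abs_le.mp (mm_sg hβ hb hn hn0 σ k)).1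
  have h2 := sg_ge hq hn0 hβ hb σ k hV
  have h3 := Lf_lip_beta hq hβs hx (frac_le hn0 σ k)
  rw [Dfun_eq]
  linarith

lemma TT_arc {q n : ℕ} (hn0 : 0 < n) {β : ℝ}
    (σ : Fin n → Fin q) (k : Fin q) {ν a κ : ℝ} (hν : 0 < ν) (hκ : 0 < κ) (hn : ν ^ 3 = n) :
      Real.arctan (κ * ν * (frac σ k - a)) +
      (κ * mm β σ k / (1 + (κ * ν * (frac σ k - a)) ^ 2) / ν ^ 2 -
       (κ * ν * (frac σ k - a)) * κ ^ 2 * vv β σ k / (1 + (κ * ν * (frac σ k - a)) ^ 2) ^ 2 / ν ^ 4) - 7 * κ ^ 3 / ν ^ 6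
       ≤ TT β (fun τ => Real.arctan (κ * ν * (frac τ k - a))) σ := by
  set u := κ * ν * (frac σ k - a) with hu
  have := step_ge hn0 β σ k (fun x => Real.arctan (κ * ν * (x - a))) (κ * ν / (1 + u ^ 2))
    (- u * (κ * ν) ^ 2 / (1 + u ^ 2) ^ 2) (7 * κ ^ 3 / ν ^ 6) ?_
  · refine le_trans (le_of_eq ?_) this
    rw [← hn, ← hu]
    field_simp
    ring
  · intro h hh
    have e : κ * ν * (frac σ k + h - a) = u + κ * ν * h := by rw [hu]; ring
    simp only [e, ← hu]
    have t := (abs_le.mp (arctan_taylor u (κ * ν * h))).1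
    have b : |κ * ν * h| ≤ κ / ν ^ 2 := by
      rw [abs_mul, abs_of_pos (by positivity)]
      calc _ ≤ κ * ν * (1 / n) := by gcongr
        _ = _ := by rw [← hn]; field_simp
    have b3 : 7 * |κ * ν * h| ^ 3 ≤ 7 * κ ^ 3 / ν ^ 6 := by
      calc _ ≤ 7 * (κ / ν ^ 2) ^ 3 := by gcongr
        _ = _ := by field_simp
    have e1 : κ * ν * h / (1 + u ^ 2) = κ * ν / (1 + u ^ 2) * h := by ring
    have e2 : - u * (κ * ν) ^ 2 / (1 + u ^ 2) ^ 2 * h ^ 2 = - (u * (κ * ν * h) ^ 2 / (1 + u ^ 2) ^ 2) := by ring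
    rw [e2, ← e1]
    linarith

/-- pure real-variable bound for the lower Lyapunov function -/
lemma bracket2 {C M c0 : ℝ} (hC : 0 < C) (hM : 0 ≤ M) (hc0 : 0 < c0) : ∃ κ lam : ℝ, 1 ≤ κ ∧ 0 < lam ∧
    ∀ u v : ℝ, -1 < u → c0 ≤ v → v ≤ 1 → 
      (C / κ) * u ^ 2 / (1 + u ^ 2) + 2 * M * κ / (1 + u ^ 2) + u * κ ^ 2 * v / (1 + u ^ 2) ^ 2 
        ≤ lam * (Real.arctan u + Real.pi / 4) := by
  set κ := max 1 (8 * (C + 2 * M) / c0) with hκ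
  have hκ1 : 1 ≤ κ := le_max_left _ _
  have hκ2 : 8 * (C + 2 * M) / c0 ≤ κ := le_max_right _ _
  have hκ0 : 0 < κ := by linarith
  set η := Real.arctan (-(1 / 2)) + Real.pi / 4 with hη
  have hm1 : Real.arctan (-1) = - (Real.pi / 4) := by rw [Real.arctan_neg, Real.arctan_one]
  have hη0 : 0 < η := by
    have : Real.arctan (-1) < Real.arctan (-(1 / 2)) := Real.arctan_strictMono (by norm_num)
    rw [hη]; linarith
  set l0 := C + 2 * M * κ + κ ^ 2 with hl0
  have hl0p : 0 < l0 := by positivity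
  refine ⟨κ, l0 / η, hκ1, by positivity, ?_⟩
  intro u v hu hv hv1
  have hP : 0 < 1 + u ^ 2 := by positivity
  have hP1 : 1 ≤ 1 + u ^ 2 := by nlinarith [sq_nonneg u]
  have hpos : 0 < Real.arctan u + Real.pi / 4 := by
    have := Real.arctan_strictMono hu
    linarith
  have t1 : (C / κ) * u ^ 2 / (1 + u ^ 2) ≤ C := by
    rw [div_le_iff₀ hP]
    have : C / κ ≤ C := div_le_self hC.le hκ1
    nlinarith [sq_nonneg u, mul_le_mul_of_nonneg_right this (sq_nonneg u)]
  have t2 : 2 * M * κ / (1 + u ^ 2) ≤ 2 * M * κ := div_le_self (by positivity) hP1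
  rcases le_or_gt u (-(1 / 2)) with h | h
  · have t3 : u * κ ^ 2 * v / (1 + u ^ 2) ^ 2 ≤ - (κ ^ 2 * c0 / 8) := by
      rw [div_le_iff₀ (by positivity)]
      have hP2 : (1 + u ^ 2) ^ 2 ≤ 4 := by
        have : 1 + u ^ 2 ≤ 2 := by nlinarith
        nlinarith
      have : u * v ≤ - (c0 / 2) := by nlinarith
      have h2 : κ ^ 2 * (u * v) ≤ κ ^ 2 * (- (c0 / 2)) := mul_le_mul_of_nonneg_left this (by positivity)
      have h3 : κ ^ 2 * c0 / 8 * (1 + u ^ 2) ^ 2 ≤ κ ^ 2 * c0 / 8 * 4 := by gcongr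
      nlinarith
    have t4 : C + 2 * M * κ ≤ κ ^ 2 * c0 / 8 := by
      rw [div_le_iff₀ hc0] at hκ2
      nlinarith
    have : 0 ≤ l0 / η * (Real.arctan u + Real.pi / 4) := by positivity
    linarith
  · have t3 : u * κ ^ 2 * v / (1 + u ^ 2) ^ 2 ≤ κ ^ 2 := by
      rw [div_le_iff₀ (by positivity)]
      have h1 : u * v ≤ (1 + u ^ 2) ^ 2 := by
        have h0 : 0 < v := by linarith
        have : u * v ≤ |u| := by
          calc u * v ≤ |u| * v := by gcongr; exact le_abs_self u
            _ ≤ |u| * 1 := by gcongr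
            _ = |u| := mul_one _
        have : |u| ≤ 1 + u ^ 2 := by rw [← sq_abs]; nlinarith [sq_nonneg (|u| - 1)]
        nlinarith
      have := mul_le_mul_of_nonneg_left h1 (by positivity : 0 ≤ κ ^ 2)
      linarith
    have t4 : η ≤ Real.arctan u + Real.pi / 4 := by
      have := Real.arctan_strictMono h
      rw [hη]; linarith
    have : l0 ≤ l0 / η * (Real.arctan u + Real.pi / 4) := by
      rw [div_mul_eq_mul_div, le_div_iff₀ hη0]
      gcongr
    linarith


set_option maxHeartbeats 1000000 in
lemma arc_low {q n : ℕ} (hq : 3 ≤ q) (hn0 : 0 < n) (hn : 2 * q ≤ n) {β ν a C M κ lam : ℝ} (hβ : 0 ≤ β) (hβs : β ≤ betaS q)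
    (hD : ∀ x ∈ Set.Icc (0:ℝ) 1, -C * (x - a) ^ 2 ≤ Dfun q (betaS q) x)
    (hν : 1 ≤ ν) (hνn : ν ^ 3 = n) (hM : betaS q - β ≤ M / ν ^ 2) (hκ : 1 ≤ κ)
    (hbr : ∀ u v : ℝ, -1 < u → Real.exp (-(2 * q)) / q ≤ v → v ≤ 1 →
      (C / κ) * u ^ 2 / (1 + u ^ 2) + 2 * M * κ / (1 + u ^ 2) + u * κ ^ 2 * v / (1 + u ^ 2) ^ 2
        ≤ lam * (Real.arctan u + Real.pi / 4))
    (σ : Fin n → Fin q) (k : Fin q) (hu : -1 < κ * ν * (frac σ k - a)) (hx : 1 / (q:ℝ) ≤ frac σ k)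
    (hV : VV k σ ≤ (1 / q) ^ 2) :
    Real.arctan (κ * ν * (frac σ k - a)) - lam / ν ^ 4 * (Real.arctan (κ * ν * (frac σ k - a)) + Real.pi / 4)
      - κ * q ^ 2 * VV k σ / ν ^ 2 - (4 * q * κ + 7 * κ ^ 3) / ν ^ 5
      ≤ TT β (fun τ => Real.arctan (κ * ν * (frac τ k - a))) σ := by
  have hQ : (3:ℝ) ≤ q := by exact_mod_cast hq
  have hν0 : 0 < ν := by linarith
  have hκ0 : 0 < κ := by linarith
  have hbq : 2 * β ≤ q := by linarith [betaC_lt hq, betaS_le hq]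
  have h1 := TT_arc hn0 (β := β) σ k (a := a) hν0 hκ0 hνn
  have h2 := drift_low hq hn0 hn hβ hβs σ k hx hV
  have h3 := hD (frac σ k) ⟨frac_nonneg σ k, frac_le hn0 σ k⟩
  have h4 := hbr _ (vv β σ k) hu (vv_ge hq hβ hbq hn0 σ k) (vv_le hn0 β σ k)
  set u := κ * ν * (frac σ k - a) with hud
  set V := VV k σ with hVd
  have hV0 : 0 ≤ V := VV_nonneg k σ
  set P := 1 + u ^ 2 with hP
  have hP1 : 1 ≤ P := by rw [hP]; linarith [sq_nonneg u]
  have hP0 : 0 < P := by linarith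
  rw [← hνn] at h2
  have e1 : (frac σ k - a) ^ 2 = u ^ 2 / (κ ^ 2 * ν ^ 2) := by rw [hud]; field_simp
  rw [e1] at h3
  have h5 : -C * (u ^ 2 / (κ ^ 2 * ν ^ 2)) - 2 * (M / ν ^ 2) - (q ^ 2 * V + 4 * q / ν ^ 3) ≤ mm β σ k := by linarith
  have h6 : κ * (-C * (u ^ 2 / (κ ^ 2 * ν ^ 2)) - 2 * (M / ν ^ 2) - (q ^ 2 * V + 4 * q / ν ^ 3)) / P / ν ^ 2
      ≤ κ * mm β σ k / P / ν ^ 2 := by gcongr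
  have e2 : κ * (-C * (u ^ 2 / (κ ^ 2 * ν ^ 2)) - 2 * (M / ν ^ 2) - (q ^ 2 * V + 4 * q / ν ^ 3)) / P / ν ^ 2
     = - (((C / κ) * u ^ 2 / P + 2 * M * κ / P) / ν ^ 4) - κ * (q ^ 2 * V + 4 * q / ν ^ 3) / P / ν ^ 2 := by
    field_simp
    ring
  rw [e2] at h6
  have h7 : κ * (q ^ 2 * V + 4 * q / ν ^ 3) / P / ν ^ 2 ≤ κ * (q ^ 2 * V + 4 * q / ν ^ 3) / ν ^ 2 := by
    apply div_le_div_of_nonneg_right _ (by positivity)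
    exact div_le_self (by positivity) hP1
  have e3 : κ * (q ^ 2 * V + 4 * q / ν ^ 3) / ν ^ 2 = κ * q ^ 2 * V / ν ^ 2 + 4 * q * κ / ν ^ 5 := by
    field_simp
  rw [e3] at h7
  have h8 := div_le_div_of_nonneg_right h4 (by positivity : 0 ≤ ν ^ 4)
  have h9 : 7 * κ ^ 3 / ν ^ 6 ≤ 7 * κ ^ 3 / ν ^ 5 := by
    apply div_le_div_of_nonneg_left (by positivity) (by positivity)
    exact pow_le_pow_right₀ hν (by norm_num)
  have e4 : lam * (Real.arctan u + Real.pi / 4) / ν ^ 4 = lam / ν ^ 4 * (Real.arctan u + Real.pi / 4) := by ring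
  rw [e4, add_div] at h8
  have e5 : (4 * q * κ + 7 * κ ^ 3) / ν ^ 5 = 4 * q * κ / ν ^ 5 + 7 * κ ^ 3 / ν ^ 5 := by rw [add_div]
  rw [e5]
  linarith

/-- lower test function -/
noncomputable def FF {q n : ℕ} (κ ν a A : ℝ) (k : Fin q) (σ : Fin n → Fin q) : ℝ :=
  Real.arctan (κ * ν * (frac σ k - a)) + Real.pi / 4 - A * ν * VV k σ

set_option maxHeartbeats 1000000 in
lemma FF_step {q n : ℕ} (hq : 3 ≤ q) (hn0 : 0 < n) (hn : 2 * q ≤ n) {β ν a C M κ lam A : ℝ} (hβ : 0 ≤ β) (hβs : β ≤ betaS q)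
    (hD : ∀ x ∈ Set.Icc (0:ℝ) 1, -C * (x - a) ^ 2 ≤ Dfun q (betaS q) x)
    (hν : 1 ≤ ν) (hνn : ν ^ 3 = n) (hM : betaS q - β ≤ M / ν ^ 2) (hκ : 1 ≤ κ)
    (hbr : ∀ u v : ℝ, -1 < u → Real.exp (-(2 * q)) / q ≤ v → v ≤ 1 →
      (C / κ) * u ^ 2 / (1 + u ^ 2) + 2 * M * κ / (1 + u ^ 2) + u * κ ^ 2 * v / (1 + u ^ 2) ^ 2
        ≤ lam * (Real.arctan u + Real.pi / 4))
    (hA0 : 0 < A)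
    (hA : A * (1 - 2 * betaS q / q) = 2 * κ * q ^ 2) (hν1 : lam * A ≤ κ * q ^ 2 * ν)
    (hν2 : 3 / (A * ν) ≤ ((1 - 2 * betaS q / q) / (4 * q)) ^ 2) (hν3 : 1 / q + 1 / (κ * ν) ≤ a)
    (σ : Fin n → Fin q) (k : Fin q) (hF : 0 < FF κ ν a A k σ) :
    (1 - lam / ν ^ 4) * FF κ ν a A k σ - (4 * q * κ + 7 * κ ^ 3 + 12 * q ^ 2 * A) / ν ^ 5 ≤ TT β (FF κ ν a A k) σ := by
  have hQ : (3:ℝ) ≤ q := by exact_mod_cast hq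
  have hν0 : 0 < ν := by linarith
  have hκ0 : 0 < κ := by linarith
  have hq0 : (0:ℝ) < q := by linarith
  have hV0 : 0 ≤ VV k σ := VV_nonneg k σ
  have hβs0 := betaS_nonneg (q := q)
  have hg1 : 2 * betaS q / q < 1 := by
    rw [div_lt_one hq0]; linarith [betaC_lt hq, betaS_le hq]
  have hg0 : 0 ≤ 2 * betaS q / q := div_nonneg (by linarith) hq0.le
  have hFd : FF κ ν a A k σ = Real.arctan (κ * ν * (frac σ k - a)) + Real.pi / 4 - A * ν * VV k σ := rfl
  have hAV : 0 ≤ A * ν * VV k σ := by positivity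
  have hu : -1 < κ * ν * (frac σ k - a) := by
    by_contra hcon
    push Not at hcon
    have := Real.arctan_mono hcon
    rw [Real.arctan_neg, Real.arctan_one] at this
    linarith
  have hVs : VV k σ ≤ 3 / (A * ν) := by
    rw [le_div_iff₀ (by positivity)]
    have h1 := Real.arctan_lt_pi_div_two (κ * ν * (frac σ k - a))
    have h2 := Real.pi_lt_d2
    nlinarith
  have hV1 := hVs.trans hν2
  have hV2 : VV k σ ≤ (1 / q) ^ 2 := by
    refine hV1.trans ?_
    apply pow_le_pow_left₀ (div_nonneg (by linarith) (by positivity))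
    rw [div_le_div_iff₀ (by positivity) hq0]
    nlinarith
  have hx : 1 / (q:ℝ) ≤ frac σ k := by
    have h1 : -(1 / (κ * ν)) < frac σ k - a := by
      rw [neg_lt_iff_pos_add, ← sub_neg_eq_add, sub_pos, ← mul_lt_mul_iff_right₀ (by positivity : 0 < κ * ν)]
      have : κ * ν * (-(1 / (κ * ν))) = -1 := by field_simp
      linarith
    linarith
  have h1 := arc_low hq hn0 hn hβ hβs hD hν hνn hM hκ hbr σ k hu hx hV2
  have h2 := VV_step' hq hn0 hn hβ (γ := 2 * betaS q / q) (by gcongr) hg1 σ k hV1 hx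
  have e0 : TT β (FF κ ν a A k) σ = TT β (fun τ => Real.arctan (κ * ν * (frac τ k - a))) σ + Real.pi / 4 - A * ν * TT β (VV k) σ := by
    have e : FF κ ν a A k = fun τ : Fin n → Fin q => (fun τ : Fin n → Fin q => (fun τ => Real.arctan (κ * ν * (frac τ k - a))) τ + (fun _ => Real.pi / 4) τ) τ + (fun τ => (-(A * ν)) * VV k τ) τ := by
      funext τ; unfold FF; ring
    rw [e, TT_add, TT_add, TT_const hn0, TT_smul]; ring
  rw [e0, hFd]
  rw [← hνn] at h2
  set L := Real.arctan (κ * ν * (frac σ k - a)) with hL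
  set V := VV k σ with hVd
  have h3 := mul_le_mul_of_nonneg_left h2 (by positivity : 0 ≤ A * ν)
  have e1 : A * ν * (V - (1 - 2 * betaS q / q) / ν ^ 3 * V + 12 * q ^ 2 / (ν ^ 3) ^ 2)
      = A * ν * V - 2 * κ * q ^ 2 * V / ν ^ 2 + 12 * q ^ 2 * A / ν ^ 5 := by
    rw [← hA]; field_simp
  rw [e1] at h3
  have h4 : lam / ν ^ 4 * (A * ν * V) ≤ κ * q ^ 2 * V / ν ^ 2 := by
    have e : lam / ν ^ 4 * (A * ν * V) = (lam * A) * V / ν ^ 3 := by field_simp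
    have e' : κ * q ^ 2 * V / ν ^ 2 = (κ * q ^ 2 * ν) * V / ν ^ 3 := by field_simp
    rw [e, e']
    gcongr
  have e5 : 2 * κ * q ^ 2 * V / ν ^ 2 = 2 * (κ * q ^ 2 * V / ν ^ 2) := by ring
  have e6 : (4 * q * κ + 7 * κ ^ 3 + 12 * q ^ 2 * A) / ν ^ 5 = (4 * q * κ + 7 * κ ^ 3) / ν ^ 5 + 12 * q ^ 2 * A / ν ^ 5 := by
    rw [add_div]
  rw [e6]
  rw [e5] at h3
  have e7 : (1 - lam / ν ^ 4) * (L + Real.pi / 4 - A * ν * V) = L + Real.pi / 4 - A * ν * V - lam / ν ^ 4 * (L + Real.pi / 4) + lam / ν ^ 4 * (A * ν * V) := by ring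
  rw [e7]
  linarith

lemma TTi_low {q n : ℕ} (hn : 0 < n) (β : ℝ) {θ δ : ℝ} (hθ : 0 ≤ θ) (hθ1 : θ ≤ 1) (hδ : 0 ≤ δ) {Ψ : (Fin n → Fin q) → ℝ}
    (h : ∀ σ, (1 - θ) * Ψ σ - δ ≤ TT β Ψ σ) (t : ℕ) (σ : Fin n → Fin q) :
    (1 - θ) ^ t * Ψ σ - t * δ ≤ (TT β)^[t] Ψ σ := by
  induction t generalizing σ with
  | zero => simp
  | succ t ih =>
    rw [Function.iterate_succ_apply']
    have h1 := TT_mono β ih σ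
    have e : (fun σ => (1 - θ) ^ t * Ψ σ - t * δ) = fun σ : Fin n → Fin q => (fun σ => (1 - θ) ^ t * Ψ σ) σ + (fun _ => - (t * δ)) σ := by
      funext σ; simp; ring
    rw [e, TT_add, TT_const hn, TT_smul] at h1
    refine le_trans ?_ h1
    have h2 := mul_le_mul_of_nonneg_left (h σ) (pow_nonneg (by linarith : 0 ≤ 1 - θ) t)
    have h3 : (1 - θ) ^ t * δ ≤ 1 * δ := by
      apply mul_le_mul_of_nonneg_right _ hδ
      exact pow_le_one₀ (by linarith) (by linarith)
    push_cast
    rw [pow_succ]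
    linarith


lemma exp_le_one_sub_pow {θ : ℝ} (h0 : 0 ≤ θ) (h1 : θ ≤ 1 / 2) (t : ℕ) : Real.exp (-(2 * θ * t)) ≤ (1 - θ) ^ t := by
  have h : Real.exp (-(2 * θ)) ≤ 1 - θ := by
    rw [Real.exp_neg, inv_le_comm₀ (Real.exp_pos _) (by linarith)]
    refine le_trans ?_ (Real.add_one_le_exp (2 * θ))
    rw [inv_le_iff_one_le_mul₀ (by linarith)]
    nlinarith
  calc Real.exp (-(2 * θ * t)) = Real.exp (-(2 * θ)) ^ t := by rw [← Real.exp_nat_mul]; ring_nf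
    _ ≤ _ := pow_le_pow_left₀ (Real.exp_pos _).le h t

lemma frac_const {q n : ℕ} (hn0 : 0 < n) (k j : Fin q) : frac (fun _ : Fin n => k) j = if k = j then 1 else 0 := by
  have hnR : (n:ℝ) ≠ 0 := by exact_mod_cast hn0.ne'
  unfold frac cnt
  split_ifs with h
  · simp [hnR]
  · simp

lemma FF_const {q n : ℕ} (hn0 : 0 < n) (k : Fin q) {κ ν a A : ℝ} (hκ : 1 ≤ κ) (hν : 1 ≤ ν) (ha : a < 1) :
    3 * Real.pi / 4 - 1 / (ν * (1 - a)) ≤ FF κ ν a A k (fun _ : Fin n => k) := by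
  have hf : frac (fun _ : Fin n => k) k = 1 := by rw [frac_const hn0]; simp
  have hV : VV k (fun _ : Fin n => k) = 0 := by
    unfold VV
    apply Finset.sum_eq_zero
    intro j hj
    rw [frac_const hn0, if_neg (Finset.ne_of_mem_erase hj).symm]
    unfold mo
    rw [hf]; simp
  unfold FF
  rw [hV, hf]
  have hz : 0 < κ * ν * (1 - a) := by
    have : 0 < 1 - a := by linarith
    positivity
  have h1 := Real.arctan_inv_of_pos hz
  have h2 : Real.arctan (κ * ν * (1 - a))⁻¹ ≤ (κ * ν * (1 - a))⁻¹ := by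
    have h3 := Real.lt_tan (Real.arctan_pos.mpr (inv_pos.mpr hz)) (Real.arctan_lt_pi_div_two _)
    rw [Real.tan_arctan] at h3
    exact h3.le
  have h4 : (κ * ν * (1 - a))⁻¹ ≤ 1 / (ν * (1 - a)) := by
    rw [← one_div]
    have h5 : 0 < ν * (1 - a) := mul_pos (by linarith) (by linarith)
    apply one_div_le_one_div_of_le h5
    nlinarith
  linarith

set_option maxHeartbeats 2000000 in
theorem lower {q : ℕ} (hq : 3 ≤ q) {M : ℝ} (hM : 0 ≤ M) : ∃ L : ℝ, 0 < L ∧ ∀ T η : ℝ, 0 < T → 0 < η → ∃ ν0 : ℝ, 1 ≤ ν0 ∧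
    ∀ (n : ℕ) (ν : ℝ), ν0 ≤ ν → ν ^ 3 = n → ∀ β : ℝ, 0 ≤ β → β ≤ betaS q → betaS q - β ≤ M / ν ^ 2 →
    ∀ t : ℕ, (t:ℝ) ≤ T * ν ^ 4 → Real.exp (-(L * T)) - η ≤ glauberDist q n β t := by
  have hQ : (3:ℝ) ≤ q := by exact_mod_cast hq
  have hq0 : (0:ℝ) < q := by linarith
  obtain ⟨a, c, C, ha0, ha1, hc, hC, -, hD⟩ := spin hq
  have hc0 : 0 < Real.exp (-(2 * (q:ℝ))) / q := by positivity
  obtain ⟨κ, lam, hκ, hlam, hbr⟩ := bracket2 hC hM hc0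
  have hκ0 : 0 < κ := by linarith
  have hg1 : 2 * betaS q / q < 1 := by
    rw [div_lt_one hq0]; linarith [betaC_lt hq, betaS_le hq]
  set c4 := 1 - 2 * betaS q / q with hc4
  have hc40 : 0 < c4 := by linarith
  set A := 2 * κ * q ^ 2 / c4 with hA
  have hA0 : 0 < A := by positivity
  have hAc : A * c4 = 2 * κ * q ^ 2 := by rw [hA]; field_simp
  set ρ := (a - 1 / q) / 2 with hρ
  have hρ0 : 0 < ρ := by rw [hρ]; linarith
  obtain ⟨lam0, C0, ν1, hlam0, hC0, hν1, hly⟩ := lyap hq hρ0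
  refine ⟨2 * lam, by positivity, fun T η hT hη => ?_⟩
  set C7 := 4 * q * κ + 7 * κ ^ 3 + 12 * q ^ 2 * A with hC7
  have hC70 : 0 < C7 := by positivity
  set K := 1 / (1 - a) + T * C7 + C0 / lam0 with hK
  have hev : ∀ᶠ ν : ℝ in atTop, ν1 ≤ ν ∧ 2 * q ≤ ν ∧ lam * A / (κ * q ^ 2) ≤ ν ∧ 3 / (A * (c4 / (4 * q)) ^ 2) ≤ ν ∧ 1 / ρ ≤ ν ∧ 2 * lam ≤ ν ∧ K / η ≤ ν := by
    filter_upwards [eventually_ge_atTop ν1, eventually_ge_atTop (2 * (q:ℝ)), eventually_ge_atTop (lam * A / (κ * q ^ 2)),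
      eventually_ge_atTop (3 / (A * (c4 / (4 * q)) ^ 2)), eventually_ge_atTop (1 / ρ), eventually_ge_atTop (2 * lam), eventually_ge_atTop (K / η)] with ν h1 h2 h3 h4 h5 h6 h7
    exact ⟨h1, h2, h3, h4, h5, h6, h7⟩
  obtain ⟨ν0, hν0⟩ := eventually_atTop.mp hev
  refine ⟨max 1 ν0, le_max_left _ _, ?_⟩
  intro n ν hν hνn β hβ hβs hβM t ht
  have hνone : 1 ≤ ν := (le_max_left _ _).trans hν
  obtain ⟨g1, g2, g3, g4, g5, g6, g7⟩ := hν0 ν ((le_max_right _ _).trans hν)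
  have hνp : 0 < ν := by linarith
  have hν4 : ν ≤ ν ^ 4 := le_self_pow₀ hνone (by norm_num)
  have hν3 : ν ≤ ν ^ 3 := le_self_pow₀ hνone (by norm_num)
  have hn2 : 2 * q ≤ n := by
    have : (2 * q : ℝ) ≤ n := by rw [← hνn]; linarith
    exact_mod_cast this
  have hn0 : 0 < n := by omega
  rw [div_le_iff₀ (by positivity)] at g3 g4 g5 g7
  have g4' : 3 / (A * ν) ≤ (c4 / (4 * q)) ^ 2 := by
    rw [div_le_iff₀ (by positivity)]; linarith
  have hκν : 1 / (κ * ν) ≤ ρ := by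
    rw [div_le_iff₀ (by positivity)]; nlinarith
  have hν3' : 1 / q + 1 / (κ * ν) ≤ a := by rw [hρ] at hκν; linarith
  set k : Fin q := ⟨0, by omega⟩ with hk
  have hstep := FF_step hq hn0 hn2 hβ hβs hD hνone hνn hβM hκ hbr hA0 hAc (by linarith) g4' hν3'
  set θ := lam / ν ^ 4 with hθ
  have hθ0 : 0 ≤ θ := by positivity
  have hθ1 : θ ≤ 1 / 2 := by
    rw [hθ, div_le_iff₀ (by positivity)]; linarith
  set δ := C7 / ν ^ 5 with hδ
  have hδ0 : 0 ≤ δ := by positivity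
  set F : (Fin n → Fin q) → ℝ := FF κ ν a A k with hF
  have hplus : ∀ σ : Fin n → Fin q, (1 - θ) * (fun σ => max (F σ) 0) σ - δ ≤ TT β (fun σ => max (F σ) 0) σ := by
    intro σ
    have hm := TT_mono β (f := F) (g := fun σ => max (F σ) 0) (fun σ => le_max_left _ _) σ
    have hm0 := TT_mono β (f := fun _ => 0) (g := fun σ => max (F σ) 0) (fun σ => le_max_right _ _) σ
    rw [TT_const hn0] at hm0
    show (1 - θ) * max (F σ) 0 - δ ≤ _
    rcases le_or_gt (F σ) 0 with h | h
    · rw [max_eq_right h]; linarith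
    · rw [max_eq_left h.le]
      exact (hstep σ k h).trans hm
  have hit := TTi_low hn0 β hθ0 (by linarith) hδ0 hplus t (fun _ => k)
  set S : Set (Fin n → Fin q) := {σ | 0 < F σ} with hS
  have hchi : ∀ σ : Fin n → Fin q, (fun σ => max (F σ) 0) σ ≤ (fun σ => (3 * Real.pi / 4) * chi S σ) σ := by
    intro σ
    show max (F σ) 0 ≤ 3 * Real.pi / 4 * chi S σ
    have hpi := Real.pi_pos
    rcases le_or_gt (F σ) 0 with h | h
    · rw [max_eq_right h]
      exact mul_nonneg (by positivity) (chi_mem S σ).1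
    · rw [max_eq_left h.le]
      have hc1 : chi S σ = 1 := by unfold chi; exact if_pos h
      rw [hc1, hF]; unfold FF
      have hV0 : 0 ≤ A * ν * VV k σ := mul_nonneg (by positivity) (VV_nonneg k σ)
      have := Real.arctan_lt_pi_div_two (κ * ν * (frac σ k - a))
      linarith
  have hit2 := TTi_mono β t hchi (fun _ => k)
  have hsm : ∀ (s : ℕ) (f : (Fin n → Fin q) → ℝ) (c : ℝ), (TT β)^[s] (fun σ => c * f σ) = fun σ => c * (TT β)^[s] f σ := by
    intro s f c
    induction s with
    | zero => rfl
    | succ s ih =>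
      rw [Function.iterate_succ_apply', Function.iterate_succ_apply', ih]
      funext σ
      exact TT_smul β c _ σ
  rw [hsm] at hit2
  set X := (TT β)^[t] (chi S) (fun _ => k) with hX
  have hit3 := hit.trans hit2
  have hF0 : 3 * Real.pi / 4 - 1 / (ν * (1 - a)) ≤ F (fun _ => k) := FF_const hn0 k hκ hνone ha1
  set p := (1 - θ) ^ t with hp
  have hp0 : 0 ≤ p := pow_nonneg (by linarith) t
  have hp1 : p ≤ 1 := pow_le_one₀ (by linarith) (by linarith)
  have hF1 : p * (3 * Real.pi / 4 - 1 / (ν * (1 - a))) ≤ p * max (F (fun _ => k)) 0 :=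
    mul_le_mul_of_nonneg_left (hF0.trans (le_max_left _ _)) hp0
  set e1 := 1 / (ν * (1 - a)) with he1
  have h1a : 0 < 1 - a := by linarith
  have he10 : 0 ≤ e1 := by positivity
  have hpe : p * e1 ≤ e1 := by nlinarith
  have hit4 : p * (3 * Real.pi / 4) - e1 - t * δ ≤ 3 * Real.pi / 4 * X := by
    have : p * max (F (fun _ => k)) 0 - t * δ ≤ 3 * Real.pi / 4 * X := hit3
    rw [mul_sub] at hF1
    linarith
  have htδ : t * δ ≤ T * C7 / ν := by
    calc t * δ ≤ (T * ν ^ 4) * δ := by gcongr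
      _ = T * C7 / ν := by rw [hδ]; field_simp
  have htδ0 : 0 ≤ t * δ := by positivity
  have hXp : p - e1 - t * δ ≤ X := by
    have hpi := Real.pi_gt_three
    by_contra hcon
    push Not at hcon
    have h1 : 3 * Real.pi / 4 * X < 3 * Real.pi / 4 * (p - e1 - t * δ) := mul_lt_mul_of_pos_left hcon (by positivity)
    have h2 : 1 * (e1 + t * δ) ≤ 3 * Real.pi / 4 * (e1 + t * δ) := mul_le_mul_of_nonneg_right (by linarith) (by linarith)
    linarith
  obtain ⟨hl1, Ψ, hΨ0, hΨ1, hΨ2⟩ := hly n ν g1 hνn β hβ hβs k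
  have hmu := mu_lyap hn0 (by omega) β (by positivity : 0 < lam0 / ν ^ 4) hΨ1
  have hmu2 : ∑ τ, pottsMeasure q n β τ * chi S τ ≤ ∑ τ, pottsMeasure q n β τ * Ψ τ := by
    apply Finset.sum_le_sum
    intro σ _
    apply mul_le_mul_of_nonneg_left _ (mu_pos β σ).le
    by_cases h : σ ∈ S
    · refine (chi_mem S σ).2.trans (hΨ2 σ ?_)
      have hFs : 0 < F σ := h
      rw [hF] at hFs
      unfold FF at hFs
      have hV0 : 0 ≤ A * ν * VV k σ := mul_nonneg (by positivity) (VV_nonneg k σ)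
      have hu : -1 < κ * ν * (frac σ k - a) := by
        by_contra hcon
        push Not at hcon
        have := Real.arctan_mono hcon
        rw [Real.arctan_neg, Real.arctan_one] at this
        linarith
      have h1 : -(1 / (κ * ν)) < frac σ k - a := by
        rw [neg_lt_iff_pos_add, ← sub_neg_eq_add, sub_pos, ← mul_lt_mul_iff_right₀ (by positivity : 0 < κ * ν)]
        have : κ * ν * (-(1 / (κ * ν))) = -1 := by field_simp
        linarith
      have : a = 1 / q + 2 * ρ := by rw [hρ]; ring
      linarith
    · have : chi S σ = 0 := by unfold chi; exact if_neg h
      rw [this]; exact (hΨ0 σ).1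
  have hmu3 : C0 / ν ^ 6 / (lam0 / ν ^ 4) ≤ C0 / lam0 / ν := by
    have : C0 / ν ^ 6 / (lam0 / ν ^ 4) = C0 / lam0 / ν ^ 2 := by field_simp
    rw [this]
    apply div_le_div_of_nonneg_left (by positivity) hνp
    exact le_self_pow₀ hνone (by norm_num)
  have hfin := le_glauberDist β t S (fun _ => k)
  rw [← hX] at hfin
  have hexp := exp_le_one_sub_pow hθ0 hθ1 t
  rw [← hp] at hexp
  have hexp2 : Real.exp (-(2 * lam * T)) ≤ Real.exp (-(2 * θ * t)) := by
    apply Real.exp_le_exp.mpr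
    have : θ * t ≤ lam * T := by
      calc θ * t ≤ θ * (T * ν ^ 4) := by gcongr
        _ = lam * T := by rw [hθ]; field_simp
    linarith
  have hKe : e1 + T * C7 / ν + C0 / lam0 / ν ≤ η := by
    have : e1 + T * C7 / ν + C0 / lam0 / ν = K / ν := by rw [he1, hK]; field_simp
    rw [this, div_le_iff₀ hνp]; linarith
  linarith


set_option maxHeartbeats 2000000 in
theorem critical_window_mixing (q : ℕ) (hq : 3 ≤ q) (ξ : ℕ → ℝ)
    (hξnonneg : ∀ n, 0 ≤ ξ n)
    (hξbdd : ∃ M : ℝ, ∀ᶠ n : ℕ in atTop, (n : ℝ) ^ ((2 : ℝ) / 3) * ξ n ≤ M) :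
    (∀ ε ∈ Set.Ioo (0 : ℝ) 1, ∃ c C : ℝ, 0 < c ∧ 0 < C ∧
        ∀ᶠ n : ℕ in atTop,
          c * (n : ℝ) ^ ((4 : ℝ) / 3) ≤ (mixingTime q n (betaS q - ξ n) ε : ℝ) ∧
          (mixingTime q n (betaS q - ξ n) ε : ℝ) ≤ C * (n : ℝ) ^ ((4 : ℝ) / 3)) ∧
      ∃ δ ε : ℝ, 0 < δ ∧ δ < ε ∧ ε < 1 ∧
        1 < limsup (fun n : ℕ =>
              (mixingTime q n (betaS q - ξ n) δ : ℝ) /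
                (mixingTime q n (betaS q - ξ n) ε : ℝ)) atTop := by
  obtain ⟨M0, hM0⟩ := hξbdd
  set M := max M0 0 with hMd
  have hM : 0 ≤ M := le_max_right _ _
  set ν : ℕ → ℝ := fun n => (n:ℝ) ^ ((1:ℝ) / 3) with hνd
  have hν3 : ∀ n, ν n ^ 3 = n := by
    intro n
    rw [hνd]
    show ((n:ℝ) ^ ((1:ℝ) / 3)) ^ 3 = n
    rw [← Real.rpow_natCast, ← Real.rpow_mul (Nat.cast_nonneg n)]
    norm_num
  have hν4 : ∀ n : ℕ, (n:ℝ) ^ ((4:ℝ) / 3) = ν n ^ 4 := by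
    intro n
    rw [hνd]
    show _ = ((n:ℝ) ^ ((1:ℝ) / 3)) ^ 4
    rw [← Real.rpow_natCast, ← Real.rpow_mul (Nat.cast_nonneg n)]
    norm_num
  have hν2 : ∀ n : ℕ, (n:ℝ) ^ ((2:ℝ) / 3) = ν n ^ 2 := by
    intro n
    rw [hνd]
    show _ = ((n:ℝ) ^ ((1:ℝ) / 3)) ^ 2
    rw [← Real.rpow_natCast, ← Real.rpow_mul (Nat.cast_nonneg n)]
    norm_num
  have hνtop : Tendsto ν atTop atTop :=
    (tendsto_rpow_atTop (by norm_num : (0:ℝ) < 1 / 3)).comp tendsto_natCast_atTop_atTop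
  have hνge : ∀ c : ℝ, ∀ᶠ n in atTop, c ≤ ν n := fun c => hνtop.eventually_ge_atTop c
  have hβpos := betaS_pos hq
  have hgood : ∀ᶠ n : ℕ in atTop, 1 ≤ ν n ∧ 0 ≤ betaS q - ξ n ∧ betaS q - ξ n ≤ betaS q ∧ betaS q - (betaS q - ξ n) ≤ M / ν n ^ 2 := by
    filter_upwards [hM0, hνge 1, hνge (M / betaS q)] with n h1 h2 h3
    have hp : 0 < ν n := by linarith
    have h4 : ξ n ≤ M / ν n ^ 2 := by
      rw [le_div_iff₀ (by positivity), mul_comm, ← hν2]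
      exact h1.trans (le_max_left _ _)
    have h5 : M / ν n ^ 2 ≤ betaS q := by
      rw [div_le_iff₀ hβpos] at h3
      rw [div_le_iff₀ (by positivity)]
      have : ν n ≤ ν n ^ 2 := le_self_pow₀ h2 (by norm_num)
      nlinarith
    exact ⟨h2, by linarith, by linarith [hξnonneg n], by linarith⟩
  obtain ⟨L, hL, hlow⟩ := lower hq hM
  -- upper bound on mixing time
  have hup : ∀ ε : ℝ, 0 < ε → ∃ C : ℝ, 0 < C ∧ ∀ᶠ n : ℕ in atTop,
      (mixingTime q n (betaS q - ξ n) ε : ℝ) ≤ C * ν n ^ 4 ∧ glauberDist q n (betaS q - ξ n) (mixingTime q n (betaS q - ξ n) ε) ≤ ε := by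
    intro ε hε
    obtain ⟨C, ν0, hC, hν0, h⟩ := upper hq hε
    refine ⟨C, hC, ?_⟩
    filter_upwards [hgood, hνge ν0] with n hg hn
    obtain ⟨t, ht, htd⟩ := h n (ν n) hn (hν3 n) (betaS q - ξ n) hg.2.1 hg.2.2.1
    constructor
    · have : mixingTime q n (betaS q - ξ n) ε ≤ t := Nat.sInf_le htd
      have h2 : (mixingTime q n (betaS q - ξ n) ε : ℝ) ≤ t := by exact_mod_cast this
      linarith
    · exact Nat.sInf_mem (s := {t : ℕ | glauberDist q n (betaS q - ξ n) t ≤ ε}) ⟨t, htd⟩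
  -- lower bound on mixing time
  have hlo : ∀ ε T : ℝ, 0 < ε → 0 < T → ε < Real.exp (-(L * T)) → ∀ᶠ n : ℕ in atTop,
      T * ν n ^ 4 ≤ (mixingTime q n (betaS q - ξ n) ε : ℝ) := by
    intro ε T hε hT hlt
    obtain ⟨C, hC, hu⟩ := hup ε hε
    obtain ⟨ν0, hν0, h⟩ := hlow T ((Real.exp (-(L * T)) - ε) / 2) hT (by linarith)
    filter_upwards [hgood, hνge ν0, hu] with n hg hn hun
    by_contra hcon
    push Not at hcon
    have := h n (ν n) hn (hν3 n) (betaS q - ξ n) hg.2.1 hg.2.2.1 hg.2.2.2 _ hcon.le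
    linarith [hun.2]
  have hpow : ∀ ε ∈ Set.Ioo (0 : ℝ) 1, ∃ c C : ℝ, 0 < c ∧ 0 < C ∧
        ∀ᶠ n : ℕ in atTop,
          c * (n : ℝ) ^ ((4 : ℝ) / 3) ≤ (mixingTime q n (betaS q - ξ n) ε : ℝ) ∧
          (mixingTime q n (betaS q - ξ n) ε : ℝ) ≤ C * (n : ℝ) ^ ((4 : ℝ) / 3) := by
    intro ε hε
    obtain ⟨C, hC, hu⟩ := hup ε hε.1
    have hlog : Real.log ε < 0 := Real.log_neg hε.1 hε.2
    have hT : 0 < -Real.log ε / (2 * L) := div_pos (by linarith) (by positivity)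
    have hl := hlo ε (-Real.log ε / (2 * L)) hε.1 hT (by
      have e : -(L * (-Real.log ε / (2 * L))) = Real.log ε / 2 := by field_simp
      rw [e]
      calc ε = Real.exp (Real.log ε) := (Real.exp_log hε.1).symm
        _ < _ := Real.exp_lt_exp.mpr (by linarith))
    refine ⟨_, C, hT, hC, ?_⟩
    filter_upwards [hu, hl] with n h1 h2
    rw [hν4]
    exact ⟨h2, h1.1⟩
  refine ⟨hpow, ?_⟩
  obtain ⟨c1, C1, hc1, hC1, h1⟩ := hpow (1 / 2) ⟨by norm_num, by norm_num⟩
  set δ := Real.exp (-(L * (2 * C1))) / 4 with hδ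
  have hep := Real.exp_pos (-(L * (2 * C1)))
  have hδ0 : 0 < δ := by positivity
  have he1 : Real.exp (-(L * (2 * C1))) ≤ 1 := Real.exp_le_one_iff.mpr (by
    have : 0 < L * (2 * C1) := by positivity
    linarith)
  have hδ1 : δ < 1 / 2 := by linarith
  have h2 := hlo δ (2 * C1) hδ0 (by positivity) (by linarith)
  obtain ⟨c2, C2, hc2, hC2, h3⟩ := hpow δ ⟨hδ0, by linarith⟩
  refine ⟨δ, 1 / 2, hδ0, hδ1, by norm_num, ?_⟩
  have hge : ∀ᶠ n : ℕ in atTop, 2 ≤ (mixingTime q n (betaS q - ξ n) δ : ℝ) / (mixingTime q n (betaS q - ξ n) (1 / 2) : ℝ)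
      ∧ (mixingTime q n (betaS q - ξ n) δ : ℝ) / (mixingTime q n (betaS q - ξ n) (1 / 2) : ℝ) ≤ C2 / c1 := by
    filter_upwards [h1, h2, h3, hνge 1] with n g1 g2 g3 g4
    rw [hν4] at g1 g3
    have hp : 0 < ν n ^ 4 := by positivity
    have hpos : 0 < (mixingTime q n (betaS q - ξ n) (1 / 2) : ℝ) := lt_of_lt_of_le (by positivity) g1.1
    constructor
    · rw [le_div_iff₀ hpos]; linarith [g1.2]
    · rw [div_le_div_iff₀ hpos hc1]
      calc _ ≤ (C2 * ν n ^ 4) * c1 := by gcongr; exact g3.2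
        _ = C2 * (c1 * ν n ^ 4) := by ring
        _ ≤ _ := by gcongr; exact g1.1
  have hlim : 2 ≤ limsup (fun n : ℕ =>
              (mixingTime q n (betaS q - ξ n) δ : ℝ) /
                (mixingTime q n (betaS q - ξ n) (1 / 2) : ℝ)) atTop := by
    apply le_limsup_of_frequently_le
    · exact (hge.mono (fun n h => h.1)).frequently
    · exact ⟨C2 / c1, Filter.eventually_map.mpr (hge.mono (fun n h => h.2))⟩
  linarith
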